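/- Let ρ be a quasi-periodic labelling and let G_ρ be the associated group. Then G_ρ has vanishing second bounded cohomology with trivial integral coefficients: every bounded 2-cocycle ω : G_ρ × G_ρ → ℤ is the coboundary of a bounded function φ : G_ρ → ℤ. -/

import Mathlib

/-! ### Letters, labellings and quasi-periodicity -/

/-- The four letters `a, b, a⁻¹, b⁻¹`. -/
inductive Letter : Type
  | a : Letter
  | b : Letter
  | A : Letter  -- `a⁻¹`
  | B : Letter  -- `b⁻¹`
  deriving DecidableEq

/-- The formal inverse of a letter. -/
def Letter.inv : Letter → Letter
  | .a => .A
  | .A => .a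
  | .b => .B
  | .B => .b

/-- We encode the set of half-integers `½ℤ` by `ℤ` via `m ↦ m / 2`; integer points
correspond to even indices and proper half-integer points to odd indices.
A labelling assigns `a^{±1}` to integer points and `b^{±1}` to half-integer points. -/
def IsLabelling (ρ : ℤ → Letter) : Prop :=
  ∀ m : ℤ, (Even m → ρ m = Letter.a ∨ ρ m = Letter.A) ∧
    (Odd m → ρ m = Letter.b ∨ ρ m = Letter.B)

/-- The word of the labelling `ρ` along the block `{k, k+1, …, k+n}` (in the
half-integer encoding, the block of size `n+1` starting at `k/2`). -/
def blockWord (ρ : ℤ → Letter) (k : ℤ) (n : ℕ) : List Letter :=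
  (List.range (n + 1)).map fun i => ρ (k + i)

/-- The formal inverse of a word: reverse the word and invert each letter. -/
def wordInv (w : List Letter) : List Letter :=
  (w.map Letter.inv).reverse

/-- A labelling is quasi-periodic if (1) every subword of the labelling appears as a
subword (string of consecutive letters) of every sufficiently large block, and (2) the
formal inverse of every subword of the labelling is again a subword of the labelling. -/
def IsQuasiPeriodic (ρ : ℤ → Letter) : Prop :=
  IsLabelling ρ ∧
    (∀ (k : ℤ) (n : ℕ), ∃ N : ℕ, ∀ (k' : ℤ) (n' : ℕ), N ≤ n' + 1 →
      (blockWord ρ k n) <:+: (blockWord ρ k' n')) ∧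
    (∀ (k : ℤ) (n : ℕ), ∃ k' : ℤ, blockWord ρ k' n = wordInv (blockWord ρ k n))

/-! ### Thompson's group `F` and the subgroup `H`

Orientation-preserving homeomorphisms of `[0,1]` are realised as order-automorphisms
of `ℝ` that are the identity outside `[0,1]`; orientation-preserving homeomorphisms of
the line are order-automorphisms of `ℝ`. -/

/-- A dyadic rational real number, i.e. an element of `ℤ[1/2]`. -/
def IsDyadic (x : ℝ) : Prop :=
  ∃ (a : ℤ) (b : ℕ), x = (a : ℝ) / 2 ^ b

/-- Membership in Thompson's group `F`: the identity outside `[0,1]`, and on `[0,1]`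
piecewise linear with breakpoints in `ℤ[1/2]` and slopes integer powers of `2`. -/
def InThompsonF (f : ℝ ≃o ℝ) : Prop :=
  (∀ x : ℝ, x ∉ Set.Icc (0 : ℝ) 1 → f x = x) ∧
    ∃ (m : ℕ) (x : Fin (m + 1) → ℝ), x 0 = 0 ∧ x (Fin.last m) = 1 ∧ StrictMono x ∧
      (∀ i, IsDyadic (x i)) ∧
      ∀ i : Fin m, ∃ (k : ℤ) (c : ℝ),
        ∀ t ∈ Set.Icc (x i.castSucc) (x i.succ), f t = 2 ^ k * t + c

/-- Membership in the subgroup `H ≤ F` of elements whose slopes at `0` and `1`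
coincide. -/
def InH (f : ℝ ≃o ℝ) : Prop :=
  InThompsonF f ∧
    ∃ (k : ℤ) (ε : ℝ), 0 < ε ∧ (∀ t ∈ Set.Icc (0 : ℝ) ε, f t = 2 ^ k * t) ∧
      ∀ t ∈ Set.Icc (1 - ε) (1 : ℝ), f t = 1 + 2 ^ k * (t - 1)

/-! ### The generators of `G_ρ` -/

/-- `ζ` is the homeomorphism of `ℝ` which on each `[n, n+1]` is the conjugate of `ν`
(a homeomorphism of `[0,1]`) by the orientation-preserving isometry `[n,n+1] → [0,1]`
if `ρ(n + ½) = b`, and by the orientation-reversing isometry if `ρ(n + ½) = b⁻¹`.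
(In the encoding of `½ℤ` by `ℤ`, the point `n + ½` has index `2n + 1`.) -/
def IsZeta (ρ : ℤ → Letter) (ν ζ : ℝ ≃o ℝ) : Prop :=
  ∀ n : ℤ, ∀ x ∈ Set.Icc (n : ℝ) (n + 1),
    (ρ (2 * n + 1) = Letter.b → ζ x = n + ν (x - n)) ∧
    (ρ (2 * n + 1) = Letter.B → ζ x = (n + 1) - ν ((n + 1) - x))

/-- `χ` is the homeomorphism of `ℝ` which on each `[n-½, n+½]` is the conjugate of `ν`
by the orientation-preserving isometry `[n-½, n+½] → [0,1]` if `ρ(n) = a`, and by the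
orientation-reversing isometry if `ρ(n) = a⁻¹`. -/
def IsChi (ρ : ℤ → Letter) (ν χ : ℝ ≃o ℝ) : Prop :=
  ∀ n : ℤ, ∀ x ∈ Set.Icc ((n : ℝ) - 1/2) ((n : ℝ) + 1/2),
    (ρ (2 * n) = Letter.a → χ x = ((n : ℝ) - 1/2) + ν (x - ((n : ℝ) - 1/2))) ∧
    (ρ (2 * n) = Letter.A → χ x = ((n : ℝ) + 1/2) - ν (((n : ℝ) + 1/2) - x))

/-! ### Bounded cohomology in degree two -/

/-- A bounded 2-cocycle on `G` with trivial real coefficients. -/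
def IsBounded2Cocycle {G : Type*} [Group G] (ω : G → G → ℝ) : Prop :=
  (∃ C : ℝ, ∀ g h : G, |ω g h| ≤ C) ∧
    ∀ g₁ g₂ g₃ : G, ω g₂ g₃ - ω (g₁ * g₂) g₃ + ω g₁ (g₂ * g₃) - ω g₁ g₂ = 0

/-- `ω` is the coboundary of a bounded real-valued function. -/
def IsCoboundaryOfBounded {G : Type*} [Group G] (ω : G → G → ℝ) : Prop :=
  ∃ φ : G → ℝ, (∃ C : ℝ, ∀ g : G, |φ g| ≤ C) ∧
    ∀ g h : G, ω g h = φ h - φ (g * h) + φ g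

/-- A group is 2-boundedly acyclic if `H²_b(G; ℝ) = 0`, i.e. every bounded 2-cocycle is
the coboundary of a bounded function. -/
def Is2BoundedlyAcyclic (G : Type*) [Group G] : Prop :=
  ∀ ω : G → G → ℝ, IsBounded2Cocycle ω → IsCoboundaryOfBounded ω

/-- A 2-cocycle is homogeneous if it vanishes on powers of a single element. -/
def IsHomogeneous {G : Type*} [Group G] (ω : G → G → ℝ) : Prop :=
  ∀ (g : G) (i j : ℤ), ω (g ^ i) (g ^ j) = 0

/-- A bounded 2-cocycle on `G` with trivial integral coefficients. -/
def IsBounded2CocycleInt {G : Type*} [Group G] (ω : G → G → ℤ) : Prop :=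
  (∃ C : ℤ, ∀ g h : G, |ω g h| ≤ C) ∧
    ∀ g₁ g₂ g₃ : G, ω g₂ g₃ - ω (g₁ * g₂) g₃ + ω g₁ (g₂ * g₃) - ω g₁ g₂ = 0

/-- `ω` is the coboundary of a bounded integer-valued function. -/
def IsCoboundaryOfBoundedInt {G : Type*} [Group G] (ω : G → G → ℤ) : Prop :=
  ∃ φ : G → ℤ, (∃ C : ℤ, ∀ g : G, |φ g| ≤ C) ∧
    ∀ g h : G, ω g h = φ h - φ (g * h) + φ g


/-! ### Homogeneous quasimorphisms on central extensions -/

structure HQ {E G : Type} [Group E] [Group G] (π : E →* G) (τ : E → ℝ) : Prop where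
  bdd : ∃ D : ℝ, ∀ e f, |τ (e * f) - τ e - τ f| ≤ D
  pow : ∀ e (n : ℕ), τ (e ^ n) = n * τ e
  cent : ∀ z, π z = 1 → ∀ e, z * e = e * z
  add_ker : ∀ z, π z = 1 → ∀ e, τ (e * z) = τ e + τ z
  ker0 : ∀ z, π z = 1 → τ z = 0 → z = 1
  surj : Function.Surjective π

def AddP {E G : Type} [Group E] [Group G] (π : E →* G) (τ : E → ℝ) (g h : G) : Prop :=
  ∀ e f, π e = g → π f = h → τ (e * f) = τ e + τ f

theorem eq_zero_of_mul_bdd {x C : ℝ} (h : ∀ n : ℕ, n * |x| ≤ C) : x = 0 := by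
  by_contra hx
  have hx' : 0 < |x| := abs_pos.mpr hx
  obtain ⟨n, hn⟩ := exists_nat_gt (C / |x|)
  rw [div_lt_iff₀ hx'] at hn
  linarith [h n]

namespace HQ
variable {E G : Type} [Group E] [Group G] {π : E →* G} {τ : E → ℝ}

theorem one (h : HQ π τ) : τ 1 = 0 := by simpa using h.pow 1 0

theorem conj (h : HQ π τ) (f e : E) : τ (f * e * f⁻¹) = τ e := by
  obtain ⟨D, hD⟩ := h.bdd
  have : τ (f * e * f⁻¹) - τ e = 0 := by
    apply eq_zero_of_mul_bdd (C := 2 * D + |τ f + τ f⁻¹|)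
    intro n
    have e1 : (n : ℝ) * |τ (f * e * f⁻¹) - τ e| = |n * τ (f * e * f⁻¹) - n * τ e| := by
      rw [← mul_sub, abs_mul, Nat.abs_cast]
    rw [e1, ← h.pow, ← h.pow, conj_pow]
    have a := abs_le.mp (hD (f * e ^ n) f⁻¹)
    have b := abs_le.mp (hD f (e ^ n))
    have c1 := le_abs_self (τ f + τ f⁻¹)
    have c2 := neg_abs_le (τ f + τ f⁻¹)
    rw [abs_le]; constructor <;> linarith
  linarith

theorem comm (h : HQ π τ) {e f : E} (hc : Commute (π e) (π f)) : Commute e f := by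
  have hz : π (e * f * e⁻¹ * f⁻¹) = 1 := by
    simp only [map_mul, map_inv]; rw [hc.eq]; group
  have h1 : e * f * e⁻¹ * f⁻¹ = 1 := by
    apply h.ker0 _ hz
    have h2 := h.add_ker _ hz f
    rw [← h.cent _ hz] at h2
    have h3 : e * f * e⁻¹ * f⁻¹ * f = e * f * e⁻¹ := by group
    rw [h3, h.conj] at h2
    linarith
  have : e * f = 1 * (f * e) := by rw [← h1]; group
  simpa [Commute, SemiconjBy] using this

theorem add_of_commute (h : HQ π τ) {e f : E} (hc : Commute e f) : τ (e * f) = τ e + τ f := by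
  obtain ⟨D, hD⟩ := h.bdd
  have : τ (e * f) - τ e - τ f = 0 := by
    apply eq_zero_of_mul_bdd (C := D)
    intro n
    have e1 : (n : ℝ) * |τ (e * f) - τ e - τ f| = |n * τ (e * f) - n * τ e - n * τ f| := by
      rw [← mul_sub, ← mul_sub, abs_mul, Nat.abs_cast]
    rw [e1, ← h.pow, ← h.pow, ← h.pow, hc.mul_pow]
    exact hD _ _
  linarith

theorem add_of_double (h : HQ π τ) (N : Set G) (hmul : ∀ a ∈ N, ∀ b ∈ N, a * b ∈ N)
    (hN : ∀ a ∈ N, ∀ b ∈ N, ∃ t : G, t * a * t⁻¹ ∈ N ∧ t * b * t⁻¹ ∈ N ∧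
      Commute a (t * a * t⁻¹) ∧ Commute a (t * b * t⁻¹) ∧ Commute b (t * a * t⁻¹) ∧
      Commute b (t * b * t⁻¹)) {e f : E} (he : π e ∈ N) (hf : π f ∈ N) :
    τ (e * f) = τ e + τ f := by
  obtain ⟨D, hD⟩ := h.bdd
  have key : ∀ k : ℕ, ∀ e f : E, π e ∈ N → π f ∈ N →
      2 ^ k * |τ (e * f) - τ e - τ f| ≤ D := by
    intro k
    induction k with
    | zero => intro e f _ _; simpa using hD e f
    | succ k ih =>
      intro e f he hf
      obtain ⟨t, h1, h2, h3, h4, h5, h6⟩ := hN _ he _ hf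
      obtain ⟨s, rfl⟩ := h.surj t
      have c1 : Commute e (s * e * s⁻¹) := h.comm (by simpa using h3)
      have c2 : Commute e (s * f * s⁻¹) := h.comm (by simpa using h4)
      have c3 : Commute f (s * e * s⁻¹) := h.comm (by simpa using h5)
      have c4 : Commute f (s * f * s⁻¹) := h.comm (by simpa using h6)
      have ce : τ (e * (s * e * s⁻¹)) = 2 * τ e := by
        rw [h.add_of_commute c1, h.conj]; ring
      have cf : τ (f * (s * f * s⁻¹)) = 2 * τ f := by
        rw [h.add_of_commute c4, h.conj]; ring
      have cef : τ (e * (s * e * s⁻¹) * (f * (s * f * s⁻¹))) = 2 * τ (e * f) := by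
        have : e * (s * e * s⁻¹) * (f * (s * f * s⁻¹)) = (e * f) * (s * (e * f) * s⁻¹) := by
          calc _ = e * ((s * e * s⁻¹) * f) * (s * f * s⁻¹) := by group
            _ = e * (f * (s * e * s⁻¹)) * (s * f * s⁻¹) := by rw [c3.eq]
            _ = _ := by group
        rw [this, h.add_of_commute, h.conj]
        · ring
        · have : s * (e * f) * s⁻¹ = (s * e * s⁻¹) * (s * f * s⁻¹) := by group
          rw [this]
          exact (c1.mul_right c2).mul_left (c3.mul_right c4)
      have := ih (e * (s * e * s⁻¹)) (f * (s * f * s⁻¹))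
        (by rw [map_mul]; exact hmul _ he _ (by simpa using h1))
        (by rw [map_mul]; exact hmul _ hf _ (by simpa using h2))
      rw [cef, ce, cf] at this
      have e2 : 2 * τ (e * f) - 2 * τ e - 2 * τ f = 2 * (τ (e * f) - τ e - τ f) := by ring
      rw [e2, abs_mul, abs_two] at this
      rw [pow_succ]; linarith
  have : τ (e * f) - τ e - τ f = 0 := by
    apply eq_zero_of_mul_bdd (C := D)
    intro n
    refine le_trans ?_ (key n e f he hf)
    gcongr
    exact_mod_cast n.lt_two_pow_self.le
  linarith

theorem add_nk (h : HQ π τ) (N : Set G) (hmul : ∀ a ∈ N, ∀ b ∈ N, a * b ∈ N) (h1 : (1 : G) ∈ N)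
    (hadd : ∀ e f, π e ∈ N → π f ∈ N → τ (e * f) = τ e + τ f)
    (k : G) (hk : ∀ a ∈ N, k⁻¹ * a * k ∈ N) (n : G) (hn : n ∈ N) : AddP π τ n k ∧ AddP π τ k n := by
  have main : AddP π τ k n := by
    intro f e hf he
    obtain ⟨D, hD⟩ := h.bdd
    have key : ∀ m : ℕ, ∃ w, (f * e) ^ m = f ^ m * w ∧ π w ∈ N ∧ τ w = m * τ e := by
      intro m
      induction m with
      | zero => exact ⟨1, by simp, by simpa using h1, by simpa using h.one⟩
      | succ m ih =>
        obtain ⟨w, hw, hwN, hwt⟩ := ih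
        have m1 : π (f⁻¹ * w * f) ∈ N := by
          simp only [map_mul, map_inv, hf]; exact hk _ hwN
        refine ⟨f⁻¹ * w * f * e, ?_, ?_, ?_⟩
        · rw [pow_succ, hw, pow_succ]; group
        · rw [map_mul]; exact hmul _ m1 _ (he ▸ hn)
        · rw [hadd _ _ m1 (he ▸ hn)]
          have := h.conj f⁻¹ w
          rw [inv_inv] at this
          rw [this, hwt]; push_cast; ring
    have : τ (f * e) - τ f - τ e = 0 := by
      apply eq_zero_of_mul_bdd (C := D)
      intro m
      obtain ⟨w, hw, -, hwt⟩ := key m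
      have e1 : (m : ℝ) * |τ (f * e) - τ f - τ e| = |m * τ (f * e) - m * τ f - m * τ e| := by
        rw [← mul_sub, ← mul_sub, abs_mul, Nat.abs_cast]
      rw [e1, ← h.pow, ← h.pow, ← hwt, hw]
      exact hD _ _
    linarith
  refine ⟨?_, main⟩
  intro e f he hf
  have := main f e hf he
  have h2 := h.conj e (f * e)
  have h3 : e * (f * e) * e⁻¹ = e * f := by group
  rw [h3] at h2
  linarith

theorem inv (h : HQ π τ) (e : E) : τ e⁻¹ = - τ e := by
  have := h.add_of_commute (Commute.inv_right (Commute.refl e))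
  rw [mul_inv_cancel, h.one] at this; linarith

/-- elements additive against everything -/
def addSub (h : HQ π τ) : Subgroup G where
  carrier := {g | ∀ k, AddP π τ g k}
  mul_mem' := by
    intro a b ha hb k e f he hf
    obtain ⟨e1, he1⟩ := h.surj a
    have e2 : π (e1⁻¹ * e) = b := by simp [he, he1]
    have h1 := ha _ e1 (e1⁻¹ * e * f) he1 rfl
    have h2 := hb _ (e1⁻¹ * e) f e2 hf
    have h3 := ha _ e1 (e1⁻¹ * e) he1 rfl
    have h4 : e1 * (e1⁻¹ * e * f) = e * f := by group
    have h5 : e1 * (e1⁻¹ * e) = e := by group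
    rw [h4] at h1; rw [h5] at h3; linarith
  one_mem' := by
    intro k e f he hf
    rw [h.cent e he, h.add_ker e he]; ring
  inv_mem' := by
    intro a ha k e f he hf
    have h1 := ha _ e⁻¹ (e * f) (by simp [he]) rfl
    have h4 : e⁻¹ * (e * f) = f := by group
    rw [h4, h.inv] at h1; linarith

theorem mem_addSub (h : HQ π τ) (g : G) : g ∈ h.addSub ↔ ∀ k, AddP π τ g k := Iff.rfl

/-- splitting lemma for (M1) -/
theorem add_split (h : HQ π τ) (g1 g2 k : G) (h12 : AddP π τ g1 g2) (h1 : AddP π τ g1 (g2 * k))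
    (h2 : AddP π τ g2 k) : AddP π τ (g1 * g2) k := by
  intro e f he hf
  obtain ⟨e1, he1⟩ := h.surj g1
  have e2 : π (e1⁻¹ * e) = g2 := by simp [he, he1]
  have a1 := h1 e1 (e1⁻¹ * e * f) he1 (by rw [map_mul, e2, hf])
  have a2 := h2 (e1⁻¹ * e) f e2 hf
  have a3 := h12 e1 (e1⁻¹ * e) he1 e2
  have h4 : e1 * (e1⁻¹ * e * f) = e * f := by group
  have h5 : e1 * (e1⁻¹ * e) = e := by group
  rw [h4] at a1; rw [h5] at a3; linarith

end HQ

def IsCoc {G : Type} [Group G] (ω : G → G → ℝ) : Prop :=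
  ∀ g₁ g₂ g₃ : G, ω g₂ g₃ - ω (g₁ * g₂) g₃ + ω g₁ (g₂ * g₃) - ω g₁ g₂ = 0

@[ext] structure TwE {G : Type} [Group G] (ω : G → G → ℝ) (hω : IsCoc ω) where
  g : G
  s : ℝ

namespace TwE
variable {G : Type} [Group G] {ω : G → G → ℝ} {hω : IsCoc ω}

instance : Mul (TwE ω hω) := ⟨fun x y => ⟨x.g * y.g, x.s + y.s + ω x.g y.g⟩⟩
instance : One (TwE ω hω) := ⟨⟨1, - ω 1 1⟩⟩
instance : Inv (TwE ω hω) := ⟨fun x => ⟨x.g⁻¹, - x.s - ω 1 1 - ω x.g⁻¹ x.g⟩⟩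

@[simp] theorem mul_g (x y : TwE ω hω) : (x * y).g = x.g * y.g := rfl
@[simp] theorem mul_s (x y : TwE ω hω) : (x * y).s = x.s + y.s + ω x.g y.g := rfl
@[simp] theorem one_g : (1 : TwE ω hω).g = 1 := rfl
@[simp] theorem one_s : (1 : TwE ω hω).s = - ω 1 1 := rfl
@[simp] theorem inv_g (x : TwE ω hω) : (x⁻¹).g = x.g⁻¹ := rfl
@[simp] theorem inv_s (x : TwE ω hω) : (x⁻¹).s = - x.s - ω 1 1 - ω x.g⁻¹ x.g := rfl

theorem coc_one_left (hω : IsCoc ω) (g : G) : ω 1 g = ω 1 1 := by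
  have := hω 1 1 g; simp at this; linarith
theorem coc_one_right (hω : IsCoc ω) (g : G) : ω g 1 = ω 1 1 := by
  have := hω g 1 1; simp at this; linarith

instance : Group (TwE ω hω) := Group.ofLeftAxioms
  (by
    intro x y z
    ext
    · simp [mul_assoc]
    · have := hω x.g y.g z.g
      simp; linarith)
  (by
    intro x
    ext
    · simp
    · simp [coc_one_left hω x.g])
  (by
    intro x
    ext
    · simp
    · simp; ring)

def pr : TwE ω hω →* G where
  toFun x := x.g
  map_one' := rfl
  map_mul' _ _ := rfl

@[simp] theorem pr_apply (x : TwE ω hω) : pr x = x.g := rfl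

theorem cent (z : TwE ω hω) (hz : z.g = 1) (e : TwE ω hω) : z * e = e * z := by
  ext
  · simp [hz]
  · simp [hz, coc_one_left hω e.g, coc_one_right hω e.g]; ring

theorem s_mul_ker (z : TwE ω hω) (hz : z.g = 1) (e : TwE ω hω) :
    (e * z).s = e.s + (z.s + ω 1 1) := by
  simp [hz, coc_one_right hω e.g]; ring

theorem pow_ker (z : TwE ω hω) (hz : z.g = 1) (n : ℕ) :
    (z ^ n).g = 1 ∧ (z ^ n).s + ω 1 1 = n * (z.s + ω 1 1) := by
  induction n with
  | zero => simp
  | succ n ih =>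
    rw [pow_succ]
    refine ⟨by simp [ih.1, hz], ?_⟩
    rw [s_mul_ker z hz]; push_cast; linarith [ih.2]

theorem exists_hom {C : ℝ} (hC : ∀ g h, |ω g h| ≤ C) :
    ∃ τ : TwE ω hω → ℝ, (∀ e, Filter.Tendsto (fun n : ℕ => (e ^ n).s / (n : ℝ)) Filter.atTop (nhds (τ e)))
      ∧ ∀ e, |τ e - e.s| ≤ C := by
  have lin : ∀ (e : TwE ω hω) (n : ℕ), 1 ≤ n → |(e ^ n).s - n * e.s| ≤ n * C := by
    intro e n hn
    induction n, hn using Nat.le_induction with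
    | base => simpa using (abs_nonneg _).trans (hC 1 1)
    | succ n hn ih =>
      rw [pow_succ]
      simp only [mul_s]
      have := abs_le.mp (hC (e ^ n).g e.g)
      have h2 := abs_le.mp ih
      push_cast
      rw [abs_le]; constructor <;> linarith
  have : ∀ e : TwE ω hω, ∃ t : ℝ, Filter.Tendsto (fun n : ℕ => (e ^ n).s / (n : ℝ)) Filter.atTop (nhds t) := by
    intro e
    have hs : Subadditive (fun n => (e ^ n).s + C) := by
      intro m n
      simp only [pow_add, mul_s]
      have := abs_le.mp (hC (e ^ m).g (e ^ n).g)
      linarith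
    have hb : BddBelow (Set.range fun n : ℕ => ((e ^ n).s + C) / n) := by
      refine ⟨min 0 (e.s - C), ?_⟩
      rintro _ ⟨n, rfl⟩
      simp only
      rcases Nat.eq_zero_or_pos n with rfl | hn
      · simp
      · apply min_le_of_right_le
        have hn' : (0 : ℝ) < n := by exact_mod_cast hn
        rw [le_div_iff₀ hn']
        have h2 := abs_le.mp (lin e n hn)
        have h3 := (abs_nonneg _).trans (hC 1 1)
        linarith
    refine ⟨hs.lim, ?_⟩
    have h1 := hs.tendsto_lim hb
    have h2 : Filter.Tendsto (fun n : ℕ => C / (n : ℝ)) Filter.atTop (nhds 0) :=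
      tendsto_const_div_atTop_nhds_zero_nat C
    have h3 := h1.sub h2
    rw [sub_zero] at h3
    refine h3.congr ?_
    intro n
    rw [← sub_div]; ring
  choose τ hτ using this
  refine ⟨τ, hτ, fun e => ?_⟩
  have h1 : Filter.Tendsto (fun n : ℕ => |(e ^ n).s / n - e.s|) Filter.atTop (nhds |τ e - e.s|) :=
    ((hτ e).sub_const _).abs
  refine le_of_tendsto h1 ?_
  filter_upwards [Filter.eventually_ge_atTop 1] with n hn
  have hn' : (0 : ℝ) < n := by exact_mod_cast hn
  have : (e ^ n).s / n - e.s = ((e ^ n).s - n * e.s) / n := by field_simp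
  rw [this, abs_div, Nat.abs_cast, div_le_iff₀ hn']
  linarith [lin e n hn]

theorem exists_HQ {C : ℝ} (hC : ∀ g h, |ω g h| ≤ C) :
    ∃ τ : TwE ω hω → ℝ, HQ pr τ ∧ (∀ e, |τ e - e.s| ≤ C) ∧
      ∀ z, z.g = 1 → τ z = z.s + ω 1 1 := by
  obtain ⟨τ, hτ, hb⟩ := exists_hom (hω := hω) hC
  have hker : ∀ z, z.g = 1 → ∀ e, τ (e * z) = τ e + (z.s + ω 1 1) := by
    intro z hz e
    refine tendsto_nhds_unique (hτ (e * z)) ?_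
    have h1 := (hτ e).add_const (z.s + ω 1 1)
    refine h1.congr' ?_
    filter_upwards [Filter.eventually_ge_atTop 1] with n hn
    have hn' : (0 : ℝ) < n := by exact_mod_cast hn
    have hc : Commute e z := (cent z hz e).symm
    rw [hc.mul_pow, s_mul_ker _ (pow_ker z hz n).1, (pow_ker z hz n).2]
    field_simp
  have hone : τ 1 = 0 := by
    refine tendsto_nhds_unique (hτ 1) ?_
    simp only [one_pow]
    exact tendsto_const_div_atTop_nhds_zero_nat _
  have hk2 : ∀ z, z.g = 1 → τ z = z.s + ω 1 1 := by
    intro z hz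
    have := hker z hz 1
    rw [one_mul, hone, zero_add] at this
    exact this
  refine ⟨τ, ⟨?_, ?_, ?_, ?_, ?_, ?_⟩, hb, hk2⟩
  · refine ⟨4 * C, fun e f => ?_⟩
    have h1 := abs_le.mp (hb e)
    have h2 := abs_le.mp (hb f)
    have h3 := abs_le.mp (hb (e * f))
    have h4 := abs_le.mp (hC e.g f.g)
    rw [mul_s] at h3
    rw [abs_le]; constructor <;> linarith
  · intro e n
    rcases Nat.eq_zero_or_pos n with rfl | hn
    · simpa using hone
    have hn' : (n : ℝ) ≠ 0 := by positivity
    refine tendsto_nhds_unique (hτ (e ^ n)) ?_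
    have h1 : Filter.Tendsto (fun m : ℕ => n * m) Filter.atTop Filter.atTop :=
      Filter.tendsto_id.const_mul_atTop' hn
    have h2 := ((hτ e).comp h1).const_mul (n : ℝ)
    refine h2.congr ?_
    intro m
    simp only [Function.comp_apply, pow_mul, Nat.cast_mul]
    field_simp
  · intro z hz e; exact cent z hz e
  · intro z hz e; rw [hker z hz, hk2 z hz]
  · intro z hz h0
    rw [hk2 z hz] at h0
    ext
    · exact hz
    · simp; linarith
  · intro g; exact ⟨⟨g, 0⟩, rfl⟩

end TwE

theorem exists_bounded_primitive {G : Type} [Group G] (ω : G → G → ℝ) (hω : IsCoc ω)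
    (hb : ∃ C : ℝ, ∀ g h, |ω g h| ≤ C)
    (hmain : ∀ (E : Type) [Group E] (π : E →* G) (τ : E → ℝ), HQ π τ → ∀ g h, AddP π τ g h) :
    ∃ φ : G → ℝ, (∃ C : ℝ, ∀ g, |φ g| ≤ C) ∧ ∀ g h, ω g h = φ h - φ (g * h) + φ g := by
  obtain ⟨C, hC⟩ := hb
  obtain ⟨τ, hτ, hb, hk⟩ := TwE.exists_HQ (hω := hω) hC
  refine ⟨fun g => τ ⟨g, 0⟩, ⟨C, fun g => ?_⟩, fun g h => ?_⟩
  · simpa using hb ⟨g, 0⟩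
  · have h1 := hmain _ _ τ hτ g h ⟨g, 0⟩ ⟨h, 0⟩ rfl rfl
    have h2 := hτ.add_ker ⟨1, ω g h - ω 1 1⟩ rfl ⟨g * h, 0⟩
    have h3 : (⟨g, 0⟩ : TwE ω hω) * ⟨h, 0⟩ = ⟨g * h, 0⟩ * ⟨1, ω g h - ω 1 1⟩ := by
      ext
      · simp
      · simp [TwE.coc_one_right hω (g * h)]
    rw [hk ⟨1, ω g h - ω 1 1⟩ rfl] at h2
    rw [h3] at h1
    simp only at h2 ⊢
    linarith


/-! ### Frames: the infinite dihedral group acting on the line -/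

@[ext] structure Dh where
  n : ℤ
  e : ℤˣ

namespace Dh

instance : Mul Dh := ⟨fun d f => ⟨d.n + d.e * f.n, d.e * f.e⟩⟩
instance : One Dh := ⟨⟨0, 1⟩⟩
instance : Inv Dh := ⟨fun d => ⟨-(d.e * d.n), d.e⟩⟩

@[simp] theorem mul_n (d f : Dh) : (d * f).n = d.n + d.e * f.n := rfl
@[simp] theorem mul_e (d f : Dh) : (d * f).e = d.e * f.e := rfl
@[simp] theorem one_n : (1 : Dh).n = 0 := rfl
@[simp] theorem one_e : (1 : Dh).e = 1 := rfl
@[simp] theorem inv_n (d : Dh) : (d⁻¹).n = -(d.e * d.n) := rfl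
@[simp] theorem inv_e (d : Dh) : (d⁻¹).e = d.e := rfl

instance : Group Dh := Group.ofLeftAxioms
  (by intro x y z; ext <;> simp [mul_assoc]; ring)
  (by intro x; ext <;> simp)
  (by intro x; ext <;> simp)

theorem ee (d : Dh) : (d.e : ℤ) * d.e = 1 := by
  rw [← Units.val_mul]; simp

/-- action on the line -/
def pt (d : Dh) (x : ℝ) : ℝ := d.n + (d.e : ℤ) * x
/-- action on indices of half integers -/
def ix (d : Dh) (m : ℤ) : ℤ := 2 * d.n + d.e * m

@[simp] theorem pt_one (x : ℝ) : pt 1 x = x := by simp [pt]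
@[simp] theorem ix_one (x : ℤ) : ix 1 x = x := by simp [ix]

theorem pt_mul (d f : Dh) (x : ℝ) : pt (d * f) x = pt d (pt f x) := by
  simp [pt]; ring
theorem ix_mul (d f : Dh) (x : ℤ) : ix (d * f) x = ix d (ix f x) := by
  simp [ix]; ring

@[simp] theorem pt_inv_pt (d : Dh) (x : ℝ) : pt d⁻¹ (pt d x) = x := by
  rw [← pt_mul]; simp
@[simp] theorem pt_pt_inv (d : Dh) (x : ℝ) : pt d (pt d⁻¹ x) = x := by
  rw [← pt_mul]; simp
@[simp] theorem ix_inv_ix (d : Dh) (x : ℤ) : ix d⁻¹ (ix d x) = x := by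
  rw [← ix_mul]; simp
@[simp] theorem ix_ix_inv (d : Dh) (x : ℤ) : ix d (ix d⁻¹ x) = x := by
  rw [← ix_mul]; simp

theorem pt_inj (d : Dh) {x y : ℝ} : pt d x = pt d y ↔ x = y :=
  ⟨fun h => by simpa using congrArg (pt d⁻¹) h, fun h => by rw [h]⟩

theorem cases (d : Dh) : (d.e = 1 ∧ (∀ x, pt d x = d.n + x) ∧ ∀ m, ix d m = 2 * d.n + m) ∨
    (d.e = -1 ∧ (∀ x, pt d x = d.n - x) ∧ ∀ m, ix d m = 2 * d.n - m) := by
  rcases Int.units_eq_one_or d.e with h | h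
  · left; refine ⟨h, fun x => by simp [pt, h], fun x => by simp [ix, h]⟩
  · right; refine ⟨h, fun x => by simp [pt, h]; ring, fun x => by simp [ix, h]; ring⟩

theorem pt_sub (d : Dh) (x y : ℝ) : |pt d x - pt d y| = |x - y| := by
  rcases d.cases with ⟨-, h, -⟩ | ⟨-, h, -⟩ <;> rw [h, h]
  · congr 1; ring
  · rw [abs_sub_comm]; congr 1; ring

theorem ix_sub (d : Dh) (x y : ℤ) : |ix d x - ix d y| = |x - y| := by
  rcases d.cases with ⟨-, -, h⟩ | ⟨-, -, h⟩ <;> rw [h, h]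
  · congr 1; ring
  · rw [abs_sub_comm]; congr 1; ring

theorem ix_pt (d : Dh) (m : ℤ) (x : ℝ) : |(ix d m : ℝ) - 2 * pt d x| = |(m : ℝ) - 2 * x| := by
  rcases d.cases with ⟨-, h, h'⟩ | ⟨-, h, h'⟩ <;> rw [h, h'] <;> push_cast
  · congr 1; ring
  · rw [abs_sub_comm]; congr 1; ring

theorem continuous_pt (d : Dh) : Continuous (pt d) := by unfold pt; fun_prop

/-- every real lies in a frame image of `[0,1/2]` -/
theorem exists_frame (x : ℝ) : ∃ d : Dh, ∃ y : ℝ, 0 ≤ y ∧ y ≤ 1 / 2 ∧ x = pt d y := by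
  have h1 := Int.floor_le x
  have h2 := Int.lt_floor_add_one x
  rcases le_total (x - ⌊x⌋) (1/2) with h | h
  · refine ⟨⟨⌊x⌋, 1⟩, x - ⌊x⌋, by linarith, h, by simp [pt]⟩
  · refine ⟨⟨⌊x⌋ + 1, -1⟩, ⌊x⌋ + 1 - x, by linarith, by linarith, by simp [pt]⟩

/-- open half cells are disjoint -/
theorem eq_of_half {d d' : Dh} {y y' : ℝ} (hy : 0 < y) (hy2 : y < 1 / 2) (hy' : 0 < y')
    (hy2' : y' < 1 / 2) (h : pt d y = pt d' y') : d = d' := by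
  rcases d.cases with ⟨e1, h1, -⟩ | ⟨e1, h1, -⟩ <;> rcases d'.cases with ⟨e2, h2, -⟩ | ⟨e2, h2, -⟩ <;>
    rw [h1, h2] at h
  · have a : (d.n : ℝ) < d'.n + 1 := by linarith
    have b : (d'.n : ℝ) < d.n + 1 := by linarith
    norm_cast at a b
    ext
    · omega
    · rw [e1, e2]
  · exfalso
    have a : (d.n : ℝ) < d'.n := by linarith
    have b : (d'.n : ℝ) < d.n + 1 := by linarith
    norm_cast at a b; omega
  · exfalso
    have a : (d'.n : ℝ) < d.n := by linarith
    have b : (d.n : ℝ) < d'.n + 1 := by linarith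
    norm_cast at a b; omega
  · have a : (d.n : ℝ) < d'.n + 1 := by linarith
    have b : (d'.n : ℝ) < d.n + 1 := by linarith
    norm_cast at a b
    ext
    · omega
    · rw [e1, e2]

theorem pt_lt (d : Dh) (u : ℝ ≃o ℝ) {x y : ℝ} :
    pt d⁻¹ (u (pt d x)) ≤ pt d⁻¹ (u (pt d y)) ↔ x ≤ y := by
  rcases d.cases with ⟨e1, h1, -⟩ | ⟨e1, h1, -⟩
  · rcases (d⁻¹).cases with ⟨e2, h2, -⟩ | ⟨e2, h2, -⟩
    · simp [h1, h2]
    · simp [e1] at e2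
  · rcases (d⁻¹).cases with ⟨e2, h2, -⟩ | ⟨e2, h2, -⟩
    · simp [e1] at e2
    · rw [h2, h2, h1, h1, sub_le_sub_iff_left, u.le_iff_le, sub_le_sub_iff_left]

/-- conjugation by a frame -/
def cj (d : Dh) (u : ℝ ≃o ℝ) : ℝ ≃o ℝ where
  toFun x := pt d⁻¹ (u (pt d x))
  invFun x := pt d⁻¹ (u.symm (pt d x))
  left_inv x := by simp
  right_inv x := by simp
  map_rel_iff' := pt_lt d u

theorem cj_apply (d : Dh) (u : ℝ ≃o ℝ) (x : ℝ) : cj d u x = pt d⁻¹ (u (pt d x)) := rfl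
theorem pt_cj (d : Dh) (u : ℝ ≃o ℝ) (x : ℝ) : pt d (cj d u x) = u (pt d x) := by
  simp [cj_apply]

/-- reflection with index centre `j` -/
def rf (j : ℤ) : Dh := ⟨j, -1⟩
@[simp] theorem rf_inv (j : ℤ) : (rf j)⁻¹ = rf j := by ext <;> simp [rf]
theorem rf_mul_rf (j : ℤ) : rf j * rf j = 1 := by ext <;> simp [rf]
theorem pt_rf (j : ℤ) (x : ℝ) : pt (rf j) x = j - x := by simp [pt, rf]; ring
theorem ix_rf (j m : ℤ) : ix (rf j) m = 2 * j - m := by simp [ix, rf]; ring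

/-- signed label at relative index `j` as seen from the frame `d` -/
def lab (r : ℤ → ℤˣ) (d : Dh) (j : ℤ) : ℤˣ := d.e * r (ix d j)

theorem lab_mul (r : ℤ → ℤˣ) (d f : Dh) (j : ℤ) : lab r (d * f) j = f.e * lab r d (ix f j) := by
  simp only [lab, mul_e, ix_mul]
  rw [mul_comm d.e f.e, mul_assoc]

@[simp] theorem lab_one (r : ℤ → ℤˣ) (j : ℤ) : lab r 1 j = r j := by simp [lab]

theorem lab_rf (r : ℤ → ℤˣ) (d : Dh) (j : ℤ) : lab r (d * rf j) j = - lab r d j := by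
  rw [lab_mul, ix_rf]; simp [rf]; congr 1; ring

def Sim (r : ℤ → ℤˣ) (A : Set ℤ) (d d' : Dh) : Prop := ∀ j ∈ A, lab r d j = lab r d' j

theorem Sim.refl (r : ℤ → ℤˣ) (A : Set ℤ) (d : Dh) : Sim r A d d := fun _ _ => rfl
theorem Sim.symm {r : ℤ → ℤˣ} {A : Set ℤ} {d d' : Dh} (h : Sim r A d d') : Sim r A d' d :=
  fun j hj => (h j hj).symm
theorem Sim.trans {r : ℤ → ℤˣ} {A : Set ℤ} {d d' d'' : Dh} (h : Sim r A d d')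
    (h' : Sim r A d' d'') : Sim r A d d'' :=
  fun j hj => (h j hj).trans (h' j hj)
theorem Sim.mono {r : ℤ → ℤˣ} {A B : Set ℤ} {d d' : Dh} (h : Sim r A d d') (hB : B ⊆ A) :
    Sim r B d d' := fun j hj => h j (hB hj)

theorem sim_mul {r : ℤ → ℤˣ} {A : Set ℤ} {d d' : Dh} (f : Dh) :
    Sim r A (d * f) (d' * f) ↔ Sim r {m | ix f⁻¹ m ∈ A} d d' := by
  constructor
  · intro h m hm
    have := h _ hm
    rw [lab_mul, lab_mul] at this
    simpa using this
  · intro h m hm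
    rw [lab_mul, lab_mul, h _ (by simpa using hm)]

end Dh

/-- Everything we need to know about the sign labelling. -/
structure LabCtx (r : ℤ → ℤˣ) : Prop where
  recu : ∀ (N : ℕ) (ι : Dh) (η : ℤˣ), ∃ M : ℕ, ∀ m : ℤ, ∃ ι' : Dh, ι'.e = η ∧ m ≤ ι'.n ∧
    ι'.n ≤ m + M ∧ ∀ j : ℤ, |j| ≤ N → Dh.lab r ι' j = Dh.lab r ι j
  nonper : ∀ B : ℕ, ∃ N : ℕ, ∀ d : Dh, (∀ j : ℤ, |j| ≤ N → Dh.lab r d j = r j) →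
    d = 1 ∨ (B : ℤ) < |d.n|

def Letter.sgn : Letter → ℤˣ
  | .a => 1
  | .A => -1
  | .b => 1
  | .B => -1

theorem Letter.sgn_inv (x : Letter) : x.inv.sgn = - x.sgn := by
  cases x <;> simp [Letter.inv, Letter.sgn]

section
variable {ρ : ℤ → Letter}

theorem IsLabelling.parity (h : IsLabelling ρ) {m m' : ℤ} (hm : ρ m = ρ m') (he : Even m) :
    Even m' := by
  by_contra ho
  rw [Int.not_even_iff_odd] at ho
  rcases (h m).1 he with h1 | h1 <;> rcases (h m').2 ho with h2 | h2 <;>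
    rw [h1, h2] at hm <;> cases hm

theorem IsLabelling.parity_inv (h : IsLabelling ρ) {m m' : ℤ} (hm : ρ m = (ρ m').inv)
    (he : Even m') : Even m := by
  by_contra ho
  rw [Int.not_even_iff_odd] at ho
  rcases (h m').1 he with h1 | h1 <;> rcases (h m).2 ho with h2 | h2 <;>
    rw [h1, h2] at hm <;> cases hm

theorem blockWord_eq (ρ : ℤ → Letter) (k : ℤ) (n : ℕ) :
    blockWord ρ k n = (List.range (n + 1)).map (fun i : ℕ => ρ (k + i)) := by
  unfold blockWord
  have : ∀ l : List ℕ, (l >>= fun a => pure (a : ℤ) : List ℤ) = l.map (fun a : ℕ => (a : ℤ)) := by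
    intro l
    induction l with
    | nil => rfl
    | cons x l ih => simp; exact ih
  rw [this, List.map_map]; rfl

theorem blockWord_getElem (ρ : ℤ → Letter) (k : ℤ) (n i : ℕ) (hi : i < (blockWord ρ k n).length) :
    (blockWord ρ k n)[i] = ρ (k + i) := by
  simp [blockWord_eq]

theorem blockWord_length (ρ : ℤ → Letter) (k : ℤ) (n : ℕ) : (blockWord ρ k n).length = n + 1 := by
  simp [blockWord_eq]

theorem qp_trans (h : IsQuasiPeriodic ρ) (n : ℤ) (N : ℕ) : ∃ M : ℕ, ∀ m : ℤ, ∃ n' : ℤ, m ≤ n' ∧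
    n' ≤ m + M ∧ ∀ j : ℤ, |j| ≤ N → ρ (2 * n' + j) = ρ (2 * n + j) := by
  obtain ⟨M, hM⟩ := h.2.1 (2 * n - N) (2 * N)
  refine ⟨M, fun m => ?_⟩
  obtain ⟨s, t, hst⟩ := hM (2 * m - N) M (by omega)
  have hlen := congrArg List.length hst
  simp only [List.length_append, blockWord_length] at hlen
  have key : ∀ i : ℕ, i ≤ 2 * N → ρ (2 * m - N + (s.length + i : ℕ)) = ρ (2 * n - N + i) := by
    intro i hi
    rw [← blockWord_getElem ρ (2 * m - N) M (s.length + i) (by rw [blockWord_length]; omega),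
      ← blockWord_getElem ρ (2 * n - N) (2 * N) i (by rw [blockWord_length]; omega)]
    simp only [← hst]
    rw [List.getElem_append_left (by simp [blockWord_length]; omega),
      List.getElem_append_right (by omega)]
    simp
  have hk := key N (by omega)
  push_cast at hk
  have hpar : Even (2 * m - N + (s.length + N) : ℤ) := by
    refine h.1.parity hk.symm ⟨n, by ring⟩
  obtain ⟨c, hc⟩ := hpar
  refine ⟨c, by omega, by omega, fun j hj => ?_⟩
  rw [abs_le] at hj
  obtain ⟨i, hi⟩ : ∃ i : ℕ, (i : ℤ) = j + N := ⟨(j + N).toNat, by omega⟩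
  have := key i (by omega)
  convert this using 2
  · push_cast; omega
  · omega

theorem qp_flip (h : IsQuasiPeriodic ρ) (n : ℤ) (N : ℕ) : ∃ n' : ℤ,
    ∀ j : ℤ, |j| ≤ N → ρ (2 * n' + j) = (ρ (2 * n - j)).inv := by
  obtain ⟨k', hk'⟩ := h.2.2 (2 * n - N) (2 * N)
  have key : ∀ i : ℕ, i ≤ 2 * N → ρ (k' + i) = (ρ (2 * n - N + (2 * N - i : ℕ))).inv := by
    intro i hi
    rw [← blockWord_getElem ρ k' (2 * N) i (by rw [blockWord_length]; omega)]
    simp only [hk', wordInv]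
    rw [List.getElem_reverse, List.getElem_map, blockWord_getElem]
    congr 2
    simp [blockWord_length]
  have hk := key N (by omega)
  have hpar : Even (k' + N) := by
    refine h.1.parity_inv hk ⟨n, by omega⟩
  obtain ⟨c, hc⟩ := hpar
  refine ⟨c, fun j hj => ?_⟩
  rw [abs_le] at hj
  obtain ⟨i, hi⟩ : ∃ i : ℕ, (i : ℤ) = j + N := ⟨(j + N).toNat, by omega⟩
  have := key i (by omega)
  have e1 : 2 * c + j = k' + i := by omega
  have e2 : 2 * n - j = 2 * n - N + (2 * N - i : ℕ) := by omega
  rw [e1, e2, this]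

theorem labCtx_of_qp (h : IsQuasiPeriodic ρ) : LabCtx (fun m => (ρ m).sgn) := by
  set r : ℤ → ℤˣ := fun m => (ρ m).sgn with hr
  have flip : ∀ (N : ℕ) (n : ℤ), ∃ n' : ℤ, ∀ j : ℤ, |j| ≤ N → r (2 * n' + j) = - r (2 * n - j) := by
    intro N n
    obtain ⟨n', hn'⟩ := qp_flip h n N
    exact ⟨n', fun j hj => by simp only [hr, hn' j hj, Letter.sgn_inv]⟩
  refine ⟨?_, ?_⟩
  · intro N ι η
    have h1 : ∃ ι0 : Dh, ι0.e = η ∧ ∀ j : ℤ, |j| ≤ N → Dh.lab r ι0 j = Dh.lab r ι j := by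
      by_cases he : ι.e = η
      · exact ⟨ι, he, fun _ _ => rfl⟩
      · obtain ⟨n', hn'⟩ := flip N ι.n
        have he' : ι.e = -η := by
          rcases Int.units_eq_one_or ι.e with h1 | h1 <;> rcases Int.units_eq_one_or η with h2 | h2 <;>
            simp_all
        refine ⟨⟨n', η⟩, rfl, fun j hj => ?_⟩
        simp only [Dh.lab, Dh.ix, he']
        rcases Int.units_eq_one_or η with h2 | h2
        · have := hn' j hj
          simp [h2, this]
          rfl
        · have := hn' (-j) (by rwa [abs_neg])
          simp [h2]
          rw [this]; simp
    obtain ⟨ι0, he, hι0⟩ := h1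
    obtain ⟨M, hM⟩ := qp_trans h ι0.n N
    refine ⟨M, fun m => ?_⟩
    obtain ⟨n', a, b, c⟩ := hM m
    refine ⟨⟨n', η⟩, rfl, a, b, fun j hj => ?_⟩
    rw [← hι0 j hj]
    simp only [Dh.lab, Dh.ix, he]
    congr 1
    simp only [hr]
    rw [c]
    rcases Int.units_eq_one_or η with h2 | h2 <;> simpa [h2] using hj
  · have np : ∀ d : Dh, d ≠ 1 → ∃ j, Dh.lab r d j ≠ r j := by
      intro d hd
      by_contra hcon
      push Not at hcon
      rcases d.cases with ⟨he, -, hi⟩ | ⟨he, -, hi⟩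
      · have hn : d.n ≠ 0 := by
          intro h0; apply hd; ext
          · exact h0
          · simp [he]
        have per : Function.Periodic r (2 * d.n) := by
          intro j
          have := hcon j
          rw [Dh.lab, he, hi, one_mul, add_comm] at this
          exact this
        obtain ⟨n', hn'⟩ := flip (2 * d.n).natAbs 0
        have h1 : ∀ j : ℤ, r (2 * n' + j) = - r (- j) := by
          intro j
          have e1 : j % (2 * d.n) = j - (j / (2 * d.n)) * (2 * d.n) := by
            have := Int.emod_add_mul_ediv j (2 * d.n); linarith
          have a1 := Int.emod_nonneg j (b := 2 * d.n) (by omega)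
          have a2 := Int.emod_lt_abs j (b := 2 * d.n) (by omega)
          have := hn' (j % (2 * d.n)) (by rw [abs_of_nonneg a1, Int.natCast_natAbs]; exact a2.le)
          rw [e1] at this
          have p1 := per.int_mul (-(j / (2 * d.n))) (2 * n' + j)
          have p2 := per.int_mul ((j / (2 * d.n))) (-j)
          rw [← p1, ← p2]
          simp only [Int.cast_id] at *
          convert this using 2
          · ring
          · congr 1; ring
        have := h1 (-n')
        have e2 : 2 * n' + -n' = n' := by ring
        rw [e2, neg_neg] at this
        rcases Int.units_eq_one_or (r n') with h2 | h2 <;> rw [h2] at this <;> simp at this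
      · have := hcon d.n
        rw [Dh.lab, he, hi] at this
        have e2 : 2 * d.n - d.n = d.n := by ring
        rw [e2] at this
        rcases Int.units_eq_one_or (r d.n) with h2 | h2 <;> rw [h2] at this <;> simp at this
    have np' : ∀ d : Dh, ∃ j, d ≠ 1 → Dh.lab r d j ≠ r j := by
      intro d
      by_cases hd : d = 1
      · exact ⟨0, fun h => absurd hd h⟩
      · obtain ⟨j, hj⟩ := np d hd
        exact ⟨j, fun _ => hj⟩
    choose f hf using np'
    intro B
    refine ⟨(Finset.Icc (-B : ℤ) B ×ˢ (Finset.univ : Finset ℤˣ)).sup (fun p => (f ⟨p.1, p.2⟩).natAbs),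
      fun d hd => ?_⟩
    by_contra hcon
    push Not at hcon
    refine hf d hcon.1 (hd _ ?_)
    have := Finset.le_sup (s := (Finset.Icc (-B : ℤ) B ×ˢ (Finset.univ : Finset ℤˣ)))
      (f := fun p => (f ⟨p.1, p.2⟩).natAbs) (b := (d.n, d.e))
      (by simp; exact ⟨abs_le.mp hcon.2, Int.units_eq_one_or _⟩)
    rw [← Int.natCast_natAbs]
    exact_mod_cast this

end

open Dh

/-! ### Generators in frames -/

def IsGen (r : ℤ → ℤˣ) (j : ℤ) (ν g : ℝ ≃o ℝ) : Prop :=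
  ∀ ι : Dh, lab r ι j = 1 → ∀ w : ℝ, 0 ≤ w → w ≤ 1 →
    g (pt ι (w + (j - 1) / 2)) = pt ι (ν w + (j - 1) / 2)

theorem InH.zero {f : ℝ ≃o ℝ} (h : InH f) : f 0 = 0 := by
  obtain ⟨-, k, ε, he, h1, -⟩ := h
  simpa using h1 0 ⟨le_refl _, he.le⟩

theorem InH.one {f : ℝ ≃o ℝ} (h : InH f) : f 1 = 1 := by
  obtain ⟨-, k, ε, he, -, h1⟩ := h
  simpa using h1 1 ⟨by linarith, le_refl _⟩

theorem InH.mem {f : ℝ ≃o ℝ} (h : InH f) {w : ℝ} (h0 : 0 ≤ w) (h1 : w ≤ 1) :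
    0 ≤ f w ∧ f w ≤ 1 := by
  constructor
  · rw [← h.zero]; exact f.monotone h0
  · rw [← h.one]; exact f.monotone h1

structure GCtx (r : ℤ → ℤˣ) (H G : Subgroup (ℝ ≃o ℝ)) : Prop where
  lab : LabCtx r
  hH : ∀ f : ℝ ≃o ℝ, f ∈ H ↔ InH f
  gen : ∀ j : ℤ, j = 0 ∨ j = 1 → ∀ ν ∈ H, ∃ g ∈ G, IsGen r j ν g
  ind : G ≤ Subgroup.closure {g | ∃ j : ℤ, (j = 0 ∨ j = 1) ∧ ∃ ν ∈ H, IsGen r j ν g}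

theorem rel_cell (r : ℤ → ℤˣ) (ι : Dh) (j : ℤ) (hj : j = 0 ∨ j = 1) (y : ℝ) :
    ∃ (δ : Dh) (w : ℝ), 0 ≤ w ∧ w ≤ 1 ∧ lab r (ι * δ) j = 1 ∧ y = pt δ (w + (j - 1) / 2) ∧
      |(ix δ j : ℝ) - 2 * y| ≤ 1 := by
  obtain ⟨d, y0, h0, h1, rfl⟩ := exists_frame y
  have hb : |(ix d j : ℝ) - 2 * pt d y0| ≤ 1 := by
    rw [ix_pt, abs_le]
    rcases hj with rfl | rfl <;> push_cast <;> constructor <;> linarith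
  rcases Int.units_eq_one_or (lab r (ι * d) j) with h | h
  · refine ⟨d, y0 - (j - 1) / 2, ?_, ?_, h, by congr 1; ring, hb⟩ <;>
    rcases hj with rfl | rfl <;> push_cast <;> linarith
  · refine ⟨d * rf j, (j + 1) / 2 - y0, ?_, ?_, ?_, ?_, ?_⟩
    · rcases hj with rfl | rfl <;> push_cast <;> linarith
    · rcases hj with rfl | rfl <;> push_cast <;> linarith
    · rw [← mul_assoc, lab_rf, h]; simp
    · rw [pt_mul, pt_rf]; congr 1; ring
    · rw [ix_mul, ix_rf]
      have : 2 * j - j = j := by ring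
      rwa [this]

theorem IsGen.unique {r : ℤ → ℤˣ} {j : ℤ} (hj : j = 0 ∨ j = 1) {ν g g' : ℝ ≃o ℝ}
    (h : IsGen r j ν g) (h' : IsGen r j ν g') : g = g' := by
  ext x
  obtain ⟨δ, w, h0, h1, hl, rfl, -⟩ := rel_cell r 1 j hj x
  rw [one_mul] at hl
  rw [h δ hl w h0 h1, h' δ hl w h0 h1]

theorem IsGen.one (r : ℤ → ℤˣ) (j : ℤ) : IsGen r j 1 1 := by
  intro ι _ w _ _; rfl

theorem IsGen.mul {r : ℤ → ℤˣ} {j : ℤ} {ν g ν' g' : ℝ ≃o ℝ}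
    (h : IsGen r j ν g) (h' : IsGen r j ν' g') (hν' : InH ν') : IsGen r j (ν * ν') (g * g') := by
  intro ι hl w h0 h1
  rw [RelIso.mul_apply, h' ι hl w h0 h1, h ι hl _ (hν'.mem h0 h1).1 (hν'.mem h0 h1).2]; rfl

theorem IsGen.inv {r : ℤ → ℤˣ} {j : ℤ} {ν g : ℝ ≃o ℝ}
    (h : IsGen r j ν g) (hν' : InH ν⁻¹) : IsGen r j ν⁻¹ g⁻¹ := by
  intro ι hl w h0 h1
  have := h ι hl _ (hν'.mem h0 h1).1 (hν'.mem h0 h1).2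
  rw [RelIso.apply_inv_self] at this
  rw [← this, RelIso.inv_apply_self]

theorem GCtx.gen_mem {r : ℤ → ℤˣ} {H G : Subgroup (ℝ ≃o ℝ)} (c : GCtx r H G) {j : ℤ}
    (hj : j = 0 ∨ j = 1) {ν g : ℝ ≃o ℝ} (hν : ν ∈ H) (h : IsGen r j ν g) : g ∈ G := by
  obtain ⟨g', hg', h'⟩ := c.gen j hj ν hν
  rwa [h.unique hj h']

theorem isGen_of_zeta {ρ : ℤ → Letter} (hρ : IsLabelling ρ) {ν ζ : ℝ ≃o ℝ} (h : IsZeta ρ ν ζ) :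
    IsGen (fun m => (ρ m).sgn) 1 ν ζ := by
  intro ι hl w h0 h1
  rcases ι.cases with ⟨he, hp, hi⟩ | ⟨he, hp, hi⟩
  · rw [lab, he, hi, one_mul] at hl
    have hb : ρ (2 * ι.n + 1) = Letter.b := by
      rcases (hρ (2 * ι.n + 1)).2 ⟨ι.n, rfl⟩ with h2 | h2
      · exact h2
      · simp [h2, Letter.sgn] at hl
    rw [hp, hp]
    have := (h ι.n (ι.n + w) ⟨by linarith, by linarith⟩).1 hb
    simp at this ⊢
    exact this
  · rw [lab, he, hi] at hl
    have e1 : 2 * ι.n - 1 = 2 * (ι.n - 1) + 1 := by ring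
    rw [e1] at hl
    have hb : ρ (2 * (ι.n - 1) + 1) = Letter.B := by
      rcases (hρ (2 * (ι.n - 1) + 1)).2 ⟨ι.n - 1, rfl⟩ with h2 | h2
      · simp [h2, Letter.sgn] at hl
      · exact h2
    rw [hp, hp]
    have := (h (ι.n - 1) (ι.n - w) ⟨by push_cast; linarith, by push_cast; linarith⟩).2 hb
    simp at this ⊢
    exact this

theorem isGen_of_chi {ρ : ℤ → Letter} (hρ : IsLabelling ρ) {ν χ : ℝ ≃o ℝ} (h : IsChi ρ ν χ) :
    IsGen (fun m => (ρ m).sgn) 0 ν χ := by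
  intro ι hl w h0 h1
  rcases ι.cases with ⟨he, hp, hi⟩ | ⟨he, hp, hi⟩
  · rw [lab, he, hi, one_mul] at hl
    have hb : ρ (2 * ι.n) = Letter.a := by
      rcases (hρ (2 * ι.n)).1 ⟨ι.n, by ring⟩ with h2 | h2
      · exact h2
      · simp [h2, Letter.sgn] at hl
    rw [hp, hp]
    have := (h ι.n (ι.n + (w - 1 / 2)) ⟨by linarith, by linarith⟩).1 hb
    have e2 : ι.n + (w - 1 / 2) - ((ι.n : ℝ) - 1/2) = w := by ring
    rw [e2] at this
    push_cast
    have e3 : w + (0 - 1) / 2 = w - 1 / 2 := by ring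
    rw [e3, this]; ring
  · rw [lab, he, hi] at hl
    have hb : ρ (2 * ι.n) = Letter.A := by
      rcases (hρ (2 * ι.n)).1 ⟨ι.n, by ring⟩ with h2 | h2
      · simp [h2, Letter.sgn] at hl
      · exact h2
    rw [hp, hp]
    have := (h ι.n (ι.n - (w - 1 / 2)) ⟨by linarith, by linarith⟩).2 hb
    have e2 : ((ι.n : ℝ) + 1/2) - (ι.n - (w - 1 / 2)) = w := by ring
    rw [e2] at this
    push_cast
    have e3 : w + (0 - 1) / 2 = w - 1 / 2 := by ring
    rw [e3, this]; ring

theorem gctx_of {ρ : ℤ → Letter} (hρ : IsQuasiPeriodic ρ)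
    {H : Subgroup (ℝ ≃o ℝ)} (hH : ∀ f : ℝ ≃o ℝ, f ∈ H ↔ InH f)
    {ν₁ ν₂ ν₃ : ℝ ≃o ℝ} (hgen : Subgroup.closure {ν₁, ν₂, ν₃} = H)
    {ζ₁ ζ₂ ζ₃ χ₁ χ₂ χ₃ : ℝ ≃o ℝ}
    (hζ₁ : IsZeta ρ ν₁ ζ₁) (hζ₂ : IsZeta ρ ν₂ ζ₂) (hζ₃ : IsZeta ρ ν₃ ζ₃)
    (hχ₁ : IsChi ρ ν₁ χ₁) (hχ₂ : IsChi ρ ν₂ χ₂) (hχ₃ : IsChi ρ ν₃ χ₃)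
    {G : Subgroup (ℝ ≃o ℝ)}
    (hG : G = Subgroup.closure {ζ₁, ζ₂, ζ₃, χ₁, χ₂, χ₃}) :
    GCtx (fun m => (ρ m).sgn) H G := by
  set r : ℤ → ℤˣ := fun m => (ρ m).sgn
  have z1 := isGen_of_zeta hρ.1 hζ₁
  have z2 := isGen_of_zeta hρ.1 hζ₂
  have z3 := isGen_of_zeta hρ.1 hζ₃
  have c1 := isGen_of_chi hρ.1 hχ₁
  have c2 := isGen_of_chi hρ.1 hχ₂
  have c3 := isGen_of_chi hρ.1 hχ₃
  have m : ∀ x ∈ ({ζ₁, ζ₂, ζ₃, χ₁, χ₂, χ₃} : Set (ℝ ≃o ℝ)), x ∈ G := by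
    intro x hx; rw [hG]; exact Subgroup.subset_closure hx
  have mn : ∀ x ∈ ({ν₁, ν₂, ν₃} : Set (ℝ ≃o ℝ)), x ∈ H := by
    intro x hx; rw [← hgen]; exact Subgroup.subset_closure hx
  have base : ∀ j : ℤ, j = 0 ∨ j = 1 → ∀ ν ∈ ({ν₁, ν₂, ν₃} : Set (ℝ ≃o ℝ)), ∃ g ∈ G, IsGen r j ν g := by
    rintro j (rfl | rfl) ν (rfl | rfl | rfl)
    · exact ⟨_, m χ₁ (by simp), c1⟩
    · exact ⟨_, m χ₂ (by simp), c2⟩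
    · exact ⟨_, m χ₃ (by simp), c3⟩
    · exact ⟨_, m ζ₁ (by simp), z1⟩
    · exact ⟨_, m ζ₂ (by simp), z2⟩
    · exact ⟨_, m ζ₃ (by simp), z3⟩
  refine ⟨labCtx_of_qp hρ, hH, ?_, ?_⟩
  · intro j hj ν hν
    rw [← hgen] at hν
    induction hν using Subgroup.closure_induction with
    | mem x hx => exact base j hj x hx
    | one => exact ⟨1, G.one_mem, IsGen.one r j⟩
    | mul x y hx hy ihx ihy =>
      obtain ⟨g, hg, h⟩ := ihx
      obtain ⟨g', hg', h'⟩ := ihy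
      exact ⟨g * g', G.mul_mem hg hg', h.mul h' ((hH _).1 (hgen ▸ hy))⟩
    | inv x hx ihx =>
      obtain ⟨g, hg, h⟩ := ihx
      exact ⟨g⁻¹, G.inv_mem hg, h.inv ((hH _).1 (hgen ▸ Subgroup.inv_mem _ hx))⟩
  · rw [hG]
    apply Subgroup.closure_mono
    rintro x (rfl | rfl | rfl | rfl | rfl | rfl)
    · exact ⟨1, by simp, ν₁, mn _ (by simp), z1⟩
    · exact ⟨1, by simp, ν₂, mn _ (by simp), z2⟩
    · exact ⟨1, by simp, ν₃, mn _ (by simp), z3⟩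
    · exact ⟨0, by simp, ν₁, mn _ (by simp), c1⟩
    · exact ⟨0, by simp, ν₂, mn _ (by simp), c2⟩
    · exact ⟨0, by simp, ν₃, mn _ (by simp), c3⟩

/-! ### Locality -/

section
variable {r : ℤ → ℤˣ} {H G : Subgroup (ℝ ≃o ℝ)}

def SimN (r : ℤ → ℤˣ) (R : ℕ) (ι ι' : Dh) : Prop := ∀ j : ℤ, |j| ≤ R → lab r ι j = lab r ι' j

theorem SimN.mono {R R' : ℕ} {ι ι' : Dh} (h : SimN r R ι ι') (hR : R' ≤ R) : SimN r R' ι ι' :=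
  fun j hj => h j (hj.trans (by exact_mod_cast hR))

theorem SimN.symm {R : ℕ} {ι ι' : Dh} (h : SimN r R ι ι') : SimN r R ι' ι :=
  fun j hj => (h j hj).symm

def Locl (r : ℤ → ℤˣ) (g : ℝ ≃o ℝ) : Prop :=
  (∃ B : ℝ, ∀ x, |g x - x| ≤ B) ∧ ∀ K : ℝ, ∃ R : ℕ, ∀ ι ι' : Dh, SimN r R ι ι' →
    ∀ y, |y| ≤ K → cj ι g y = cj ι' g y

theorem cj_disp (ι : Dh) {g : ℝ ≃o ℝ} {B : ℝ} (hB : ∀ x, |g x - x| ≤ B) (y : ℝ) :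
    |cj ι g y - y| ≤ B := by
  rw [cj_apply, ← pt_sub ι, pt_pt_inv]; exact hB _

theorem cj_mul (ι : Dh) (g h : ℝ ≃o ℝ) : cj ι (g * h) = cj ι g * cj ι h := by
  ext x; simp [cj_apply]

theorem cj_one (ι : Dh) : cj ι 1 = 1 := by
  ext x; simp [cj_apply]

theorem cj_inv (ι : Dh) (g : ℝ ≃o ℝ) : cj ι g⁻¹ = (cj ι g)⁻¹ := by
  rw [eq_inv_iff_mul_eq_one, ← cj_mul, inv_mul_cancel, cj_one]

theorem Locl.gen {j : ℤ} (hj : j = 0 ∨ j = 1) {ν g : ℝ ≃o ℝ} (hν : InH ν) (h : IsGen r j ν g) :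
    Locl r g := by
  have key : ∀ ι : Dh, ∀ y : ℝ, ∃ (δ : Dh) (w : ℝ), 0 ≤ w ∧ w ≤ 1 ∧ y = pt δ (w + (j - 1) / 2) ∧
      |(ix δ j : ℝ) - 2 * y| ≤ 1 ∧ ∀ ι', lab r ι' (ix δ j) = lab r ι (ix δ j) →
        cj ι' g y = pt δ (ν w + (j - 1) / 2) := by
    intro ι y
    obtain ⟨δ, w, h0, h1, hl, hy, hb⟩ := rel_cell r ι j hj y
    refine ⟨δ, w, h0, h1, hy, hb, fun ι' hι' => ?_⟩
    have hl' : lab r (ι' * δ) j = 1 := by rw [lab_mul, hι', ← lab_mul, hl]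
    rw [cj_apply, hy, ← pt_mul, h _ hl' w h0 h1, pt_mul, pt_inv_pt]
  refine ⟨⟨1, fun x => ?_⟩, fun K => ⟨⌈2 * K + 1⌉₊, fun ι ι' hs y hy => ?_⟩⟩
  · obtain ⟨δ, w, h0, h1, hx, -, h2⟩ := key 1 x
    have := h2 1 rfl
    rw [cj_apply] at this
    simp only [inv_one, pt_one] at this
    rw [this, hx, pt_sub, abs_le]
    have := hν.mem h0 h1
    constructor <;> linarith
  · obtain ⟨δ, w, h0, h1, hx, hb, h2⟩ := key ι y
    rw [h2 ι rfl, h2 ι']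
    refine (hs _ ?_).symm
    have h3 : |(ix δ j : ℝ)| ≤ 2 * K + 1 := by
      have := abs_le.mp hb; have := abs_le.mp hy
      rw [abs_le]; constructor <;> linarith
    have h4 := h3.trans (Nat.le_ceil _)
    exact_mod_cast h4

theorem GCtx.locl (c : GCtx r H G) {g : ℝ ≃o ℝ} (hg : g ∈ G) : Locl r g := by
  replace hg := c.ind hg
  induction hg using Subgroup.closure_induction with
  | mem x hx =>
    obtain ⟨j, hj, ν, hν, h⟩ := hx
    exact Locl.gen hj ((c.hH _).1 hν) h
  | one => exact ⟨⟨0, by simp⟩, fun K => ⟨0, fun ι ι' _ y _ => by simp [cj_one]⟩⟩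
  | mul x y hx hy ihx ihy =>
    obtain ⟨⟨B, hB⟩, h1⟩ := ihx
    obtain ⟨⟨B', hB'⟩, h2⟩ := ihy
    refine ⟨⟨B + B', fun z => ?_⟩, fun K => ?_⟩
    · have a := abs_le.mp (hB (y z)); have b := abs_le.mp (hB' z)
      rw [RelIso.mul_apply, abs_le]; constructor <;> linarith
    · obtain ⟨R, hR⟩ := h1 (K + B')
      obtain ⟨R', hR'⟩ := h2 K
      refine ⟨max R R', fun ι ι' hs z hz => ?_⟩
      rw [cj_mul, cj_mul, RelIso.mul_apply, RelIso.mul_apply,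
        hR' ι ι' (hs.mono (le_max_right _ _)) z hz]
      refine hR ι ι' (hs.mono (le_max_left _ _)) _ ?_
      have a := abs_le.mp (cj_disp ι' hB' z); have b := abs_le.mp hz
      rw [abs_le]; constructor <;> linarith
  | inv x hx ihx =>
    obtain ⟨⟨B, hB⟩, h1⟩ := ihx
    have hB' : ∀ z, |x⁻¹ z - z| ≤ B := by
      intro z
      have := hB (x⁻¹ z)
      rwa [RelIso.apply_inv_self, abs_sub_comm] at this
    refine ⟨⟨B, hB'⟩, fun K => ?_⟩
    obtain ⟨R, hR⟩ := h1 (K + B)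
    refine ⟨R, fun ι ι' hs z hz => ?_⟩
    have a := abs_le.mp (cj_disp ι hB' z); have b := abs_le.mp hz
    have := hR ι ι' hs (cj ι x⁻¹ z) (by rw [abs_le]; constructor <;> linarith)
    rw [cj_inv, RelIso.apply_inv_self] at this
    rw [cj_inv, cj_inv]
    nth_rewrite 2 [this]
    rw [RelIso.inv_apply_self]

theorem GCtx.exists_fixed (c : GCtx r H G) {g : ℝ ≃o ℝ} (hg : g ∈ G) (B : ℝ) : ∃ x, B < x ∧ g x = x := by
  obtain ⟨-, h⟩ := c.locl hg
  obtain ⟨R, hR⟩ := h 0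
  obtain ⟨M, hM⟩ := c.lab.recu R 1 1
  obtain ⟨M', hM'⟩ := c.lab.recu R 1 (-1)
  obtain ⟨d, e1, n1, -, s1⟩ := hM (⌊B⌋ + 1)
  obtain ⟨d', e2, n2, -, s2⟩ := hM' (⌊B⌋ + 1)
  have hB := Int.lt_floor_add_one B
  have a1 := hR d 1 s1 0 (by simp)
  have a2 := hR d' 1 s2 0 (by simp)
  have k1 := congrArg (pt d) a1
  have k2 := congrArg (pt d') a2
  rw [pt_cj, cj_apply] at k1 k2
  simp only [inv_one, pt_one] at k1 k2
  rcases d.cases with ⟨-, hp, -⟩ | ⟨e, -, -⟩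
  swap
  · rw [e1] at e; exact absurd e (by decide)
  rcases d'.cases with ⟨e, -, -⟩ | ⟨-, hp', -⟩
  · rw [e2] at e; exact absurd e (by decide)
  rw [hp, hp] at k1
  rw [hp', hp'] at k2
  simp only [add_zero, sub_zero] at k1 k2
  have hc : Continuous (fun x => g x - x) := g.continuous.sub continuous_id
  have iv := intermediate_value_uIcc (a := (d.n : ℝ)) (b := (d'.n : ℝ)) hc.continuousOn
  have z : (0 : ℝ) ∈ Set.uIcc (g (d.n : ℝ) - d.n) (g (d'.n : ℝ) - d'.n) := by
    rw [k1, k2, Set.mem_uIcc]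
    rcases le_total (g 0) 0 with h0 | h0
    · left; constructor <;> linarith
    · right; constructor <;> linarith
  obtain ⟨x, hx, hx0⟩ := iv z
  refine ⟨x, ?_, by simp only at hx0; linarith⟩
  have m1 : (⌊B⌋ : ℝ) + 1 ≤ d.n := by exact_mod_cast n1
  have m2 : (⌊B⌋ : ℝ) + 1 ≤ d'.n := by exact_mod_cast n2
  rw [Set.mem_uIcc] at hx
  rcases hx with hx | hx <;> linarith
end

open Dh

/-! ### Explicit piecewise linear homeomorphisms -/

def supIso (f g : ℝ ≃o ℝ) : ℝ ≃o ℝ where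
  toFun x := max (f x) (g x)
  invFun y := min (f.symm y) (g.symm y)
  left_inv x := by
    rcases le_total (f x) (g x) with h | h
    · have : x ≤ f.symm (g x) := by rwa [OrderIso.le_symm_apply]
      simp [h, this]
    · have : x ≤ g.symm (f x) := by rwa [OrderIso.le_symm_apply]
      simp [h, this]
  right_inv y := by
    rcases le_total (f.symm y) (g.symm y) with h | h
    · have : g (f.symm y) ≤ y := by rw [← OrderIso.le_symm_apply]; exact h
      simp [h, this]
    · have : f (g.symm y) ≤ y := by rw [← OrderIso.le_symm_apply]; exact h
      simp [h, this]
  map_rel_iff' := by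
    have h : StrictMono fun x => max (f x) (g x) := fun a b hab => max_lt_max (f.strictMono hab) (g.strictMono hab)
    intro x y
    exact h.le_iff_le

def infIso (f g : ℝ ≃o ℝ) : ℝ ≃o ℝ := (supIso f.symm g.symm).symm

@[simp] theorem supIso_apply (f g : ℝ ≃o ℝ) (x : ℝ) : supIso f g x = max (f x) (g x) := rfl
@[simp] theorem infIso_apply (f g : ℝ ≃o ℝ) (x : ℝ) : infIso f g x = min (f x) (g x) := rfl

noncomputable def affIso (a : ℝ) (ha : 0 < a) (b : ℝ) : ℝ ≃o ℝ where
  toFun x := a * x + b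
  invFun y := (y - b) / a
  left_inv x := by field_simp; ring
  right_inv y := by field_simp; ring
  map_rel_iff' := by intro x y; simp [ha]

@[simp] theorem affIso_apply (a : ℝ) (ha : 0 < a) (b x : ℝ) : affIso a ha b x = a * x + b := rfl

noncomputable def bump (p ε c : ℝ) : ℝ ≃o ℝ :=
  supIso 1 (infIso (infIso (affIso 2 (by norm_num) (-p)) (affIso 1 (by norm_num) ε))
    (affIso (1/2) (by norm_num) (c/2)))

theorem bump_apply (p ε c t : ℝ) :
    bump p ε c t = max t (min (min (2 * t - p) (t + ε)) ((t + c) / 2)) := by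
  simp only [bump, supIso_apply, infIso_apply, affIso_apply, RelIso.one_apply]
  congr 2
  · congr 1; ring
  · ring

section
variable {p ε c t : ℝ}

theorem bump0 (h : t ≤ p) : bump p ε c t = t := by
  rw [bump_apply, max_eq_left]
  apply min_le_of_left_le; apply min_le_of_left_le; linarith

theorem bump1 (hc : p + 3 * ε ≤ c) (h : p ≤ t) (h' : t ≤ p + ε) : bump p ε c t = 2 * t - p := by
  rw [bump_apply, min_eq_left (a := 2 * t - p) (by linarith), min_eq_left (by linarith),
    max_eq_right (by linarith)]

theorem bump2 (he : 0 ≤ ε) (h : p + ε ≤ t) (h' : t ≤ c - 2 * ε) :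
    bump p ε c t = t + ε := by
  rw [bump_apply, min_eq_right (a := 2 * t - p) (by linarith), min_eq_left (by linarith),
    max_eq_right (by linarith)]

theorem bump3 (he : 0 ≤ ε) (hc : p + 3 * ε ≤ c) (h : c - 2 * ε ≤ t) (h' : t ≤ c) :
    bump p ε c t = (t + c) / 2 := by
  rw [bump_apply, min_eq_right (a := 2 * t - p) (by linarith), min_eq_right (by linarith),
    max_eq_right (by linarith)]

theorem bump4 (h : c ≤ t) : bump p ε c t = t := by
  rw [bump_apply, max_eq_left]
  apply min_le_of_right_le; linarith

theorem bump_gt (he : 0 < ε) (h : p < t) (h' : t < c) : t < bump p ε c t := by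
  rw [bump_apply]
  apply lt_max_of_lt_right
  refine lt_min (lt_min ?_ ?_) ?_ <;> linarith
end

theorem isDyadic_int (a : ℤ) : IsDyadic a := ⟨a, 0, by simp⟩

theorem IsDyadic.add {x y : ℝ} (hx : IsDyadic x) (hy : IsDyadic y) : IsDyadic (x + y) := by
  obtain ⟨a, b, rfl⟩ := hx
  obtain ⟨a', b', rfl⟩ := hy
  refine ⟨a * 2 ^ b' + a' * 2 ^ b, b + b', ?_⟩
  push_cast; field_simp; ring

theorem IsDyadic.neg {x : ℝ} (hx : IsDyadic x) : IsDyadic (-x) := by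
  obtain ⟨a, b, rfl⟩ := hx
  exact ⟨-a, b, by push_cast; ring⟩

theorem IsDyadic.sub {x y : ℝ} (hx : IsDyadic x) (hy : IsDyadic y) : IsDyadic (x - y) := by
  rw [sub_eq_add_neg]; exact hx.add hy.neg

theorem IsDyadic.mul {x y : ℝ} (hx : IsDyadic x) (hy : IsDyadic y) : IsDyadic (x * y) := by
  obtain ⟨a, b, rfl⟩ := hx
  obtain ⟨a', b', rfl⟩ := hy
  refine ⟨a * a', b + b', ?_⟩
  push_cast; field_simp; ring

theorem isDyadic_pow (k : ℕ) : IsDyadic ((1/2 : ℝ) ^ k) := ⟨1, k, by simp⟩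

theorem isDyadic_half : IsDyadic (1/2 : ℝ) := ⟨1, 1, by norm_num⟩

theorem dyadic_between {x y : ℝ} (h : x < y) : ∃ q, IsDyadic q ∧ x < q ∧ q < y := by
  obtain ⟨n, hn⟩ := exists_pow_lt_of_lt_one (sub_pos.mpr h) (by norm_num : (1/2 : ℝ) < 1)
  have hp : (0 : ℝ) < 2 ^ n := by positivity
  have hn' : 1 < (y - x) * 2 ^ n := by
    rw [div_pow, one_pow, div_lt_iff₀ hp] at hn; exact hn
  refine ⟨((⌊x * 2 ^ n⌋ + 1 : ℤ) : ℝ) / 2 ^ n, ⟨_, n, rfl⟩, ?_, ?_⟩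
  · rw [lt_div_iff₀ hp]; push_cast; exact Int.lt_floor_add_one _
  · rw [div_lt_iff₀ hp]; push_cast
    have := Int.floor_le (x * 2 ^ n)
    linarith

theorem inF_of5 {f : ℝ ≃o ℝ} (h0 : ∀ t, t ≤ 0 → f t = t) (h1 : ∀ t, 1 ≤ t → f t = t)
    {x1 x2 x3 x4 : ℝ} (d1 : IsDyadic x1) (d2 : IsDyadic x2) (d3 : IsDyadic x3) (d4 : IsDyadic x4)
    (l0 : 0 < x1) (l1 : x1 < x2) (l2 : x2 < x3) (l3 : x3 < x4) (l4 : x4 < 1)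
    (p0 : ∃ (k : ℤ) (c : ℝ), ∀ t, 0 ≤ t → t ≤ x1 → f t = 2 ^ k * t + c)
    (p1 : ∃ (k : ℤ) (c : ℝ), ∀ t, x1 ≤ t → t ≤ x2 → f t = 2 ^ k * t + c)
    (p2 : ∃ (k : ℤ) (c : ℝ), ∀ t, x2 ≤ t → t ≤ x3 → f t = 2 ^ k * t + c)
    (p3 : ∃ (k : ℤ) (c : ℝ), ∀ t, x3 ≤ t → t ≤ x4 → f t = 2 ^ k * t + c)
    (p4 : ∃ (k : ℤ) (c : ℝ), ∀ t, x4 ≤ t → t ≤ 1 → f t = 2 ^ k * t + c) : InThompsonF f := by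
  refine ⟨?_, 5, ![0, x1, x2, x3, x4, 1], rfl, rfl, ?_, ?_, ?_⟩
  · intro x hx
    rw [Set.mem_Icc, not_and_or, not_le, not_le] at hx
    rcases hx with h | h
    · exact h0 x h.le
    · exact h1 x h.le
  · rw [Fin.strictMono_iff_lt_succ]
    intro i
    fin_cases i
    · exact l0
    · exact l1
    · exact l2
    · exact l3
    · exact l4
  · intro i
    fin_cases i
    · simpa using isDyadic_int 0
    · exact d1
    · exact d2
    · exact d3
    · exact d4
    · simpa using isDyadic_int 1
  · intro i
    fin_cases i
    · obtain ⟨k, c, h⟩ := p0; exact ⟨k, c, fun t ht => h t ht.1 ht.2⟩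
    · obtain ⟨k, c, h⟩ := p1; exact ⟨k, c, fun t ht => h t ht.1 ht.2⟩
    · obtain ⟨k, c, h⟩ := p2; exact ⟨k, c, fun t ht => h t ht.1 ht.2⟩
    · obtain ⟨k, c, h⟩ := p3; exact ⟨k, c, fun t ht => h t ht.1 ht.2⟩
    · obtain ⟨k, c, h⟩ := p4; exact ⟨k, c, fun t ht => h t ht.1 ht.2⟩

theorem bump_inH {p c : ℝ} (k : ℕ) (hp : IsDyadic p) (hc : IsDyadic c) (h0 : 0 < p) (h1 : c < 1)
    (h : p + 3 * (1/2 : ℝ) ^ k < c) : InH (bump p ((1/2) ^ k) c) := by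
  have he : (0 : ℝ) < (1/2) ^ k := by positivity
  refine ⟨?_, ?_⟩
  · have d2 : IsDyadic (2 : ℝ) := by simpa using isDyadic_int 2
    refine inF_of5 (x1 := p) (x2 := p + (1/2) ^ k) (x3 := c - 2 * (1/2) ^ k) (x4 := c)
      (fun t ht => bump0 (by linarith)) (fun t ht => bump4 (by linarith)) hp
      (hp.add (isDyadic_pow k)) (hc.sub (d2.mul (isDyadic_pow k))) hc h0 (by linarith)
      (by linarith) (by linarith) h1 ?_ ?_ ?_ ?_ ?_
    · exact ⟨0, 0, fun t _ h => by rw [bump0 h]; simp⟩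
    · exact ⟨1, -p, fun t h' h'' => by rw [bump1 h.le h' h'']; norm_num; ring⟩
    · exact ⟨0, (1/2) ^ k, fun t h' h'' => by rw [bump2 he.le h' h'']; simp⟩
    · exact ⟨-1, c / 2, fun t h' h'' => by
        rw [bump3 he.le h.le h' h'']; norm_num; ring⟩
    · exact ⟨0, 0, fun t h _ => by rw [bump4 h]; simp⟩
  · refine ⟨0, min p (1 - c), lt_min h0 (by linarith), fun t ht => ?_, fun t ht => ?_⟩
    · rw [bump0 (ht.2.trans (min_le_left _ _))]; simp
    · have := min_le_right p (1 - c)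
      rw [bump4 (by linarith [ht.1])]; simp

theorem exists_bump {a s b : ℝ} (h0 : 0 ≤ a) (h1 : b ≤ 1) (ha : a < s) (hb : s < b) :
    ∃ ν : ℝ ≃o ℝ, InH ν ∧ (∀ t, t ≤ a → ν t = t) ∧ (∀ t, b ≤ t → ν t = t) ∧ s < ν s := by
  obtain ⟨p, dp, h2, h3⟩ := dyadic_between ha
  obtain ⟨c, dc, h4, h5⟩ := dyadic_between hb
  obtain ⟨k, hk⟩ := exists_pow_lt_of_lt_one (show (0:ℝ) < (c - p) / 3 by linarith)
    (by norm_num : (1/2 : ℝ) < 1)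
  have he : (0 : ℝ) < (1/2) ^ k := by positivity
  refine ⟨bump p ((1/2) ^ k) c, bump_inH k dp dc (by linarith) (by linarith) (by linarith),
    fun t ht => bump0 (by linarith), fun t ht => bump4 (by linarith), bump_gt he h3 h4⟩

/-! ### The elements `mu` and `nus` -/

noncomputable def muX : ℝ ≃o ℝ := supIso 1 (infIso (affIso 2 (by norm_num) 0) (affIso (1/2) (by norm_num) (3/16)))
noncomputable def muY : ℝ ≃o ℝ := infIso 1 (supIso (affIso 2 (by norm_num) (-1)) (affIso (1/2) (by norm_num) (5/16)))
noncomputable def mu : ℝ ≃o ℝ := muY * muX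
noncomputable def nuX : ℝ ≃o ℝ := supIso 1 (infIso (affIso 2 (by norm_num) (-1/2)) (affIso (1/2) (by norm_num) (7/16)))
noncomputable def nuY : ℝ ≃o ℝ := infIso 1 (supIso (affIso 2 (by norm_num) (-1/2)) (affIso (1/2) (by norm_num) (1/16)))
noncomputable def nus : ℝ ≃o ℝ := nuY * nuX

theorem muX_le {t : ℝ} (h : 3/8 ≤ t) : muX t = t := by
  simp only [muX, supIso_apply, infIso_apply, affIso_apply, RelIso.one_apply]
  rw [max_eq_left]; apply min_le_of_right_le; linarith
theorem muY_le {t : ℝ} (h : t ≤ 5/8) : muY t = t := by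
  simp only [muY, supIso_apply, infIso_apply, affIso_apply, RelIso.one_apply]
  rw [min_eq_left]; apply le_max_of_le_right; linarith
theorem muX_lt {t : ℝ} (h : t ≤ 3/8) : muX t ≤ 3/8 := by
  rw [← muX_le (le_refl (3/8))]; exact muX.monotone h

theorem mu_of_le {t : ℝ} (h : t ≤ 5/8) : mu t = max t (min (2 * t) (t / 2 + 3/16)) := by
  have : mu t = muX t := by
    rw [mu, RelIso.mul_apply, muY_le]
    rcases le_total t (3/8) with h' | h'
    · exact (muX_lt h').trans (by norm_num)
    · rw [muX_le h']; exact h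
  rw [this]
  simp only [muX, supIso_apply, infIso_apply, affIso_apply, RelIso.one_apply]
  congr 2 <;> ring
theorem mu_of_ge {t : ℝ} (h : 3/8 ≤ t) : mu t = min t (max (2 * t - 1) (t / 2 + 5/16)) := by
  rw [mu, RelIso.mul_apply, muX_le h]
  simp only [muY, supIso_apply, infIso_apply, affIso_apply, RelIso.one_apply]
  congr 2; ring

theorem mu0 {t : ℝ} (h : t ≤ 0) : mu t = t := by
  rw [mu_of_le (by linarith), max_eq_left]; apply min_le_of_left_le; linarith
theorem mu1 {t : ℝ} (h : 0 ≤ t) (h' : t ≤ 1/8) : mu t = 2 * t := by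
  rw [mu_of_le (by linarith), min_eq_left (by linarith), max_eq_right (by linarith)]
theorem mu2 {t : ℝ} (h : 1/8 ≤ t) (h' : t ≤ 3/8) : mu t = t / 2 + 3/16 := by
  rw [mu_of_le (by linarith), min_eq_right (by linarith), max_eq_right (by linarith)]
theorem mu3 {t : ℝ} (h : 3/8 ≤ t) (h' : t ≤ 5/8) : mu t = t := by
  rw [mu_of_le (by linarith), min_eq_right (by linarith), max_eq_left (by linarith)]
theorem mu4 {t : ℝ} (h : 5/8 ≤ t) (h' : t ≤ 7/8) : mu t = t / 2 + 5/16 := by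
  rw [mu_of_ge (by linarith), max_eq_right (by linarith), min_eq_right (by linarith)]
theorem mu5 {t : ℝ} (h : 7/8 ≤ t) (h' : t ≤ 1) : mu t = 2 * t - 1 := by
  rw [mu_of_ge (by linarith), max_eq_left (by linarith), min_eq_right (by linarith)]
theorem mu6 {t : ℝ} (h : 1 ≤ t) : mu t = t := by
  rw [mu_of_ge (by linarith), min_eq_left]; apply le_max_of_le_left; linarith

theorem nuX_le {t : ℝ} (h : t ≤ 1/2) : nuX t = t := by
  simp only [nuX, supIso_apply, infIso_apply, affIso_apply, RelIso.one_apply]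
  rw [max_eq_left]; apply min_le_of_left_le; linarith
theorem nuY_le {t : ℝ} (h : 1/2 ≤ t) : nuY t = t := by
  simp only [nuY, supIso_apply, infIso_apply, affIso_apply, RelIso.one_apply]
  rw [min_eq_left]; apply le_max_of_le_left; linarith
theorem nus_of_ge {t : ℝ} (h : 1/2 ≤ t) : nus t = max t (min (2 * t - 1/2) (t / 2 + 7/16)) := by
  rw [nus, RelIso.mul_apply, nuY_le]
  · simp only [nuX, supIso_apply, infIso_apply, affIso_apply, RelIso.one_apply]
    congr 2 <;> ring
  · rw [← nuX_le (le_refl (1/2))]; exact nuX.monotone h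
theorem nus_of_le {t : ℝ} (h : t ≤ 1/2) : nus t = min t (max (2 * t - 1/2) (t / 2 + 1/16)) := by
  rw [nus, RelIso.mul_apply, nuX_le h]
  simp only [nuY, supIso_apply, infIso_apply, affIso_apply, RelIso.one_apply]
  congr 2 <;> ring

theorem nus0 {t : ℝ} (h : t ≤ 1/8) : nus t = t := by
  rw [nus_of_le (by linarith), min_eq_left]; apply le_max_of_le_right; linarith
theorem nus1 {t : ℝ} (h : 1/8 ≤ t) (h' : t ≤ 3/8) : nus t = t / 2 + 1/16 := by
  rw [nus_of_le (by linarith), max_eq_right (by linarith), min_eq_right (by linarith)]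
theorem nus2 {t : ℝ} (h : 3/8 ≤ t) (h' : t ≤ 5/8) : nus t = 2 * t - 1/2 := by
  rcases le_total t (1/2) with h2 | h2
  · rw [nus_of_le (by linarith), max_eq_left (by linarith), min_eq_right (by linarith)]
  · rw [nus_of_ge (by linarith), min_eq_left (by linarith), max_eq_right (by linarith)]
theorem nus3 {t : ℝ} (h : 5/8 ≤ t) (h' : t ≤ 7/8) : nus t = t / 2 + 7/16 := by
  rw [nus_of_ge (by linarith), min_eq_right (by linarith), max_eq_right (by linarith)]
theorem nus4 {t : ℝ} (h : 7/8 ≤ t) : nus t = t := by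
  rw [nus_of_ge (by linarith), max_eq_left]; apply min_le_of_right_le; linarith

theorem mu_inH : InH mu := by
  have d8 : ∀ a : ℤ, IsDyadic ((a : ℝ) / 8) := fun a => ⟨a, 3, by norm_num⟩
  refine ⟨inF_of5 (x1 := 1/8) (x2 := 3/8) (x3 := 5/8) (x4 := 7/8) (fun t => mu0) (fun t => mu6)
    (by simpa using d8 1) (by simpa using d8 3) (by simpa using d8 5) (by simpa using d8 7)
    (by norm_num) (by norm_num) (by norm_num) (by norm_num) (by norm_num)
    ⟨1, 0, fun t h h' => ?_⟩ ⟨-1, 3/16, fun t h h' => ?_⟩ ⟨0, 0, fun t h h' => ?_⟩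
    ⟨-1, 5/16, fun t h h' => ?_⟩ ⟨1, -1, fun t h h' => ?_⟩, 1, 1/8, by norm_num, fun t ht => ?_, fun t ht => ?_⟩
  · rw [mu1 h h']; norm_num
  · rw [mu2 h h']; norm_num; ring
  · rw [mu3 h h']; norm_num
  · rw [mu4 h h']; norm_num; ring
  · rw [mu5 h h']; norm_num; ring
  · rw [mu1 ht.1 ht.2]; norm_num
  · rw [mu5 (by linarith [ht.1]) ht.2]; norm_num; ring

theorem nus_inH : InH nus := by
  have d8 : ∀ a : ℤ, IsDyadic ((a : ℝ) / 8) := fun a => ⟨a, 3, by norm_num⟩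
  refine ⟨inF_of5 (x1 := 1/8) (x2 := 3/8) (x3 := 5/8) (x4 := 7/8) (fun t h => nus0 (by linarith))
    (fun t h => nus4 (by linarith))
    (by simpa using d8 1) (by simpa using d8 3) (by simpa using d8 5) (by simpa using d8 7)
    (by norm_num) (by norm_num) (by norm_num) (by norm_num) (by norm_num)
    ⟨0, 0, fun t h h' => ?_⟩ ⟨-1, 1/16, fun t h h' => ?_⟩ ⟨1, -1/2, fun t h h' => ?_⟩
    ⟨-1, 7/16, fun t h h' => ?_⟩ ⟨0, 0, fun t h h' => ?_⟩, 0, 1/8, by norm_num, fun t ht => ?_, fun t ht => ?_⟩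
  · rw [nus0 h']; norm_num
  · rw [nus1 h h']; norm_num; ring
  · rw [nus2 h h']; norm_num; ring
  · rw [nus3 h h']; norm_num; ring
  · rw [nus4 h]; norm_num
  · rw [nus0 ht.2]; norm_num
  · rw [nus4 (by linarith [ht.1])]; norm_num

theorem mu_symm {t : ℝ} (h : 0 ≤ t) (h' : t ≤ 1) : mu (1 - t) = 1 - mu t := by
  rcases le_total t (1/8) with h1 | h1
  · rw [mu1 h h1, mu5 (by linarith) (by linarith)]; ring
  rcases le_total t (3/8) with h2 | h2
  · rw [mu2 h1 h2, mu4 (by linarith) (by linarith)]; ring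
  rcases le_total t (5/8) with h3 | h3
  · rw [mu3 h2 h3, mu3 (by linarith) (by linarith)]
  rcases le_total t (7/8) with h4 | h4
  · rw [mu4 h3 h4, mu2 (by linarith) (by linarith)]; ring
  · rw [mu5 h4 h', mu1 (by linarith) (by linarith)]; ring

theorem nus_symm (t : ℝ) : nus (1 - t) = 1 - nus t := by
  rcases le_total t (1/8) with h1 | h1
  · rw [nus0 h1, nus4 (by linarith)]
  rcases le_total t (3/8) with h2 | h2
  · rw [nus1 h1 h2, nus3 (by linarith) (by linarith)]; ring
  rcases le_total t (5/8) with h3 | h3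
  · rw [nus2 h2 h3, nus2 (by linarith) (by linarith)]; ring
  rcases le_total t (7/8) with h4 | h4
  · rw [nus3 h3 h4, nus1 (by linarith) (by linarith)]; ring
  · rw [nus4 h4, nus0 (by linarith)]

theorem nus_mu {z : ℝ} (h : 0 ≤ z) (h' : z ≤ 1/2) : nus (z + 1/2) = mu z + 1/2 := by
  rcases le_total z (1/8) with h1 | h1
  · rw [mu1 h h1, nus2 (by linarith) (by linarith)]; ring
  rcases le_total z (3/8) with h2 | h2
  · rw [mu2 h1 h2, nus3 (by linarith) (by linarith)]; ring
  · rw [mu3 h2 (by linarith), nus4 (by linarith)]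

theorem nus_mu' {z : ℝ} (h : 0 ≤ z) (h' : z ≤ 1/2) : mu (z + 1/2) = nus z + 1/2 := by
  rcases le_total z (1/8) with h1 | h1
  · rw [nus0 h1, mu3 (by linarith) (by linarith)]
  rcases le_total z (3/8) with h2 | h2
  · rw [nus1 h1 h2, mu4 (by linarith) (by linarith)]; ring
  · rw [nus2 h2 (by linarith), mu5 (by linarith) (by linarith)]; ring

theorem IsGen.of_symm {r : ℤ → ℤˣ} {j : ℤ} {g : ℝ ≃o ℝ} (h : IsGen r j mu g) (ι : Dh) {w : ℝ}
    (h0 : 0 ≤ w) (h1 : w ≤ 1) : g (pt ι (w + (j - 1) / 2)) = pt ι (mu w + (j - 1) / 2) := by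
  rcases Int.units_eq_one_or (lab r ι j) with hl | hl
  · exact h ι hl w h0 h1
  · have := h (ι * rf j) (by rw [lab_rf, hl]; simp) (1 - w) (by linarith) (by linarith)
    rw [mu_symm h0 h1, pt_mul, pt_mul, pt_rf, pt_rf] at this
    convert this using 2
    · congr 1; ring
    · ring

theorem zeta_mu {r : ℤ → ℤˣ} {g : ℝ ≃o ℝ} (h : IsGen r 1 mu g) : IsGen r 0 nus g := by
  have key : ∀ (ι : Dh) (z : ℝ), 0 ≤ z → z ≤ 1/2 → g (pt ι z) = pt ι (mu z) := by
    intro ι z h0 h1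
    have := h.of_symm ι h0 (by linarith)
    simpa using this
  intro ι _ w h0 h1
  rcases le_total (1/2) w with h2 | h2
  · have a := key ι (w - 1/2) (by linarith) (by linarith)
    have b := nus_mu (z := w - 1/2) (by linarith) (by linarith)
    have e1 : w - 1/2 + 1/2 = w := by ring
    rw [e1] at b
    have e2 : w + (((0 : ℤ) : ℝ) - 1) / 2 = w - 1/2 := by push_cast; ring
    rw [e2, a, b]; congr 1; push_cast; ring
  · have a := key (ι * rf 0) (1/2 - w) (by linarith) (by linarith)
    have b := nus_mu (z := 1/2 - w) (by linarith) (by linarith)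
    have e1 : 1/2 - w + 1/2 = 1 - w := by ring
    rw [e1, nus_symm] at b
    rw [pt_mul, pt_mul, pt_rf, pt_rf] at a
    have e2 : w + (((0 : ℤ) : ℝ) - 1) / 2 = ((0 : ℤ) : ℝ) - (1/2 - w) := by push_cast; ring
    rw [e2, a]; congr 1; push_cast; linarith

theorem chi_mu {r : ℤ → ℤˣ} {g : ℝ ≃o ℝ} (h : IsGen r 0 mu g) : IsGen r 1 nus g := by
  have key : ∀ (ι : Dh) (z : ℝ), 0 ≤ z → z ≤ 1/2 → g (pt ι z) = pt ι (nus z) := by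
    intro ι z h0 h1
    have := h.of_symm ι (w := z + 1/2) (by linarith) (by linarith)
    rw [nus_mu' h0 h1] at this
    convert this using 2
    · congr 1; push_cast; ring
    · push_cast; ring
  intro ι _ w h0 h1
  rcases le_total w (1/2) with h2 | h2
  · have a := key ι w h0 h2
    simpa using a
  · have a := key (ι * rf 1) (1 - w) (by linarith) (by linarith)
    rw [nus_symm, pt_mul, pt_mul, pt_rf, pt_rf] at a
    simpa using a

/-! ### Germs at the end points -/

def Ger (f : ℝ ≃o ℝ) (k : ℤ) : Prop :=
  ∃ ε : ℝ, 0 < ε ∧ (∀ t ∈ Set.Icc (0 : ℝ) ε, f t = 2 ^ k * t) ∧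
      ∀ t ∈ Set.Icc (1 - ε) (1 : ℝ), f t = 1 + 2 ^ k * (t - 1)

theorem Ger.mul {f g : ℝ ≃o ℝ} {k l : ℤ} (hf : Ger f k) (hg : Ger g l) : Ger (f * g) (k + l) := by
  obtain ⟨ε, he, h1, h2⟩ := hf
  obtain ⟨ε', he', h1', h2'⟩ := hg
  have p : (0 : ℝ) < 2 ^ l := by positivity
  refine ⟨min ε' (ε / 2 ^ l), by positivity, fun t ht => ?_, fun t ht => ?_⟩
  · have a := ht.2.trans (min_le_left _ _)
    have b := ht.2.trans (min_le_right _ _)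
    rw [le_div_iff₀ p] at b
    rw [RelIso.mul_apply, h1' t ⟨ht.1, a⟩, h1 _ ⟨mul_nonneg p.le ht.1, by linarith⟩,
      zpow_add₀ two_ne_zero]
    ring
  · have a : 1 - t ≤ ε' := by have := min_le_left ε' (ε / 2 ^ l); linarith [ht.1]
    have b : 1 - t ≤ ε / 2 ^ l := by have := min_le_right ε' (ε / 2 ^ l); linarith [ht.1]
    rw [le_div_iff₀ p] at b
    have c : 0 ≤ (1 - t) * 2 ^ l := mul_nonneg (by linarith [ht.2]) p.le
    rw [RelIso.mul_apply, h2' t ⟨by linarith, ht.2⟩, h2 _ ⟨by linarith, by linarith⟩,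
      zpow_add₀ two_ne_zero]
    ring

theorem Ger.inv {f : ℝ ≃o ℝ} {k : ℤ} (hf : Ger f k) : Ger f⁻¹ (-k) := by
  obtain ⟨ε, he, h1, h2⟩ := hf
  have p : (0 : ℝ) < 2 ^ k := by positivity
  refine ⟨ε * 2 ^ k, by positivity, fun t ht => ?_, fun t ht => ?_⟩
  · have := h1 (t / 2 ^ k) ⟨by have := ht.1; positivity, by rw [div_le_iff₀ p]; exact ht.2⟩
    have e : (2 : ℝ) ^ k * (t / 2 ^ k) = t := by field_simp
    rw [e] at this
    nth_rewrite 1 [← this]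
    rw [RelIso.inv_apply_self, zpow_neg]; ring
  · have a : (1 - t) / 2 ^ k ≤ ε := by rw [div_le_iff₀ p]; linarith [ht.1]
    have b : 0 ≤ (1 - t) / 2 ^ k := by have : 0 ≤ 1 - t := by linarith [ht.2]
                                       positivity
    have := h2 (1 - (1 - t) / 2 ^ k) ⟨by linarith, by linarith⟩
    have e : 1 + (2 : ℝ) ^ k * (1 - (1 - t) / 2 ^ k - 1) = t := by field_simp; ring
    rw [e] at this
    nth_rewrite 1 [← this]
    rw [RelIso.inv_apply_self, zpow_neg]; ring

theorem Ger.one : Ger 1 0 := ⟨1, by norm_num, by simp, by simp⟩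

theorem mu_ger : Ger mu 1 := by
  refine ⟨1/8, by norm_num, fun t ht => ?_, fun t ht => ?_⟩
  · rw [mu1 ht.1 ht.2]; norm_num
  · rw [mu5 (by linarith [ht.1]) ht.2]; norm_num; ring

theorem mu_zpow_ger (k : ℤ) : Ger (mu ^ k) k := by
  induction k using Int.induction_on with
  | zero => simpa using Ger.one
  | succ i ih => rw [zpow_add_one]; exact ih.mul mu_ger
  | pred i ih => rw [zpow_sub_one, sub_eq_add_neg]; exact ih.mul mu_ger.inv

theorem exists_ger_zero {H : Subgroup (ℝ ≃o ℝ)} (hH : ∀ f : ℝ ≃o ℝ, f ∈ H ↔ InH f) {ν : ℝ ≃o ℝ}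
    (hν : ν ∈ H) : ∃ (k : ℤ) (ν' : ℝ ≃o ℝ), ν' ∈ H ∧ ν = ν' * mu ^ k ∧ Ger ν' 0 := by
  obtain ⟨-, k, hk⟩ := (hH _).1 hν
  have hm : mu ∈ H := (hH _).2 mu_inH
  refine ⟨k, ν * (mu ^ k)⁻¹, H.mul_mem hν (H.inv_mem (H.zpow_mem hm k)), by group, ?_⟩
  have := Ger.mul hk (mu_zpow_ger k).inv
  simpa using this

open Dh

/-! ### Local elements -/

def Act (r : ℤ → ℤˣ) (κ : Dh) (A : Set ℤ) (O : Set ℝ) (f t : ℝ ≃o ℝ) : Prop :=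
  (∀ y, y ∉ O → f y = y) ∧ (∀ d, Sim r A d κ → ∀ y ∈ O, t (pt d y) = pt d (f y)) ∧
    ∀ x, (∀ d, Sim r A d κ → ∀ y ∈ O, x ≠ pt d y) → t x = x

theorem mem_of_off {f : ℝ ≃o ℝ} {O : Set ℝ} (h : ∀ y, y ∉ O → f y = y) {y : ℝ} (hy : y ∈ O) :
    f y ∈ O := by
  by_contra hn
  have := f.injective (h _ hn)
  rw [this] at hn; exact hn hy

theorem off_inv {f : ℝ ≃o ℝ} {O : Set ℝ} (h : ∀ y, y ∉ O → f y = y) : ∀ y, y ∉ O → f⁻¹ y = y := by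
  intro y hy
  nth_rewrite 1 [← h y hy]
  rw [RelIso.inv_apply_self]

theorem inv_fix {t : ℝ ≃o ℝ} {x : ℝ} (h : t x = x) : t⁻¹ x = x := by
  nth_rewrite 1 [← h]
  rw [RelIso.inv_apply_self]

def TT (r : ℤ → ℤˣ) (G : Subgroup (ℝ ≃o ℝ)) (κ : Dh) (A : Set ℤ) (O : Set ℝ) :
    Subgroup (ℝ ≃o ℝ) where
  carrier := {f | ∃ t ∈ G, Act r κ A O f t}
  mul_mem' := by
    rintro f g ⟨t, ht, h1, h2, h3⟩ ⟨s, hs, k1, k2, k3⟩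
    refine ⟨t * s, G.mul_mem ht hs, fun y hy => ?_, fun d hd y hy => ?_, fun x hx => ?_⟩
    · rw [RelIso.mul_apply, k1 y hy, h1 y hy]
    · rw [RelIso.mul_apply, k2 d hd y hy, h2 d hd _ (mem_of_off k1 hy)]; rfl
    · rw [RelIso.mul_apply, k3 x hx, h3 x hx]
  one_mem' := ⟨1, G.one_mem, fun _ _ => rfl, fun _ _ _ _ => rfl, fun _ _ => rfl⟩
  inv_mem' := by
    rintro f ⟨t, ht, h1, h2, h3⟩
    refine ⟨t⁻¹, G.inv_mem ht, off_inv h1, fun d hd y hy => ?_, fun x hx => inv_fix (h3 x hx)⟩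
    have := h2 d hd _ (mem_of_off (off_inv h1) hy)
    rw [RelIso.apply_inv_self] at this
    rw [← this, RelIso.inv_apply_self]

def Disj (r : ℤ → ℤˣ) (κ : Dh) (A : Set ℤ) (O : Set ℝ) : Prop :=
  ∀ d d', Sim r A d κ → Sim r A d' κ → ∀ y ∈ O, ∀ y' ∈ O, pt d y = pt d' y' → d = d'

def Mv (r : ℤ → ℤˣ) (G : Subgroup (ℝ ≃o ℝ)) (κ : Dh) (A : Set ℤ) (O : Set ℝ) : Prop :=
  ∀ s ∈ O, ∃ f ∈ TT r G κ A O, f s ≠ s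

section
variable {r : ℤ → ℤˣ} {H G : Subgroup (ℝ ≃o ℝ)} {κ : Dh} {A B : Set ℤ} {O O' : Set ℝ}

theorem TT.off {f : ℝ ≃o ℝ} (h : f ∈ TT r G κ A O) : ∀ y, y ∉ O → f y = y := by
  obtain ⟨t, ht, h1, h2, h3⟩ := h
  exact h1

theorem Act.enlarge {f t : ℝ ≃o ℝ} (h : Act r κ A O f t) (hO : O ⊆ O') (hd : Disj r κ A O') :
    Act r κ A O' f t := by
  obtain ⟨h1, h2, h3⟩ := h
  refine ⟨fun y hy => h1 y (fun h => hy (hO h)), fun d hdd y hy => ?_, fun x hx => ?_⟩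
  · by_cases hyO : y ∈ O
    · exact h2 d hdd y hyO
    · rw [h1 y hyO]
      apply h3
      intro d' hd' y' hy' he
      have := hd d d' hdd hd' y hy y' (hO hy') he
      subst this
      rw [pt_inj] at he
      exact hyO (he ▸ hy')
  · exact h3 x (fun d hdd y hy => hx d hdd y (hO hy))

theorem TT.enlarge {f : ℝ ≃o ℝ} (h : f ∈ TT r G κ A O) (hO : O ⊆ O') (hd : Disj r κ A O') :
    f ∈ TT r G κ A O' := by
  obtain ⟨t, ht, h⟩ := h
  exact ⟨t, ht, h.enlarge hO hd⟩

theorem disj_half (hO : O ⊆ Set.Ioo 0 (1/2)) : Disj r κ A O := by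
  intro d d' _ _ y hy y' hy' h
  exact eq_of_half (hO hy).1 (hO hy).2 (hO hy').1 (hO hy').2 h

theorem TT.reindex {f : ℝ ≃o ℝ} {δ : Dh} (h : f ∈ TT r G (κ * δ) {j | ix δ j ∈ A} O) :
    cj δ⁻¹ f ∈ TT r G κ A {x | pt δ⁻¹ x ∈ O} := by
  obtain ⟨t, ht, h1, h2, h3⟩ := h
  have hs : ∀ d, Sim r {j | ix δ j ∈ A} (d * δ) (κ * δ) ↔ Sim r A d κ := by
    intro d; rw [sim_mul]; simp
  refine ⟨t, ht, fun y hy => ?_, fun d hd y hy => ?_, fun x hx => ?_⟩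
  · rw [cj_apply, h1 _ hy, pt_inv_pt]
  · have := h2 _ ((hs d).2 hd) _ hy
    rw [pt_mul, pt_pt_inv] at this
    rw [this, cj_apply, inv_inv, pt_mul]
  · apply h3
    intro d hd y hy he
    have hd' : Sim r A (d * δ⁻¹) κ := by rw [← hs]; simpa using hd
    refine hx _ hd' (pt δ y) (by simpa using hy) ?_
    rw [pt_mul, pt_inv_pt, he]

theorem TT.conj {f Y : ℝ ≃o ℝ} {j : ℤ} (hj : j ∈ A) (hf : f ∈ TT r G κ A O)
    (hY : Y ∈ TT r G κ {j} O') (hO : ∀ y, Y y ∈ O → y ∈ O') :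
    Y⁻¹ * f * Y ∈ TT r G κ A {y | Y y ∈ O} := by
  obtain ⟨t, ht, h1, h2, h3⟩ := hf
  obtain ⟨u, hu, k1, k2, k3⟩ := hY
  have hs : ∀ d, Sim r A d κ → Sim r {j} d κ := fun d hd => hd.mono (by simpa using hj)
  refine ⟨u⁻¹ * t * u, G.mul_mem (G.mul_mem (G.inv_mem hu) ht) hu, fun y hy => ?_,
    fun d hd y hy => ?_, fun x hx => ?_⟩
  · simp only [RelIso.mul_apply]
    rw [h1 _ hy, RelIso.inv_apply_self]
  · simp only [RelIso.mul_apply]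
    rw [k2 d (hs d hd) y (hO y hy), h2 d hd _ hy]
    have hm : Y (Y⁻¹ (f (Y y))) ∈ O := by
      rw [RelIso.apply_inv_self]; exact mem_of_off h1 hy
    have := k2 d (hs d hd) (Y⁻¹ (f (Y y))) (hO _ hm)
    rw [RelIso.apply_inv_self] at this
    rw [← this, RelIso.inv_apply_self]
  · simp only [RelIso.mul_apply]
    rw [h3 (u x), RelIso.inv_apply_self]
    intro d hd y hy he
    have hm : Y (Y⁻¹ y) ∈ O := by rwa [RelIso.apply_inv_self]
    have := k2 d (hs d hd) (Y⁻¹ y) (hO _ hm)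
    rw [RelIso.apply_inv_self, ← he] at this
    exact hx d hd _ hm (u.injective this).symm

theorem reach {K : Subgroup (ℝ ≃o ℝ)} {p q : ℝ} (hoff : ∀ f ∈ K, ∀ y, y ∉ Set.Ioo p q → f y = y)
    (hmv : ∀ s ∈ Set.Ioo p q, ∃ f ∈ K, f s ≠ s) {y u : ℝ} (hy : y ∈ Set.Ioo p q)
    (hu : u ∈ Set.Ioo p q) : ∃ f ∈ K, u < f y := by
  set S : Set ℝ := {z | ∃ f ∈ K, f y = z} with hS
  have hne : S.Nonempty := ⟨y, 1, K.one_mem, rfl⟩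
  have hb : BddAbove S := by
    refine ⟨q, ?_⟩
    rintro z ⟨f, hf, rfl⟩
    exact (mem_of_off (hoff f hf) hy).2.le
  by_contra hcon
  push Not at hcon
  have h1 : sSup S ≤ u := by
    apply csSup_le hne
    rintro z ⟨f, hf, rfl⟩
    exact hcon f hf
  have h2 : y ≤ sSup S := le_csSup hb ⟨1, K.one_mem, rfl⟩
  obtain ⟨f, hf, hfs⟩ := hmv (sSup S) ⟨hy.1.trans_le h2, h1.trans_lt hu.2⟩
  have key : ∀ f ∈ K, ¬ sSup S < f (sSup S) := by
    intro f hf hlt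
    have h3 : f⁻¹ (sSup S) < sSup S := by
      have := (f⁻¹).strictMono hlt
      rwa [RelIso.inv_apply_self] at this
    obtain ⟨z, ⟨g, hg, rfl⟩, hz⟩ := exists_lt_of_lt_csSup hne h3
    have h4 : sSup S < f (g y) := by
      have := f.strictMono hz
      rwa [RelIso.apply_inv_self] at this
    have h5 : f (g y) ≤ sSup S := le_csSup hb ⟨f * g, K.mul_mem hf hg, rfl⟩
    linarith
  rcases lt_or_gt_of_ne hfs with h | h
  · apply key f⁻¹ (K.inv_mem hf)
    have := (f⁻¹).strictMono h
    rwa [RelIso.inv_apply_self] at this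
  · exact key f hf h

theorem reach' {K : Subgroup (ℝ ≃o ℝ)} {p q : ℝ} (hoff : ∀ f ∈ K, ∀ y, y ∉ Set.Ioo p q → f y = y)
    (hmv : ∀ s ∈ Set.Ioo p q, ∃ f ∈ K, f s ≠ s) {y u : ℝ} (hy : y ∈ Set.Ioo p q)
    (hu : u ∈ Set.Ioo p q) : ∃ f ∈ K, f y < u := by
  obtain ⟨f, hf, h⟩ := reach hoff hmv hu hy
  refine ⟨f⁻¹, K.inv_mem hf, ?_⟩
  have := (f⁻¹).strictMono h
  rwa [RelIso.inv_apply_self] at this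

theorem base_pos (c : GCtx r H G) {j : ℤ} (hj : j = 0 ∨ j = 1) {ι : Dh} (hl : lab r ι j = 1)
    {p q : ℝ} (hp : ((j : ℝ) - 1) / 2 ≤ p) (hq : q ≤ ((j : ℝ) - 1) / 2 + 1) :
    Mv r G ι {j} (Set.Ioo p q) := by
  intro s hs
  set c' : ℝ := ((j : ℝ) - 1) / 2 with hc'
  obtain ⟨ν, hν, h1, h2, h3⟩ := exists_bump (a := p - c') (s := s - c') (b := q - c')
    (by linarith) (by linarith) (by linarith [hs.1]) (by linarith [hs.2])
  obtain ⟨g, hg, hgen⟩ := c.gen j hj ν ((c.hH _).2 hν)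
  have hfa : ∀ y, (affIso 1 one_pos c' * ν * affIso 1 one_pos (-c')) y = ν (y - c') + c' := by
    intro y; simp only [RelIso.mul_apply, affIso_apply]
    have e : 1 * y + -c' = y - c' := by ring
    rw [e]; ring
  have hoff : ∀ y, y ∉ Set.Ioo p q → ν (y - c') = y - c' := by
    intro y hy
    rw [Set.mem_Ioo, not_and_or, not_lt, not_lt] at hy
    rcases hy with hy | hy
    · exact h1 _ (by linarith)
    · exact h2 _ (by linarith)
  refine ⟨affIso 1 one_pos c' * ν * affIso 1 one_pos (-c'), ⟨g, hg, fun y hy => ?_,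
    fun d hd y hy => ?_, fun x hx => ?_⟩, ?_⟩
  · rw [hfa, hoff y hy]; ring
  · rw [hfa]
    have := hgen d (by rw [hd j rfl, hl]) (y - c') (by linarith [hy.1]) (by linarith [hy.2])
    rw [← hc'] at this
    rw [← this]; congr 2; ring
  · obtain ⟨δ, w, h0, h1', hl', rfl, -⟩ := rel_cell r 1 j hj x
    rw [one_mul] at hl'
    rw [hgen δ hl' w h0 h1', ← hc']
    congr 2
    have hn : w + c' ∉ Set.Ioo p q := by
      intro hmem
      refine hx δ ?_ (w + c') hmem rfl
      intro i hi
      rw [Set.mem_singleton_iff] at hi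
      rw [hi, hl, hl']
    have := hoff _ hn
    rwa [add_sub_cancel_right] at this
  · rw [hfa]
    intro h; linarith

theorem base_mv (c : GCtx r H G) {j : ℤ} (hj : j = 0 ∨ j = 1) (ι : Dh)
    {p q : ℝ} (hp : ((j : ℝ) - 1) / 2 ≤ p) (hq : q ≤ ((j : ℝ) - 1) / 2 + 1) :
    Mv r G ι {j} (Set.Ioo p q) := by
  rcases Int.units_eq_one_or (lab r ι j) with hl | hl
  · exact base_pos c hj hl hp hq
  · intro s hs
    have hl' : lab r (ι * rf j) j = 1 := by rw [lab_rf, hl]; simp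
    obtain ⟨f, hf, hfs⟩ := base_pos c hj hl' (p := j - q) (q := j - p) (by linarith) (by linarith)
      (j - s) ⟨by linarith [hs.2], by linarith [hs.1]⟩
    have e1 : ({j} : Set ℤ) = {m | ix (rf j) m ∈ ({j} : Set ℤ)} := by
      ext m; simp only [Set.mem_singleton_iff, Set.mem_setOf_eq, ix_rf]; omega
    rw [e1] at hf
    have := TT.reindex hf
    rw [rf_inv] at this
    refine ⟨cj (rf j) f, ?_, ?_⟩
    · convert this using 2
      ext x
      simp only [rf_inv, pt_rf, Set.mem_setOf_eq, Set.mem_Ioo]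
      constructor <;> rintro ⟨h1, h2⟩ <;> constructor <;> linarith
    · rw [cj_apply, rf_inv, pt_rf, pt_rf]
      intro h; apply hfs; linarith

/-- the property `P(A)` -/
def PP (r : ℤ → ℤˣ) (G : Subgroup (ℝ ≃o ℝ)) (A : Set ℤ) : Prop :=
  ∀ (ι : Dh) (p q : ℝ), 0 ≤ p → q ≤ 1/2 → Mv r G ι A (Set.Ioo p q)

theorem PP.base (c : GCtx r H G) {j : ℤ} (hj : j = 0 ∨ j = 1) : PP r G {j} := by
  intro ι p q hp hq
  apply base_mv c hj <;> rcases hj with rfl | rfl <;> push_cast <;> linarith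

theorem Act.half {f t : ℝ ≃o ℝ} (h : Act r κ A O f t) (hO : O ⊆ Set.Ioo 0 (1/2)) {d : Dh}
    (hd : ¬ Sim r A d κ) {y : ℝ} (hy : y ∈ O) : t (pt d y) = pt d y := by
  apply h.2.2
  intro d' hd' y' hy' he
  have := eq_of_half (hO hy).1 (hO hy).2 (hO hy').1 (hO hy').2 he
  exact hd (this ▸ hd')

theorem PP.union (hA : PP r G A) (hB : PP r G B) : PP r G (A ∪ B) := by
  intro ι p q hp hq s hs
  have hO : Set.Ioo p q ⊆ Set.Ioo (0:ℝ) (1/2) := fun x hx => ⟨by linarith [hx.1], by linarith [hx.2]⟩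
  have hc : (p + s) / 2 ∈ Set.Ioo p q := ⟨by linarith [hs.1], by linarith [hs.1, hs.2]⟩
  have hd : (s + q) / 2 ∈ Set.Ioo p q := ⟨by linarith [hs.1, hs.2], by linarith [hs.2]⟩
  obtain ⟨f, hf, hfc⟩ := reach (K := TT r G ι A (Set.Ioo p q)) (fun f hf => TT.off hf)
    (hA ι p q hp hq) hc hd
  obtain ⟨g, hg, hgs⟩ := hB ι ((p + s) / 2) ((s + q) / 2) (by linarith [hc.1]) (by linarith [hd.2])
    s ⟨by linarith [hs.1], by linarith [hs.2]⟩
  have hgoff := TT.off hg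
  have hg' := TT.enlarge hg (O' := Set.Ioo p q)
    (fun x hx => ⟨by linarith [hx.1, hc.1], by linarith [hx.2, hd.2]⟩) (disj_half hO)
  have hfoff := TT.off hf
  have hgoff' := TT.off hg'
  obtain ⟨tf, htf, af⟩ := hf
  obtain ⟨tg, htg, ag⟩ := hg'
  have aff : Act r ι A (Set.Ioo p q) f⁻¹ tf⁻¹ := by
    refine ⟨off_inv af.1, fun d hd y hy => ?_, fun x hx => inv_fix (af.2.2 x hx)⟩
    have := af.2.1 d hd _ (mem_of_off (off_inv af.1) hy)
    rw [RelIso.apply_inv_self] at this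
    rw [← this, RelIso.inv_apply_self]
  have agg : Act r ι B (Set.Ioo p q) g⁻¹ tg⁻¹ := by
    refine ⟨off_inv ag.1, fun d hd y hy => ?_, fun x hx => inv_fix (ag.2.2 x hx)⟩
    have := ag.2.1 d hd _ (mem_of_off (off_inv ag.1) hy)
    rw [RelIso.apply_inv_self] at this
    rw [← this, RelIso.inv_apply_self]
  refine ⟨f * g⁻¹ * f⁻¹ * g, ⟨tf * tg⁻¹ * tf⁻¹ * tg, ?_, fun y hy => ?_, fun d hd y hy => ?_,
    fun x hx => ?_⟩, ?_⟩
  · exact G.mul_mem (G.mul_mem (G.mul_mem htf (G.inv_mem htg)) (G.inv_mem htf)) htg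
  · simp only [RelIso.mul_apply]
    rw [ag.1 y hy, aff.1 y hy, agg.1 y hy, af.1 y hy]
  · have hdA : Sim r A d ι := hd.mono Set.subset_union_left
    have hdB : Sim r B d ι := hd.mono Set.subset_union_right
    simp only [RelIso.mul_apply]
    have m1 := mem_of_off ag.1 hy
    have m2 := mem_of_off aff.1 m1
    have m3 := mem_of_off agg.1 m2
    rw [ag.2.1 d hdB y hy, aff.2.1 d hdA _ m1, agg.2.1 d hdB _ m2, af.2.1 d hdA _ m3]
  · simp only [RelIso.mul_apply]
    by_cases hex : ∃ d, ∃ y ∈ Set.Ioo p q, x = pt d y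
    · obtain ⟨d, y, hy, rfl⟩ := hex
      by_cases hdA : Sim r A d ι
      · have hdB : ¬ Sim r B d ι := by
          intro hdB
          refine hx d ?_ y hy rfl
          rintro j (hj | hj)
          · exact hdA j hj
          · exact hdB j hj
        have m2 := mem_of_off aff.1 hy
        rw [ag.half hO hdB hy, aff.2.1 d hdA y hy, agg.half hO hdB m2, af.2.1 d hdA _ m2,
          RelIso.apply_inv_self]
      · by_cases hdB : Sim r B d ι
        · have m2 := mem_of_off ag.1 hy
          rw [ag.2.1 d hdB y hy, aff.half hO hdA m2, agg.2.1 d hdB _ m2, RelIso.inv_apply_self,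
            af.half hO hdA hy]
        · rw [ag.half hO hdB hy, aff.half hO hdA hy, agg.half hO hdB hy, af.half hO hdA hy]
    · push Not at hex
      rw [ag.2.2 x (fun d _ => hex d), aff.2.2 x (fun d _ => hex d), agg.2.2 x (fun d _ => hex d),
        af.2.2 x (fun d _ => hex d)]
  · simp only [RelIso.mul_apply]
    have m : g s ∈ Set.Ioo ((p + s) / 2) ((s + q) / 2) :=
      mem_of_off hgoff ⟨by linarith [hs.1], by linarith [hs.2]⟩
    have h1 : f⁻¹ (g s) < (p + s) / 2 := by
      have := (f⁻¹).strictMono (m.2.trans hfc)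
      rwa [RelIso.inv_apply_self] at this
    rw [off_inv hgoff _ (fun h => by linarith [h.1]), RelIso.apply_inv_self]
    exact hgs

theorem PP.lemX (hA : PP r G A) {j : ℤ} (hj : j ∈ A) {p q : ℝ} {Y : ℝ ≃o ℝ}
    (hY : Y ∈ TT r G κ {j} (Set.Ioo p q)) {s : ℝ} (hs : s ∈ Set.Ioo p q) (h0 : 0 < Y s)
    (h1 : Y s < 1/2) {a b : ℝ} (ha : a < s) (hb : s < b) :
    ∃ O' ⊆ Set.Ioo a b, ∃ f ∈ TT r G κ A O', f s ≠ s := by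
  have hm := mem_of_off (TT.off hY) hs
  obtain ⟨f, hf, hfs⟩ := hA κ (max (max 0 p) (Y a)) (min (min (1/2) q) (Y b))
    (by simp) (by simp) (Y s) (by
      refine ⟨max_lt (max_lt h0 hm.1) (Y.strictMono ha), lt_min (lt_min h1 hm.2) (Y.strictMono hb)⟩)
  refine ⟨_, ?_, _, TT.conj hj hf hY ?_, ?_⟩
  · rintro y ⟨hy1, hy2⟩
    exact ⟨Y.lt_iff_lt.1 ((le_max_right _ _).trans_lt hy1),
      Y.lt_iff_lt.1 (hy2.trans_le (min_le_right _ _))⟩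
  · rintro y ⟨hy1, hy2⟩
    by_contra hn
    rw [TT.off hY y hn] at hy1 hy2
    exact hn ⟨((le_max_right _ _).trans (le_max_left _ _)).trans_lt hy1,
      hy2.trans_le ((min_le_left _ _).trans (min_le_right _ _))⟩
  · simp only [RelIso.mul_apply]
    intro h
    apply hfs
    have := congrArg Y h
    rwa [RelIso.apply_inv_self] at this

theorem PP.cross (c : GCtx r H G) (hA : PP r G A) {j : ℤ} (hj01 : j = 0 ∨ j = 1) (hj : j ∈ A) :
    PP r G {m | 2 * j - m ∈ A} := by
  intro ι p q hp hq s hs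
  have hY : ∃ Y ∈ TT r G (ι * rf j) {j} (Set.Ioo (((j : ℝ) - 1) / 2) (((j : ℝ) - 1) / 2 + 1)),
      0 < Y (j - s) ∧ Y (j - s) < 1/2 := by
    have mv := base_mv c hj01 (ι * rf j) (le_refl _) (le_refl (((j : ℝ) - 1) / 2 + 1))
    rcases hj01 with rfl | rfl
    · obtain ⟨f, hf, h⟩ := reach (K := TT r G (ι * rf 0) {0} _) (fun f hf => TT.off hf) mv
        (y := ((0 : ℤ) : ℝ) - s) (u := 0)
        ⟨by push_cast; linarith [hs.2], by push_cast; linarith [hs.1]⟩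
        ⟨by push_cast; linarith, by push_cast; linarith⟩
      refine ⟨f, hf, h, ?_⟩
      have := (mem_of_off (TT.off hf) (y := ((0 : ℤ) : ℝ) - s)
        ⟨by push_cast; linarith [hs.2], by push_cast; linarith [hs.1]⟩).2
      push_cast at this ⊢; linarith
    · obtain ⟨f, hf, h⟩ := reach' (K := TT r G (ι * rf 1) {1} _) (fun f hf => TT.off hf) mv
        (y := ((1 : ℤ) : ℝ) - s) (u := 1/2)
        ⟨by push_cast; linarith [hs.2], by push_cast; linarith [hs.1]⟩
        ⟨by push_cast; linarith, by push_cast; linarith⟩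
      refine ⟨f, hf, ?_, h⟩
      have := (mem_of_off (TT.off hf) (y := ((1 : ℤ) : ℝ) - s)
        ⟨by push_cast; linarith [hs.2], by push_cast; linarith [hs.1]⟩).1
      push_cast at this ⊢; linarith
  obtain ⟨Y, hY, hY0, hY1⟩ := hY
  have hcell : (j : ℝ) - s ∈ Set.Ioo (((j : ℝ) - 1) / 2) (((j : ℝ) - 1) / 2 + 1) := by
    rcases hj01 with rfl | rfl <;> constructor <;> push_cast <;> linarith [hs.1, hs.2]
  obtain ⟨O', hO', f, hf, hfs⟩ := hA.lemX hj hY hcell hY0 hY1 (a := j - q) (b := j - p)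
    (by linarith [hs.2]) (by linarith [hs.1])
  have e1 : A = {m | ix (rf j) m ∈ {m | 2 * j - m ∈ A}} := by
    ext m; simp [ix_rf]
  rw [e1] at hf
  have hf2 := TT.reindex hf
  refine ⟨_, TT.enlarge hf2 ?_ (disj_half (fun x hx => ⟨by linarith [hx.1], by linarith [hx.2]⟩)), ?_⟩
  · intro x hx
    have := hO' hx
    rw [rf_inv, pt_rf] at this
    exact ⟨by linarith [this.2], by linarith [this.1]⟩
  · rw [cj_apply, inv_inv, rf_inv, pt_rf, pt_rf]
    intro h; apply hfs; linarith

theorem PP.zero_one (c : GCtx r H G) : PP r G (Set.Icc 0 1) := by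
  have := (PP.base c (Or.inl rfl)).union (PP.base c (Or.inr rfl))
  convert this using 1
  ext m; simp; omega

theorem PP.pos (c : GCtx r H G) (b : ℕ) : PP r G (Set.Icc 0 (b + 1 : ℤ)) := by
  have step : ∀ b : ℕ, PP r G (Set.Icc 0 (b + 1 : ℤ)) → PP r G (Set.Icc 0 (b + 3 : ℤ)) := by
    intro b hb
    have h1 := (hb.cross c (j := 0) (Or.inl rfl) (by simp; omega)).union (PP.zero_one c)
    have h2 := (h1.cross c (j := 1) (Or.inr rfl) (by right; simp)).union (PP.zero_one c)
    convert h2 using 1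
    ext m; simp; omega
  have key : ∀ b : ℕ, PP r G (Set.Icc 0 (b + 1 : ℤ)) ∧ PP r G (Set.Icc 0 (b + 2 : ℤ)) := by
    intro b
    induction b with
    | zero =>
      refine ⟨by simpa using PP.zero_one c, ?_⟩
      have h2 := ((PP.zero_one c).cross c (j := 1) (Or.inr rfl) (by simp)).union (PP.zero_one c)
      convert h2 using 1
      ext m; simp; omega
    | succ b ih =>
      refine ⟨?_, ?_⟩
      · convert ih.2 using 2; push_cast; ring
      · convert step b ih.1 using 2; push_cast; ring
  exact (key b).1

theorem PP.Icc (c : GCtx r H G) {a b : ℤ} (ha : a ≤ 0) (hb : 1 ≤ b) : PP r G (Set.Icc a b) := by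
  have h0 : PP r G (Set.Icc a 1) := by
    obtain ⟨n, hn⟩ : ∃ n : ℕ, (n : ℤ) = -a := ⟨(-a).toNat, by omega⟩
    rcases Nat.eq_zero_or_pos n with h | h
    · have : a = 0 := by omega
      rw [this]; exact PP.zero_one c
    · obtain ⟨k, rfl⟩ : ∃ k, n = k + 1 := ⟨n - 1, by omega⟩
      have h1 := ((PP.pos c k).cross c (j := 0) (Or.inl rfl) (by simp; omega)).union (PP.zero_one c)
      convert h1 using 1
      ext m; simp; omega
  obtain ⟨k, hk⟩ : ∃ k : ℕ, (k : ℤ) = b - 1 := ⟨(b - 1).toNat, by omega⟩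
  have h1 := h0.union (PP.pos c k)
  convert h1 using 1
  ext m; simp; omega

theorem PP.ord (c : GCtx r H G) (hA : A.OrdConnected) {N : ℤ} (hN : ∀ m ∈ A, |m| ≤ N)
    (h0 : (0 : ℤ) ∈ A) (h1 : (1 : ℤ) ∈ A) : PP r G A := by
  obtain ⟨b, hb, hb'⟩ := Int.exists_greatest_of_bdd (P := fun m => m ∈ A)
    ⟨N, fun z hz => (abs_le.mp (hN z hz)).2⟩ ⟨0, h0⟩
  obtain ⟨a, ha, ha'⟩ := Int.exists_least_of_bdd (P := fun m => m ∈ A)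
    ⟨-N, fun z hz => (abs_le.mp (hN z hz)).1⟩ ⟨0, h0⟩
  have : A = Set.Icc a b := by
    apply Set.Subset.antisymm
    · intro m hm; exact ⟨ha' m hm, hb' m hm⟩
    · exact hA.out ha hb
  rw [this]
  exact PP.Icc c (ha' 0 h0) (hb' 1 h1)

theorem ordConnected_ix (hA : A.OrdConnected) (δ : Dh) : {j | ix δ j ∈ A}.OrdConnected := by
  constructor
  intro x hx y hy z hz
  simp only [Set.mem_setOf_eq] at *
  rcases δ.cases with ⟨-, -, h⟩ | ⟨-, -, h⟩ <;> rw [h] at *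
  · exact hA.out hx hy ⟨by linarith [hz.1], by linarith [hz.2]⟩
  · exact hA.out hy hx ⟨by linarith [hz.2], by linarith [hz.1]⟩

theorem push_mv (c : GCtx r H G) {p q : ℝ} (hA : A.OrdConnected) {N : ℤ} (hN : ∀ m ∈ A, |m| ≤ N)
    (hz : ∀ z ∈ Set.Ioo p q, ∀ m : ℤ, |(m : ℝ) - 2 * z| ≤ 2 → m ∈ A)
    (hD : Disj r 1 A (Set.Ioo p q)) : Mv r G 1 A (Set.Ioo p q) := by
  intro s hs
  obtain ⟨δ, y, hy0, hy1, rfl⟩ := exists_frame s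
  have hmem : ∀ j : ℤ, j = 0 ∨ j = 1 → ix δ j ∈ A := by
    intro j hj
    refine hz _ hs _ ?_
    rw [ix_pt]
    rcases hj with rfl | rfl <;> rw [abs_le] <;> push_cast <;> constructor <;> linarith
  have hP : PP r G {j | ix δ j ∈ A} := by
    refine PP.ord c (ordConnected_ix hA δ) (N := N + |ix δ 0|) (fun m hm => ?_)
      (hmem 0 (Or.inl rfl)) (hmem 1 (Or.inr rfl))
    have h1 := hN _ hm
    have h2 := ix_sub δ m 0
    rw [sub_zero] at h2
    rw [← h2]
    exact (abs_sub _ _).trans (by linarith)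
  -- small neighbourhood
  obtain ⟨η, hη, hη4, hηs⟩ : ∃ η : ℝ, 0 < η ∧ η ≤ 1/4 ∧ ∀ x, y - η < x → x < y + η →
      pt δ x ∈ Set.Ioo p q := by
    refine ⟨min (1/4) (min (pt δ y - p) (q - pt δ y)), lt_min (by norm_num)
      (lt_min (by linarith [hs.1]) (by linarith [hs.2])), min_le_left _ _, fun x h1 h2 => ?_⟩
    have a1 := (min_le_right (1/4 : ℝ) _).trans (min_le_left (pt δ y - p) (q - pt δ y))
    have a2 := (min_le_right (1/4 : ℝ) _).trans (min_le_right (pt δ y - p) (q - pt δ y))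
    have h3 : |pt δ x - pt δ y| < min (1/4) (min (pt δ y - p) (q - pt δ y)) := by
      rw [pt_sub, abs_lt]; constructor <;> linarith
    rw [abs_lt] at h3
    constructor <;> linarith
  have hY : ∃ (j : ℤ) (Y : ℝ ≃o ℝ), (j = 0 ∨ j = 1) ∧ ∃ p' q', Y ∈ TT r G (1 * δ) {j} (Set.Ioo p' q') ∧
      y ∈ Set.Ioo p' q' ∧ 0 < Y y ∧ Y y < 1/2 := by
    rcases hy0.eq_or_lt with h | h
    · have mv := base_mv c (j := 0) (Or.inl rfl) (1 * δ) (le_refl _) (le_refl ((((0 : ℤ) : ℝ) - 1) / 2 + 1))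
      have ym : y ∈ Set.Ioo ((((0 : ℤ) : ℝ) - 1) / 2) ((((0 : ℤ) : ℝ) - 1) / 2 + 1) := by
        constructor <;> push_cast <;> linarith
      obtain ⟨f, hf, hfy⟩ := reach (K := TT r G (1 * δ) {0} _) (fun f hf => TT.off hf) mv ym ym
      refine ⟨0, f, Or.inl rfl, _, _, hf, ym, by linarith, ?_⟩
      have := (mem_of_off (TT.off hf) ym).2
      push_cast at this; linarith
    rcases hy1.eq_or_lt with h' | h'
    · have mv := base_mv c (j := 1) (Or.inr rfl) (1 * δ) (le_refl _) (le_refl ((((1 : ℤ) : ℝ) - 1) / 2 + 1))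
      have ym : y ∈ Set.Ioo ((((1 : ℤ) : ℝ) - 1) / 2) ((((1 : ℤ) : ℝ) - 1) / 2 + 1) := by
        constructor <;> push_cast <;> linarith
      obtain ⟨f, hf, hfy⟩ := reach' (K := TT r G (1 * δ) {1} _) (fun f hf => TT.off hf) mv ym ym
      refine ⟨1, f, Or.inr rfl, _, _, hf, ym, ?_, by linarith⟩
      have := (mem_of_off (TT.off hf) ym).1
      push_cast at this; linarith
    · exact ⟨0, 1, Or.inl rfl, 0, 1/2, (TT r G (1 * δ) {0} (Set.Ioo 0 (1/2))).one_mem, ⟨h, h'⟩, h, h'⟩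
  obtain ⟨j, Y, hj, p', q', hY, hym, hY0, hY1⟩ := hY
  obtain ⟨O', hO', f, hf, hfs⟩ := hP.lemX (hmem j hj) hY hym hY0 hY1 (a := y - η) (b := y + η)
    (by linarith) (by linarith)
  refine ⟨_, TT.enlarge (TT.reindex hf) ?_ hD, ?_⟩
  · intro x hx
    have := hO' hx
    have h2 := hηs _ this.1 this.2
    rwa [pt_pt_inv] at h2
  · rw [cj_apply, inv_inv, pt_inv_pt]
    intro h
    rw [pt_inj] at h
    exact hfs h

theorem push_reach (c : GCtx r H G) {p q : ℝ} (hA : A.OrdConnected) {N : ℤ} (hN : ∀ m ∈ A, |m| ≤ N)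
    (hz : ∀ z ∈ Set.Ioo p q, ∀ m : ℤ, |(m : ℝ) - 2 * z| ≤ 2 → m ∈ A)
    (hD : Disj r 1 A (Set.Ioo p q)) {y u : ℝ} (hy : y ∈ Set.Ioo p q) (hu : u ∈ Set.Ioo p q) :
    ∃ f t : ℝ ≃o ℝ, t ∈ G ∧ Act r 1 A (Set.Ioo p q) f t ∧ u < f y := by
  obtain ⟨f, ⟨t, ht, h⟩, h2⟩ := reach (K := TT r G 1 A (Set.Ioo p q)) (fun f hf => TT.off hf)
    (push_mv c hA hN hz hD) hy hu
  exact ⟨f, t, ht, h, h2⟩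
end

open Dh

/-! ### Displacement -/

structure XC (r : ℤ → ℤˣ) (X : Set ℝ) (y : ℝ) (R : ℕ) : Prop where
  y0 : 0 ≤ y
  y1 : y ≤ 1 / 2
  fr : ∀ z ∈ X, ∃ κ : Dh, z = pt κ y
  R2 : 2 ≤ R
  loc : ∀ (d : Dh) (z : ℝ), (∀ m : ℤ, |(m : ℝ) - 2 * z| ≤ R → lab r d m = r m) →
    (z ∈ X ↔ pt d z ∈ X)
  synd : ∃ M : ℕ, ∀ u : ℝ, ∃ x ∈ X, u < x ∧ x < u + M

def Ew (R : ℕ) (p q : ℝ) : Set ℤ := {m | 2 * p - R ≤ m ∧ (m : ℝ) ≤ 2 * q + R}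

def IsGap (X : Set ℝ) (p q : ℝ) : Prop := p ∈ X ∧ q ∈ X ∧ p < q ∧ ∀ z, p < z → z < q → z ∉ X

section
variable {r : ℤ → ℤˣ} {H G : Subgroup (ℝ ≃o ℝ)} {X : Set ℝ} {y : ℝ} {R : ℕ} {p q p' q' : ℝ} {d d' : Dh}

theorem IsGap.eq (h : IsGap X p q) (h' : IsGap X p' q') {z : ℝ} (h1 : p < z) (h2 : z < q)
    (h1' : p' < z) (h2' : z < q') : p = p' ∧ q = q' := by
  obtain ⟨a, b, -, k⟩ := h
  obtain ⟨a', b', -, k'⟩ := h'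
  constructor
  · rcases lt_trichotomy p p' with hh | hh | hh
    · exact absurd a' (k _ hh (by linarith))
    · exact hh
    · exact absurd a (k' _ hh (by linarith))
  · rcases lt_trichotomy q q' with hh | hh | hh
    · exact absurd b (k' _ (by linarith) hh)
    · exact hh
    · exact absurd b' (k _ (by linarith) hh)

theorem XC.loc' (c : XC r X y R) (hd : Sim r (Ew R p q) d 1) {z : ℝ} (h1 : p ≤ z) (h2 : z ≤ q) :
    z ∈ X ↔ pt d z ∈ X := by
  apply c.loc
  intro m hm
  rw [abs_le] at hm
  rw [hd m ⟨by linarith, by linarith⟩, lab_one]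

theorem lab_inv_of {m : ℤ} (h : lab r d m = r m) : lab r d⁻¹ (ix d m) = r (ix d m) := by
  rw [lab] at *
  rw [ix_inv_ix, ← h, inv_e, ← mul_assoc]
  simp

/-- image of a gap under a local isometry -/
theorem XC.gap_map (c : XC r X y R) (h : IsGap X p q) (hd : Sim r (Ew R p q) d 1) :
    ∃ p' q', IsGap X p' q' ∧ Sim r (Ew R p' q') d⁻¹ 1 ∧
      ((d.e = 1 ∧ p' = d.n + p ∧ q' = d.n + q) ∨ (d.e = -1 ∧ p' = d.n - q ∧ q' = d.n - p)) := by
  obtain ⟨hp, hq, hpq, hk⟩ := h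
  have key : ∀ z, p < z → z < q → pt d z ∉ X := fun z h1 h2 hz =>
    hk z h1 h2 ((c.loc' hd h1.le h2.le).2 hz)
  have hp' := (c.loc' hd le_rfl hpq.le).1 hp
  have hq' := (c.loc' hd hpq.le le_rfl).1 hq
  have hs : ∀ p' q' : ℝ, (∀ m ∈ Ew R p' q', ix d⁻¹ m ∈ Ew R p q) → Sim r (Ew R p' q') d⁻¹ 1 := by
    intro p' q' hm m hmm
    have := lab_inv_of ((hd _ (hm m hmm)).trans (lab_one r _))
    rw [ix_ix_inv] at this
    rw [this, lab_one]
  rcases d.cases with ⟨he, h1, h2⟩ | ⟨he, h1, h2⟩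
  · rw [h1] at hp' hq'
    refine ⟨_, _, ⟨hp', hq', by linarith, fun z hz1 hz2 hz => ?_⟩, hs _ _ fun m hm => ?_,
      Or.inl ⟨he, rfl, rfl⟩⟩
    · refine key (z - d.n) (by linarith) (by linarith) ?_
      rw [h1]; simpa using hz
    · obtain ⟨k, rfl⟩ : ∃ k, m = ix d k := ⟨_, (ix_ix_inv d m).symm⟩
      rw [ix_inv_ix]
      rw [h2] at hm
      obtain ⟨a, b⟩ := hm
      push_cast at a b
      constructor <;> linarith
  · rw [h1] at hp' hq'
    refine ⟨_, _, ⟨hq', hp', by linarith, fun z hz1 hz2 hz => ?_⟩, hs _ _ fun m hm => ?_,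
      Or.inr ⟨he, rfl, rfl⟩⟩
    · refine key (d.n - z) (by linarith) (by linarith) ?_
      rw [h1]; simpa using hz
    · obtain ⟨k, rfl⟩ : ∃ k, m = ix d k := ⟨_, (ix_ix_inv d m).symm⟩
      rw [ix_inv_ix]
      rw [h2] at hm
      obtain ⟨a, b⟩ := hm
      push_cast at a b
      constructor <;> linarith

theorem XC.gap_to (c : XC r X y R) (h : IsGap X p q) (hd : Sim r (Ew R p q) d 1)
    (h' : IsGap X p' q') {z : ℝ} (h1 : p < z) (h2 : z < q) (h1' : p' < pt d z) (h2' : pt d z < q') :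
    Sim r (Ew R p' q') d⁻¹ 1 ∧
      ((d.e = 1 ∧ p' = d.n + p ∧ q' = d.n + q) ∨ (d.e = -1 ∧ p' = d.n - q ∧ q' = d.n - p)) := by
  obtain ⟨p'', q'', hg, hs, hh⟩ := c.gap_map h hd
  have : p'' = p' ∧ q'' = q' := by
    rcases d.cases with ⟨he, k1, -⟩ | ⟨he, k1, -⟩ <;> rw [k1] at h1' h2' <;>
    rcases hh with ⟨he', rfl, rfl⟩ | ⟨he', rfl, rfl⟩
    · exact hg.eq h' (z := d.n + z) (by linarith) (by linarith) h1' h2'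
    · rw [he] at he'; exact absurd he' (by decide)
    · rw [he] at he'; exact absurd he' (by decide)
    · exact hg.eq h' (z := d.n - z) (by linarith) (by linarith) h1' h2'
  obtain ⟨rfl, rfl⟩ := this
  exact ⟨hs, hh⟩

theorem XC.iso_mul (c : XC r X y R) (h : IsGap X p q) (hd : Sim r (Ew R p q) d 1)
    (h' : IsGap X p' q') (hd' : Sim r (Ew R p' q') d' 1) {z : ℝ} (h1 : p < z) (h2 : z < q)
    (h1' : p' < pt d z) (h2' : pt d z < q') : Sim r (Ew R p q) (d' * d) 1 := by
  obtain ⟨-, hh⟩ := c.gap_to h hd h' h1 h2 h1' h2'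
  intro m hm
  have hm' : ix d m ∈ Ew R p' q' := by
    obtain ⟨a, b⟩ := hm
    rcases hh with ⟨he, rfl, rfl⟩ | ⟨he, rfl, rfl⟩ <;> simp only [ix, he] <;>
      constructor <;> push_cast <;> linarith
  rw [← hd m hm, lab_mul, hd' _ hm', lab_one]; rfl

theorem XC.iso_one (c : XC r X y R) (h : IsGap X p q) (hd : Sim r (Ew R p q) d 1)
    {z : ℝ} (h1 : p < z) (h2 : z < q) (h1' : p < pt d z) (h2' : pt d z < q) : d = 1 := by
  obtain ⟨-, ⟨he, k, -⟩ | ⟨he, k, -⟩⟩ := c.gap_to h hd h h1 h2 h1' h2'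
  · have : (d.n : ℝ) = 0 := by linarith
    ext
    · simpa using this
    · rw [he]; rfl
  · exfalso
    have hn : (d.n : ℝ) = p + q := by linarith
    have hpq := h.2.2.1
    have hR : (0 : ℝ) ≤ R := Nat.cast_nonneg _
    have := hd d.n ⟨by rw [hn]; linarith, by rw [hn]; linarith⟩
    rw [lab_one, lab, ix, he] at this
    have e : 2 * d.n + ((-1 : ℤˣ) : ℤ) * d.n = d.n := by push_cast; ring
    rw [e] at this
    rcases Int.units_eq_one_or (r d.n) with h | h <;> rw [h] at this <;> exact absurd this (by decide)

theorem XC.disj (c : XC r X y R) (h : IsGap X p q) : Disj r 1 (Ew R p q) (Set.Ioo p q) := by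
  intro d d' hd hd' z hz z' hz' he
  obtain ⟨p', q', hg, hs, hh⟩ := c.gap_map h hd'
  have hm : p' < pt d' z' ∧ pt d' z' < q' := by
    obtain ⟨a, b⟩ := hz'
    rcases d'.cases with ⟨he, k1, -⟩ | ⟨he, k1, -⟩ <;> rw [k1] <;>
    rcases hh with ⟨he', rfl, rfl⟩ | ⟨he', rfl, rfl⟩
    · constructor <;> linarith
    · rw [he] at he'; exact absurd he' (by decide)
    · rw [he] at he'; exact absurd he' (by decide)
    · constructor <;> linarith
  have h1 := c.iso_mul h hd hg hs hz.1 hz.2 (he ▸ hm.1) (he ▸ hm.2)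
  have hz2 : pt (d'⁻¹ * d) z = z' := by rw [pt_mul, he, pt_inv_pt]
  have := c.iso_one h h1 hz.1 hz.2 (hz2 ▸ hz'.1) (hz2 ▸ hz'.2)
  exact (inv_mul_eq_one.mp this).symm

theorem XC.gap_mem (c : XC r X y R) (h : IsGap X p q) (hd : Sim r (Ew R p q) d 1) :
    ∃ p' q', IsGap X p' q' ∧ Sim r (Ew R p' q') d⁻¹ 1 ∧ ∀ z, p < z → z < q → p' < pt d z ∧ pt d z < q' := by
  obtain ⟨p', q', hg, hs, hh⟩ := c.gap_map h hd
  refine ⟨p', q', hg, hs, fun z a b => ?_⟩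
  rcases d.cases with ⟨he, k1, -⟩ | ⟨he, k1, -⟩ <;> rw [k1] <;>
    rcases hh with ⟨he', rfl, rfl⟩ | ⟨he', rfl, rfl⟩
  · constructor <;> linarith
  · rw [he] at he'; exact absurd he' (by decide)
  · rw [he] at he'; exact absurd he' (by decide)
  · constructor <;> linarith

/-- equivariant elements -/
def Eqv (r : ℤ → ℤˣ) (G : Subgroup (ℝ ≃o ℝ)) (X : Set ℝ) (R : ℕ) (t : ℝ ≃o ℝ) : Prop :=
  t ∈ G ∧ (∀ z ∈ X, t z = z) ∧ ∀ p q, IsGap X p q → ∀ d, Sim r (Ew R p q) d 1 → ∀ z, p < z → z < q →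
    t (pt d z) = pt d (t z)

theorem fix_mem {t : ℝ ≃o ℝ} (h : ∀ z ∈ X, t z = z) (hg : IsGap X p q) {z : ℝ} (h1 : p < z) (h2 : z < q) :
    p < t z ∧ t z < q := by
  constructor
  · rw [← h p hg.1]; exact t.strictMono h1
  · rw [← h q hg.2.1]; exact t.strictMono h2

theorem Eqv.mul {t s : ℝ ≃o ℝ} (ht : Eqv r G X R t) (hs : Eqv r G X R s) : Eqv r G X R (t * s) := by
  refine ⟨G.mul_mem ht.1 hs.1, fun z hz => ?_, fun p q hg d hd z h1 h2 => ?_⟩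
  · rw [RelIso.mul_apply, hs.2.1 z hz, ht.2.1 z hz]
  · obtain ⟨a, b⟩ := fix_mem hs.2.1 hg h1 h2
    rw [RelIso.mul_apply, hs.2.2 p q hg d hd z h1 h2, ht.2.2 p q hg d hd _ a b]; rfl

theorem XC.eqv_act (c : XC r X y R) (hg : IsGap X p q) {f t : ℝ ≃o ℝ} (ht : t ∈ G)
    (h : Act r 1 (Ew R p q) (Set.Ioo p q) f t) : Eqv r G X R t := by
  obtain ⟨a1, a2, a3⟩ := h
  refine ⟨ht, fun z hz => a3 z fun d hd w hw he => ?_, fun p' q' hg' d' hd' z h1 h2 => ?_⟩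
  · rw [he, ← c.loc' hd hw.1.le hw.2.le] at hz
    exact hg.2.2.2 w hw.1 hw.2 hz
  · by_cases hex : ∃ d, Sim r (Ew R p q) d 1 ∧ ∃ w ∈ Set.Ioo p q, z = pt d w
    · obtain ⟨d, hd, w, hw, rfl⟩ := hex
      rw [a2 d hd w hw, ← pt_mul, a2 _ (c.iso_mul hg hd hg' hd' hw.1 hw.2 h1 h2) w hw, pt_mul]
    · rw [a3 z (fun d hd w hw he => hex ⟨d, hd, w, hw, he⟩)]
      apply a3
      intro d hd w hw he
      apply hex
      obtain ⟨p'', q'', hg'', hs, hm⟩ := c.gap_mem hg' hd'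
      obtain ⟨m1, m2⟩ := hm z h1 h2
      refine ⟨d'⁻¹ * d, c.iso_mul hg hd hg'' hs hw.1 hw.2 (he ▸ m1) (he ▸ m2), w, hw, ?_⟩
      rw [pt_mul, ← he, pt_inv_pt]

def Dsp (ε : ℝ) (t : ℝ ≃o ℝ) (p q : ℝ) : Prop :=
  ∀ z, p + ε ≤ z → z ≤ q - ε → t z < p + ε ∨ q - ε < t z

theorem XC.dsp_of (c : XC r X y R) {ε : ℝ} (hε : 0 < ε) {t : ℝ ≃o ℝ} (ht : Eqv r G X R t) (h : IsGap X p q)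
    (hd : Sim r (Ew R p q) d 1) (h' : IsGap X p' q') {z : ℝ} (h1 : p < z) (h2 : z < q)
    (h1' : p' < pt d z) (h2' : pt d z < q') (hD : Dsp ε t p' q') : Dsp ε t p q := by
  obtain ⟨-, hh⟩ := c.gap_to h hd h' h1 h2 h1' h2'
  intro w k1 k2
  have e := ht.2.2 p q h d hd w (by linarith) (by linarith)
  have hw := hD (pt d w)
  rw [e] at hw
  rcases d.cases with ⟨he, k, -⟩ | ⟨he, k, -⟩ <;> rw [k, k] at hw <;>
    rcases hh with ⟨he', rfl, rfl⟩ | ⟨he', rfl, rfl⟩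
  · rcases hw (by linarith) (by linarith) with hw | hw
    · left; linarith
    · right; linarith
  · rw [he] at he'; exact absurd he' (by decide)
  · rw [he] at he'; exact absurd he' (by decide)
  · rcases hw (by linarith) (by linarith) with hw | hw
    · right; linarith
    · left; linarith

theorem XC.dsp_finite (cc : GCtx r H G) (c : XC r X y R) {ε : ℝ} (hε : 0 < ε) (Γ : Finset (ℝ × ℝ)) :
    ∃ t, Eqv r G X R t ∧ ∀ γ ∈ Γ, IsGap X γ.1 γ.2 → Dsp ε t γ.1 γ.2 := by
  classical
  induction Γ using Finset.induction_on with
  | empty => exact ⟨1, ⟨G.one_mem, fun _ _ => rfl, fun _ _ _ _ _ _ _ _ => rfl⟩, by simp⟩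
  | insert γ Γ _ ih =>
    obtain ⟨t, ht, hΓ⟩ := ih
    obtain ⟨p, q⟩ := γ
    by_cases hg : IsGap X p q
    swap
    · refine ⟨t, ht, fun γ hγ hg' => ?_⟩
      rcases Finset.mem_insert.mp hγ with rfl | h
      · exact absurd hg' hg
      · exact hΓ γ h hg'
    by_cases hD : Dsp ε t p q
    · refine ⟨t, ht, fun γ hγ hg' => ?_⟩
      rcases Finset.mem_insert.mp hγ with rfl | h
      · exact hD
      · exact hΓ γ h hg'
    have hle : p + ε ≤ q - ε := by
      by_contra hn
      exact hD fun z a b => by linarith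
    have hti : ∀ z ∈ X, t⁻¹ z = z := fun z hz => inv_fix (ht.2.1 z hz)
    have hu := fix_mem hti hg (z := q - ε) (by linarith) (by linarith)
    obtain ⟨N, hN⟩ : ∃ N : ℤ, ∀ m ∈ Ew R p q, |m| ≤ N := by
      refine ⟨⌈2 * |p| + 2 * |q| + R⌉, fun m ⟨a, b⟩ => ?_⟩
      have h1 := Int.le_ceil (2 * |p| + 2 * |q| + R)
      have h2 := neg_abs_le p
      have h3 := le_abs_self q
      have h4 := abs_nonneg p
      have h5 := abs_nonneg q
      have : |(m : ℝ)| ≤ ⌈2 * |p| + 2 * |q| + R⌉ := by rw [abs_le]; constructor <;> linarith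
      exact_mod_cast this
    have hR2 : (2 : ℝ) ≤ R := by exact_mod_cast c.R2
    obtain ⟨f, s, hs, hA, hf⟩ := push_reach cc (A := Ew R p q) (p := p) (q := q)
      ⟨fun a ha b hb z hz => ⟨ha.1.trans (by exact_mod_cast hz.1),
        le_trans (by exact_mod_cast hz.2) hb.2⟩⟩ hN
      (fun z hz m hm => by
        rw [abs_le] at hm
        exact ⟨by linarith [hz.1], by linarith [hz.2]⟩) (c.disj hg)
      (y := p + ε) (u := t⁻¹ (q - ε)) ⟨by linarith, by linarith⟩ hu
    have hse := c.eqv_act hg hs hA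
    refine ⟨t * s, ht.mul hse, fun γ hγ hg' => ?_⟩
    rcases Finset.mem_insert.mp hγ with rfl | h
    · intro z h1 h2
      right
      have e1 : s z = f z := by
        have := hA.2.1 1 (Sim.refl _ _ _) z ⟨by linarith, by linarith⟩
        simpa using this
      have e2 : t⁻¹ (q - ε) < f z := hf.trans_le (f.monotone h1)
      have e3 := t.strictMono e2
      rw [RelIso.apply_inv_self] at e3
      rw [RelIso.mul_apply, e1]; exact e3
    · intro z h1 h2
      have hfix : s z = z := by
        apply hA.2.2
        intro d hd w hw he
        exact hD (c.dsp_of hε ht hg hd hg' hw.1 hw.2 (by rw [← he]; linarith) (by rw [← he]; linarith)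
          (hΓ γ h hg'))
      rw [RelIso.mul_apply, hfix]
      exact hΓ γ h hg' z h1 h2

theorem XC.exists_gap (c : XC r X y R) {M : ℕ} (hM : ∀ u : ℝ, ∃ x ∈ X, u < x ∧ x < u + M) {z : ℝ} (hz : z ∉ X) :
    ∃ p q, IsGap X p q ∧ p < z ∧ z < q := by
  have hfin : ∀ a b : ℝ, (X ∩ Set.Icc a b).Finite := by
    intro a b
    have : (X ∩ Set.Icc a b) ⊆ (fun w : ℤ × ℤˣ => pt ⟨w.1, w.2⟩ y) '' (Set.Icc (⌊a⌋ - 1) (⌈b⌉ + 1) ×ˢ Set.univ) := by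
      rintro x ⟨hx, ha, hb⟩
      obtain ⟨κ, rfl⟩ := c.fr x hx
      refine ⟨(κ.n, κ.e), ⟨?_, trivial⟩, rfl⟩
      have h1 := Int.floor_le a
      have h2 := Int.le_ceil b
      have y0 := c.y0
      have y1 := c.y1
      have k : (⌊a⌋ : ℝ) - 1 ≤ κ.n ∧ (κ.n : ℝ) ≤ ⌈b⌉ + 1 := by
        rcases κ.cases with ⟨-, k, -⟩ | ⟨-, k, -⟩ <;> rw [k] at ha hb <;> constructor <;> linarith
      constructor
      · exact_mod_cast k.1
      · exact_mod_cast k.2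
    exact Set.Finite.subset ((Set.Finite.prod (Set.finite_Icc _ _) (Set.toFinite _)).image _) this
  obtain ⟨x1, hx1, a1, b1⟩ := hM (z - M)
  obtain ⟨x2, hx2, a2, b2⟩ := hM z
  obtain ⟨p, hp, hp'⟩ := Set.exists_max_image _ id (hfin (z - M) z) ⟨x1, hx1, by linarith, by linarith⟩
  obtain ⟨q, hq, hq'⟩ := Set.exists_min_image _ id (hfin z (z + M)) ⟨x2, hx2, by linarith, by linarith⟩
  have hpz : p < z := lt_of_le_of_ne hp.2.2 (fun h => hz (h ▸ hp.1))
  have hqz : z < q := lt_of_le_of_ne hq.2.1 (fun h => hz (h ▸ hq.1))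
  refine ⟨p, q, ⟨hp.1, hq.1, by linarith, fun w h1 h2 hw => ?_⟩, hpz, hqz⟩
  rcases le_total w z with h | h
  · have := hp' w ⟨hw, by linarith [hp.2.1], h⟩
    simp only [id] at this; linarith
  · have := hq' w ⟨hw, h, by linarith [hq.2.2]⟩
    simp only [id] at this; linarith

theorem XC.dsp_all (cc : GCtx r H G) (c : XC r X y R) {ε : ℝ} (hε : 0 < ε) :
    ∃ t, Eqv r G X R t ∧ ∀ p q, IsGap X p q → Dsp ε t p q := by
  classical
  obtain ⟨M, hM⟩ := c.synd
  let N : ℕ := R + 2 * M + 1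
  let Rel : ((Set.Icc (-(N : ℤ)) N → ℤˣ) × ℤˣ) → ℝ × ℝ → Prop := fun τ γ =>
    IsGap X γ.1 γ.2 ∧ ∃ κ : Dh, γ.1 = pt κ y ∧ κ.e = τ.2 ∧ ∀ j : Set.Icc (-(N : ℤ)) N, lab r κ (j : ℤ) = τ.1 j
  have hch : ∀ τ, ∃ γ, (∃ γ', Rel τ γ') → Rel τ γ := by
    intro τ
    by_cases h : ∃ γ', Rel τ γ'
    · exact ⟨h.choose, fun _ => h.choose_spec⟩
    · exact ⟨(0, 0), fun h' => absurd h' h⟩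
  choose F hF using hch
  have : Fintype ((Set.Icc (-(N : ℤ)) N → ℤˣ) × ℤˣ) := Fintype.ofFinite _
  obtain ⟨t, ht, hΓ⟩ := c.dsp_finite cc hε (Finset.univ.image F)
  refine ⟨t, ht, fun p q hg => ?_⟩
  obtain ⟨κ, hκ⟩ := c.fr p hg.1
  let τ : ((Set.Icc (-(N : ℤ)) N → ℤˣ) × ℤˣ) := (fun j => lab r κ (j : ℤ), κ.e)
  obtain ⟨hg', κ', hκ', he, hl⟩ := hF τ ⟨(p, q), hg, κ, hκ, rfl, fun _ => rfl⟩
  have hD := hΓ (F τ) (Finset.mem_image_of_mem _ (Finset.mem_univ _)) hg'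
  have hqM : q < p + M := by
    obtain ⟨x, hx, h1, h2⟩ := hM p
    by_contra hn
    exact hg.2.2.2 x h1 (by linarith) hx
  have hd : Sim r (Ew R p q) (κ' * κ⁻¹) 1 := by
    intro m ⟨ha, hb⟩
    have h1 : |(ix κ⁻¹ m : ℝ) - 2 * pt κ⁻¹ p| ≤ R + 2 * M := by
      rw [ix_pt, abs_le]; constructor <;> linarith
    rw [hκ, pt_inv_pt, abs_le] at h1
    have hN : ((N : ℕ) : ℝ) = R + 2 * M + 1 := by simp [N]
    have y0 := c.y0
    have y1 := c.y1
    have h2 : -((N : ℤ) : ℝ) ≤ (ix κ⁻¹ m : ℝ) ∧ (ix κ⁻¹ m : ℝ) ≤ ((N : ℤ) : ℝ) := by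
      push_cast; rw [hN]; constructor <;> linarith
    have h3 : ix κ⁻¹ m ∈ Set.Icc (-(N : ℤ)) N := ⟨by exact_mod_cast h2.1, by exact_mod_cast h2.2⟩
    rw [lab_mul, hl ⟨_, h3⟩]
    simp only [τ]
    rw [← lab_mul, mul_inv_cancel]
  have hde : (κ' * κ⁻¹).e = 1 := by
    rw [mul_e, inv_e, he]; simp [τ]
  have hpp : pt (κ' * κ⁻¹) p = (F τ).1 := by rw [pt_mul, hκ, pt_inv_pt, hκ']
  have hpt : ∀ w, pt (κ' * κ⁻¹) (p + w) = (F τ).1 + w := by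
    intro w
    rw [← hpp]
    rcases (κ' * κ⁻¹).cases with ⟨-, k, -⟩ | ⟨h, -, -⟩
    · rw [k, k]; ring
    · rw [hde] at h; exact absurd h (by decide)
  have hpq := hg.2.2.1
  have hpq' := hg'.2.2.1
  obtain ⟨w, hw0, hw1, hw2⟩ : ∃ w : ℝ, 0 < w ∧ w < q - p ∧ w < (F τ).2 - (F τ).1 := by
    obtain ⟨w, h1, h2⟩ := exists_between (a₁ := (0 : ℝ)) (a₂ := min (q - p) ((F τ).2 - (F τ).1))
      (lt_min (by linarith) (by linarith))
    exact ⟨w, h1, h2.trans_le (min_le_left _ _), h2.trans_le (min_le_right _ _)⟩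
  refine c.dsp_of hε ht hg hd hg' (z := p + w) (by linarith) (by linarith) ?_ ?_ hD <;> rw [hpt] <;> linarith

theorem commute_of_fix {a b : ℝ ≃o ℝ} (S : Set ℝ) (ha : ∀ z ∈ S, a z = z) (hb : ∀ z, z ∉ S → b z = z) :
    Commute a b := by
  ext z
  simp only [RelIso.mul_apply]
  by_cases hz : z ∈ S
  · rw [ha z hz]
    by_cases h : b z ∈ S
    · exact ha _ h
    · have := b.injective (hb _ h)
      rw [this] at h; exact absurd hz h
  · rw [hb z hz]
    by_cases h : a z ∈ S
    · have := a.injective (ha _ h)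
      rw [this] at h; exact absurd h hz
    · exact (hb _ h).symm

theorem GCtx.displace (cc : GCtx r H G) {n1 n2 : ℝ ≃o ℝ} (hn1 : n1 ∈ G) (hn2 : n2 ∈ G) {x ε : ℝ} (hε : 0 < ε)
    (h1 : ∀ z, |z - x| < ε → n1 z = z) (h2 : ∀ z, |z - x| < ε → n2 z = z) :
    ∃ t ∈ G, t x = x ∧ ∀ a b, (a = n1 ∨ a = n2) → (b = n1 ∨ b = n2) → Commute a (t * b * t⁻¹) := by
  wlog hε1 : ε ≤ 1 generalizing ε
  · exact this (ε := 1) one_pos (fun z hz => h1 z (by linarith)) (fun z hz => h2 z (by linarith)) le_rfl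
  obtain ⟨ι0, y, y0, y1, rfl⟩ := exists_frame x
  obtain ⟨R1, hR1⟩ := (cc.locl hn1).2 2
  obtain ⟨R2, hR2⟩ := (cc.locl hn2).2 2
  set R0 := max R1 R2 with hR0
  let X : Set ℝ := {z | ∃ ι, SimN r R0 ι ι0 ∧ z = pt ι y}
  have hx : pt ι0 y ∈ X := ⟨ι0, fun _ _ => rfl, rfl⟩
  have hS : ∀ n : ℝ ≃o ℝ, (n = n1 ∨ n = n2) → ∀ z, (∃ x ∈ X, |z - x| < ε) → n z = z := by
    rintro n hn z ⟨x, ⟨ι, hι, rfl⟩, hz⟩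
    obtain ⟨w, rfl⟩ : ∃ w, z = pt ι w := ⟨_, (pt_pt_inv ι z).symm⟩
    rw [pt_sub] at hz
    have hw : |w| ≤ 2 := by
      rw [abs_lt] at hz; rw [abs_le]; constructor <;> linarith
    have hz' : |pt ι0 w - pt ι0 y| < ε := by rwa [pt_sub]
    have e : cj ι n w = cj ι0 n w ∧ n (pt ι0 w) = pt ι0 w := by
      rcases hn with rfl | rfl
      · exact ⟨hR1 ι ι0 (hι.mono (le_max_left _ _)) w hw, h1 _ hz'⟩
      · exact ⟨hR2 ι ι0 (hι.mono (le_max_right _ _)) w hw, h2 _ hz'⟩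
    rw [← pt_cj, e.1, cj_apply, e.2, pt_inv_pt]
  have c : XC r X y (R0 + 3) := by
    refine ⟨y0, y1, fun z ⟨ι, _, h⟩ => ⟨ι, h⟩, by omega, fun d z hd => ?_, ?_⟩
    · constructor
      · rintro ⟨ι, hι, rfl⟩
        refine ⟨d * ι, fun j hj => ?_, (pt_mul _ _ _).symm⟩
        rw [lab_mul, hd, ← hι j hj]; rfl
        rw [ix_pt]
        have hj' : |(j : ℝ)| ≤ R0 := by exact_mod_cast hj
        rw [abs_le] at *; push_cast; constructor <;> linarith
      · rintro ⟨ι, hι, he⟩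
        refine ⟨d⁻¹ * ι, fun j hj => ?_, by rw [pt_mul, ← he, pt_inv_pt]⟩
        obtain ⟨k, hk⟩ : ∃ k, ix ι j = ix d k := ⟨_, (ix_ix_inv d _).symm⟩
        rw [lab_mul, hk, lab_inv_of, ← hk, ← hι j hj]; rfl
        apply hd
        rw [← ix_pt d, ← hk, he, ix_pt]
        have hj' : |(j : ℝ)| ≤ R0 := by exact_mod_cast hj
        rw [abs_le] at *; push_cast; constructor <;> linarith
    · obtain ⟨M, hM⟩ := cc.lab.recu R0 ι0 1
      refine ⟨M + 4, fun u => ?_⟩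
      obtain ⟨ι, he, ha, hb, hl⟩ := hM (⌊u⌋ + 1)
      refine ⟨pt ι y, ⟨ι, hl, rfl⟩, ?_⟩
      have a1 := Int.floor_le u
      have a2 := Int.lt_floor_add_one u
      have ha' : (⌊u⌋ : ℝ) + 1 ≤ ι.n := by exact_mod_cast ha
      have hb' : (ι.n : ℝ) ≤ ⌊u⌋ + 1 + M := by exact_mod_cast hb
      rw [pt, he]; push_cast
      constructor <;> linarith
  obtain ⟨t, ht, hD⟩ := c.dsp_all cc hε
  obtain ⟨M, hM⟩ := c.synd
  refine ⟨t⁻¹, G.inv_mem ht.1, inv_fix (ht.2.1 _ hx), fun a b ha hb => ?_⟩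
  refine commute_of_fix {z | ∃ x ∈ X, |z - x| < ε} (hS a ha) fun z hz => ?_
  have hzX : z ∉ X := fun h => hz ⟨z, h, by simpa using hε⟩
  obtain ⟨p, q, hg, hp, hq⟩ := c.exists_gap hM hzX
  obtain ⟨m1, m2⟩ := fix_mem ht.2.1 hg hp hq
  have k1 : p + ε ≤ z := by
    by_contra hn
    exact hz ⟨p, hg.1, by rw [abs_lt]; constructor <;> linarith⟩
  have k2 : z ≤ q - ε := by
    by_contra hn
    exact hz ⟨q, hg.2.1, by rw [abs_lt]; constructor <;> linarith⟩
  have hfix : b (t z) = t z := by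
    apply hS b hb
    rcases hD p q hg z k1 k2 with h | h
    · exact ⟨p, hg.1, by rw [abs_lt]; constructor <;> linarith⟩
    · exact ⟨q, hg.2.1, by rw [abs_lt]; constructor <;> linarith⟩
  rw [RelIso.mul_apply, RelIso.mul_apply, inv_inv, hfix, RelIso.inv_apply_self]

open Filter Topology in
theorem GCtx.nk (cc : GCtx r H G) {E : Type} [Group E] {π : E →* G} {τ : E → ℝ} (h : HQ π τ) (x : ℝ)
    {n k : G} (hn : ∀ᶠ z in 𝓝 x, (n : ℝ ≃o ℝ) z = z) (hk : (k : ℝ ≃o ℝ) x = x) :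
    AddP π τ n k ∧ AddP π τ k n := by
  have hconj : ∀ (a t : G), (∀ᶠ z in 𝓝 x, (a : ℝ ≃o ℝ) z = z) → (t : ℝ ≃o ℝ) x = x →
      ∀ᶠ z in 𝓝 x, ((t * a * t⁻¹ : G) : ℝ ≃o ℝ) z = z := by
    intro a t ha ht
    have hc : Tendsto (((t : ℝ ≃o ℝ)⁻¹ : ℝ ≃o ℝ) : ℝ → ℝ) (𝓝 x) (𝓝 x) := by
      have := ((t : ℝ ≃o ℝ)⁻¹).continuous.tendsto x
      rwa [inv_fix ht] at this
    filter_upwards [hc.eventually ha] with z hz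
    rw [Subgroup.coe_mul, Subgroup.coe_mul, Subgroup.coe_inv, RelIso.mul_apply, RelIso.mul_apply, hz,
      RelIso.apply_inv_self]
  let N : Set G := {a | ∀ᶠ z in 𝓝 x, (a : ℝ ≃o ℝ) z = z}
  have hmul : ∀ a ∈ N, ∀ b ∈ N, a * b ∈ N := by
    intro a ha b hb
    change ∀ᶠ z in 𝓝 x, ((a * b : G) : ℝ ≃o ℝ) z = z
    filter_upwards [ha, hb] with z h1 h2
    rw [Subgroup.coe_mul, RelIso.mul_apply, h2, h1]
  refine h.add_nk N hmul (Eventually.of_forall fun z => rfl) ?_ k ?_ n hn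
  · intro e f he hf
    refine h.add_of_double N hmul ?_ he hf
    intro a ha b hb
    obtain ⟨ε1, hε1, h1⟩ := Metric.eventually_nhds_iff.mp ha
    obtain ⟨ε2, hε2, h2⟩ := Metric.eventually_nhds_iff.mp hb
    obtain ⟨t, ht, htx, hcm⟩ := cc.displace a.2 b.2 (x := x) (lt_min hε1 hε2)
      (fun z hz => h1 (hz.trans_le (min_le_left _ _))) (fun z hz => h2 (hz.trans_le (min_le_right _ _)))
    have up : ∀ a b : G, Commute (a : ℝ ≃o ℝ) (t * b * t⁻¹) → Commute a (⟨t, ht⟩ * b * ⟨t, ht⟩⁻¹) :=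
      fun a b hab => Subtype.ext hab
    refine ⟨⟨t, ht⟩, hconj a _ ha htx, hconj b _ hb htx, up _ _ (hcm _ _ ?_ ?_), up _ _ (hcm _ _ ?_ ?_),
      up _ _ (hcm _ _ ?_ ?_), up _ _ (hcm _ _ ?_ ?_)⟩ <;> simp
  · intro a ha
    have := hconj a k⁻¹ ha (inv_fix hk)
    rwa [inv_inv] at this
end

open Dh

/-! ### Additivity on the whole group -/

theorem nus_ger : Ger nus 0 := by
  refine ⟨1/8, by norm_num, fun t ht => ?_, fun t ht => ?_⟩
  · rw [nus0 ht.2]; simp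
  · rw [nus4 (by linarith [ht.1])]; simp

section
variable {r : ℤ → ℤˣ} {H G : Subgroup (ℝ ≃o ℝ)}

theorem GCtx.gen_all (c : GCtx r H G) (K : Subgroup (ℝ ≃o ℝ))
    (h : ∀ j : ℤ, j = 0 ∨ j = 1 → ∀ ν g, ν ∈ H → Ger ν 0 → IsGen r j ν g → g ∈ K) : G ≤ K := by
  refine c.ind.trans ((Subgroup.closure_le K).2 ?_)
  rintro g ⟨j, hj, ν, hν, hg⟩
  let S : Subgroup (ℝ ≃o ℝ) :=
    { carrier := {ν | ν ∈ H ∧ ∀ g, IsGen r j ν g → g ∈ K}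
      mul_mem' := by
        rintro a b ⟨ha, ha'⟩ ⟨hb, hb'⟩
        refine ⟨H.mul_mem ha hb, fun g hg => ?_⟩
        obtain ⟨g1, -, h1⟩ := c.gen j hj a ha
        obtain ⟨g2, -, h2⟩ := c.gen j hj b hb
        rw [hg.unique hj (h1.mul h2 ((c.hH _).1 hb))]
        exact K.mul_mem (ha' _ h1) (hb' _ h2)
      one_mem' := ⟨H.one_mem, fun g hg => by rw [hg.unique hj (IsGen.one r j)]; exact K.one_mem⟩
      inv_mem' := by
        rintro a ⟨ha, ha'⟩
        refine ⟨H.inv_mem ha, fun g hg => ?_⟩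
        obtain ⟨g1, -, h1⟩ := c.gen j hj a ha
        rw [hg.unique hj (h1.inv ((c.hH _).1 (H.inv_mem ha)))]
        exact K.inv_mem (ha' _ h1) }
  have hn : nus ∈ H := (c.hH _).2 nus_inH
  have hmu : mu ∈ S := by
    refine ⟨(c.hH _).2 mu_inH, fun g hg => ?_⟩
    rcases hj with rfl | rfl
    · exact h 1 (Or.inr rfl) _ _ hn nus_ger (chi_mu hg)
    · exact h 0 (Or.inl rfl) _ _ hn nus_ger (zeta_mu hg)
  obtain ⟨k, ν', hν', rfl, hger⟩ := exists_ger_zero c.hH hν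
  have : ν' * mu ^ k ∈ S := S.mul_mem ⟨hν', fun g hg => h j hj _ _ hν' hger hg⟩ (S.zpow_mem hmu k)
  exact this.2 g hg

open Filter Topology in
theorem GCtx.add_of_trivial (c : GCtx r H G) {E : Type} [Group E] {π : E →* G} {τ : E → ℝ}
    (hq : HQ π τ) {g h : G} {u1 u2 : ℝ} (hu : u1 < u2)
    (hg : ∀ z, u1 < z → z < u2 → (g : ℝ ≃o ℝ) z = z) : AddP π τ g h := by
  obtain ⟨y, hy, hhy⟩ := c.exists_fixed h.2 u2
  obtain ⟨⟨Bg, hBg⟩, -⟩ := c.locl g.2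
  set q := y + 1 with hqd
  obtain ⟨x, hx, hgx⟩ := c.exists_fixed g.2 q
  obtain ⟨x', hx', hghx⟩ := c.exists_fixed (g * h).2 (q + |Bg|)
  set x'' := (g : ℝ ≃o ℝ)⁻¹ x' with hx''
  have hx''q : q < x'' := by
    have h1 := hBg x''
    rw [hx'', RelIso.apply_inv_self, ← hx'', abs_le] at h1
    have := le_abs_self Bg
    linarith
  have hBg0 := abs_nonneg Bg
  -- bounds
  set Z := |u1| + |q| with hZ
  have hZO : ∀ z ∈ Set.Ioo u1 q, |z| ≤ Z := by
    intro z hz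
    rw [abs_le]
    have h1 := neg_abs_le u1
    have h2 := le_abs_self q
    have h3 := abs_nonneg u1
    have h4 := abs_nonneg q
    constructor <;> linarith [hz.1, hz.2]
  have hZ0 : 0 ≤ Z := by positivity
  set C := |x| + |x'| + |x''| + 1 with hC
  have hC0 : 0 ≤ C := by positivity
  obtain ⟨B, hB⟩ := exists_nat_ge (2 * Z + C + 2)
  obtain ⟨N0, hN0⟩ := c.lab.nonper B
  set N : ℕ := N0 + 2 * B with hN
  let A : Set ℤ := Set.Icc (-(N : ℤ)) N
  have hptn : ∀ (d : Dh) (z : ℝ), |(d.n : ℝ)| ≤ |pt d z| + |z| := by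
    intro d z
    rcases d.cases with ⟨-, k, -⟩ | ⟨-, k, -⟩ <;> rw [k]
    · have := abs_sub (d.n + z) z
      simpa using this
    · have := abs_add_le (d.n - z) z
      simpa using this
  have hdisj : Disj r 1 A (Set.Ioo u1 q) := by
    intro d d' hd hd' z hz z' hz' he
    have hδ : pt (d'⁻¹ * d) z = z' := by rw [pt_mul, he, pt_inv_pt]
    have hn : |((d'⁻¹ * d).n : ℝ)| ≤ B := by
      refine (hptn _ z).trans ?_
      rw [hδ]
      linarith [hZO z hz, hZO z' hz']
    have hn' : |(d'⁻¹ * d).n| ≤ B := by exact_mod_cast hn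
    have hlab : ∀ j, |j| ≤ (N0 : ℤ) → Dh.lab r (d'⁻¹ * d) j = r j := by
      intro j hj
      have hj1 : j ∈ A := by
        rw [abs_le] at hj
        simp only [A, hN, Set.mem_Icc]; push_cast; constructor <;> linarith [hj.1, hj.2]
      have hj2 : ix (d'⁻¹ * d) j ∈ A := by
        rw [abs_le] at hj hn'
        rcases (d'⁻¹ * d).cases with ⟨-, -, k⟩ | ⟨-, -, k⟩ <;> rw [k] <;>
          simp only [A, hN, Set.mem_Icc] <;> push_cast <;> constructor <;> linarith [hj.1, hj.2, hn'.1, hn'.2]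
      have e : d = d' * (d'⁻¹ * d) := by group
      have k1 := hd j hj1
      rw [e, lab_mul, hd' _ hj2, lab_one, lab_one] at k1
      exact k1
    rcases hN0 (d'⁻¹ * d) hlab with h1 | h1
    · exact (inv_mul_eq_one.mp h1).symm
    · omega
  obtain ⟨s, hs1, hs2⟩ := exists_between hu
  obtain ⟨f, φ0, hφG, hA, hf⟩ := push_reach c (A := A) (p := u1) (q := q) Set.ordConnected_Icc
    (N := N) (fun m hm => abs_le.mpr hm)
    (fun z hz m hm => by
      have h1 := abs_le.mp (hZO z hz)
      rw [abs_le] at hm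
      have h2 : (-(N : ℤ) : ℝ) ≤ m ∧ (m : ℝ) ≤ (N : ℤ) := by
        rw [hN]; push_cast
        have : (0 : ℝ) ≤ N0 := Nat.cast_nonneg _
        constructor <;> linarith
      exact ⟨by exact_mod_cast h2.1, by exact_mod_cast h2.2⟩) hdisj
    (y := s) (u := y) ⟨hs1, by linarith⟩ ⟨by linarith, by linarith⟩
  have hfix : ∀ w, |w| < C → q < w → φ0 w = w := by
    intro w hw hqw
    apply hA.2.2
    intro d hd z hz he
    have hlab : ∀ j, |j| ≤ (N0 : ℤ) → Dh.lab r d j = r j := by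
      intro j hj
      have hj1 : j ∈ A := by
        rw [abs_le] at hj
        simp only [A, hN, Set.mem_Icc]; push_cast; constructor <;> linarith [hj.1, hj.2]
      rw [hd j hj1, lab_one]
    rcases hN0 d hlab with h1 | h1
    · rw [h1, pt_one] at he
      linarith [hz.2]
    · have h2 := hptn d z
      rw [← he] at h2
      have h3 : (B : ℝ) < |(d.n : ℝ)| := by exact_mod_cast h1
      linarith [hZO z hz]
  have hev : ∀ w, |w| < C → q < w → ∀ᶠ z in 𝓝 w, φ0 z = z := by
    intro w hw hqw
    have h1 : ∀ᶠ z in 𝓝 w, |z| < C := (continuous_abs.tendsto w).eventually (eventually_lt_nhds hw)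
    filter_upwards [h1, eventually_gt_nhds hqw] with z a b using hfix z a b
  have hinv : ∀ w, (∀ᶠ z in 𝓝 w, φ0 z = z) → ∀ᶠ z in 𝓝 w, φ0⁻¹ z = z := by
    intro w hw
    filter_upwards [hw] with z hz using inv_fix hz
  have hax := abs_nonneg x
  have hax' := abs_nonneg x'
  have hax'' := abs_nonneg x''
  have e1 := hev x (by linarith) hx
  have e2 := hev x' (by linarith) (by linarith)
  have e3 := hev x'' (by linarith) hx''q
  let φ : G := ⟨φ0, hφG⟩
  let g1 : G := g * φ * g⁻¹ * φ⁻¹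
  let g2 : G := φ * g * φ⁻¹
  have hgg : g = g1 * g2 := by simp only [g1, g2]; group
  have triv : ∀ w w', (g : ℝ ≃o ℝ)⁻¹ w = w' → (∀ᶠ z in 𝓝 w, φ0 z = z) → (∀ᶠ z in 𝓝 w', φ0 z = z) →
      ∀ᶠ z in 𝓝 w, (g1 : ℝ ≃o ℝ) z = z := by
    intro w w' hw h1 h2
    have hc : Tendsto (((g : ℝ ≃o ℝ)⁻¹ : ℝ ≃o ℝ) : ℝ → ℝ) (𝓝 w) (𝓝 w') := by
      have := ((g : ℝ ≃o ℝ)⁻¹).continuous.tendsto w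
      rwa [hw] at this
    filter_upwards [hinv w h1, hc.eventually h2] with z a b
    simp only [g1, Subgroup.coe_mul, Subgroup.coe_inv, RelIso.mul_apply]
    change (g : ℝ ≃o ℝ) (φ0 ((g : ℝ ≃o ℝ)⁻¹ (φ0⁻¹ z))) = z
    rw [a, b, RelIso.apply_inv_self]
  rw [hgg]
  apply hq.add_split
  · refine (c.nk hq x (triv x x (inv_fix hgx) e1 e1) ?_).1
    simp only [g2, Subgroup.coe_mul, Subgroup.coe_inv, RelIso.mul_apply]
    change φ0 ((g : ℝ ≃o ℝ) (φ0⁻¹ x)) = x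
    rw [inv_fix e1.self_of_nhds, hgx, e1.self_of_nhds]
  · have ht := triv x' x'' rfl e2 e3
    refine (c.nk hq x' ht ?_).1
    have h1 : ((g1 * (g2 * h) : G) : ℝ ≃o ℝ) x' = x' := by
      rw [← mul_assoc, ← hgg]; exact hghx
    rw [Subgroup.coe_mul, RelIso.mul_apply] at h1
    exact (g1 : ℝ ≃o ℝ).injective (h1.trans ht.self_of_nhds.symm)
  · refine (c.nk hq y ?_ hhy).1
    have hφz : ∀ z ∈ Set.Ioo u1 q, φ0 z = f z := by
      intro z hz
      have := hA.2.1 1 (Sim.refl _ _ _) z hz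
      simpa using this
    have hyi : u1 < φ0⁻¹ y ∧ φ0⁻¹ y < u2 := by
      constructor
      · have h1 : f⁻¹ y ∈ Set.Ioo u1 q := mem_of_off (off_inv hA.1) ⟨by linarith, by linarith⟩
        have h2 : φ0⁻¹ y = f⁻¹ y := by
          have k : φ0 (f⁻¹ y) = y := by rw [hφz _ h1, RelIso.apply_inv_self]
          calc φ0⁻¹ y = φ0⁻¹ (φ0 (f⁻¹ y)) := by rw [k]
            _ = f⁻¹ y := RelIso.inv_apply_self _ _
        rw [h2]; exact h1.1
      · have h1 : y < φ0 s := by rw [hφz s ⟨hs1, by linarith⟩]; exact hf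
        have := (φ0⁻¹).strictMono h1
        rw [RelIso.inv_apply_self] at this
        linarith
    have hc := (φ0⁻¹).continuous.tendsto y
    filter_upwards [hc.eventually (eventually_gt_nhds hyi.1), hc.eventually (eventually_lt_nhds hyi.2)]
      with z a b
    simp only [g2, Subgroup.coe_mul, Subgroup.coe_inv, RelIso.mul_apply]
    change φ0 ((g : ℝ ≃o ℝ) (φ0⁻¹ z)) = z
    rw [hg _ a b, RelIso.apply_inv_self]

theorem GCtx.add_all (c : GCtx r H G) {E : Type} [Group E] {π : E →* G} {τ : E → ℝ}
    (hq : HQ π τ) (g h : G) : AddP π τ g h := by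
  have key : G ≤ hq.addSub.map G.subtype := by
    refine c.gen_all _ fun j hj ν g hν hger hg => ?_
    have hgG := c.gen_mem hj hν hg
    refine ⟨⟨g, hgG⟩, fun k => ?_, rfl⟩
    obtain ⟨ε, hε, h1, -⟩ := hger
    -- a frame with label one
    obtain ⟨ι, hι⟩ : ∃ ι : Dh, Dh.lab r ι j = 1 := by
      rcases Int.units_eq_one_or (Dh.lab r 1 j) with h | h
      · exact ⟨1, h⟩
      · exact ⟨1 * rf j, by rw [lab_rf, h]; simp⟩
    set ε' := min ε 1 with hε'
    have he0 : 0 < ε' := lt_min hε one_pos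
    have hfix : ∀ w, 0 ≤ w → w ≤ ε' → g (pt ι (w + (j - 1) / 2)) = pt ι (w + (j - 1) / 2) := by
      intro w h0 hw
      rw [hg ι hι w h0 (hw.trans (min_le_right _ _)), h1 w ⟨h0, hw.trans (min_le_left _ _)⟩]
      simp
    rcases ι.cases with ⟨-, k, -⟩ | ⟨-, k, -⟩
    · refine c.add_of_trivial hq (u1 := ι.n + (j - 1) / 2) (u2 := ι.n + (j - 1) / 2 + ε') (by linarith) ?_
      intro z a b
      have := hfix (z - ι.n - (j - 1) / 2) (by linarith) (by linarith)
      rw [k] at this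
      convert this using 2 <;> ring
    · refine c.add_of_trivial hq (u1 := ι.n - (j - 1) / 2 - ε') (u2 := ι.n - (j - 1) / 2) (by linarith) ?_
      intro z a b
      have := hfix (ι.n - z - (j - 1) / 2) (by linarith) (by linarith)
      rw [k] at this
      convert this using 2 <;> ring
  obtain ⟨g', hg', he⟩ := key g.2
  have : g' = g := Subtype.ext he
  exact this ▸ hg' h
end

open Dh

/-! ### Homomorphisms from `H` to abelian groups -/

noncomputable def tailT (ε c : ℝ) : ℝ ≃o ℝ :=
  supIso 1 (infIso (affIso 1 (by norm_num) ε) (affIso (1/2) (by norm_num) (c/2)))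

theorem tailT_apply (ε c t : ℝ) : tailT ε c t = max t (min (t + ε) ((t + c) / 2)) := by
  simp only [tailT, supIso_apply, infIso_apply, affIso_apply, RelIso.one_apply]
  congr 2
  · ring
  · ring

theorem bump_tail {p ε c t : ℝ} (h : p + ε ≤ t) : bump p ε c t = tailT ε c t := by
  rw [bump_apply, tailT_apply, min_eq_right (a := 2 * t - p) (by linarith)]

theorem tailT_lin {ε c t : ℝ} (he : 0 ≤ ε) (h : t ≤ c - 2 * ε) : tailT ε c t = t + ε := by
  rw [tailT_apply, min_eq_left (by linarith), max_eq_right (by linarith)]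

theorem tailT_pow {ε c : ℝ} (he : 0 ≤ ε) (n : ℕ) {t : ℝ} (h : t + n * ε ≤ c - 2 * ε) :
    (tailT ε c ^ n) t = t + n * ε := by
  induction n generalizing t with
  | zero => simp
  | succ n ih =>
    push_cast at h ⊢
    have hn : 0 ≤ n * ε := by positivity
    rw [pow_succ, RelIso.mul_apply, tailT_lin he (by linarith), ih (by linarith)]
    ring

theorem tailT_zpow {ε c : ℝ} (he : 0 ≤ ε) (m : ℤ) {t : ℝ} (h0 : t ≤ c - 2 * ε)
    (h : t + m * ε ≤ c - 2 * ε) : (tailT ε c ^ m) t = t + m * ε := by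
  obtain ⟨n, rfl | rfl⟩ := m.eq_nat_or_neg
  · rw [zpow_natCast]; push_cast at h ⊢; exact tailT_pow he n h
  · rw [zpow_neg, zpow_natCast]
    push_cast at h ⊢
    have := tailT_pow (c := c) he n (t := t + -n * ε) (by linarith)
    have e : t + -n * ε + n * ε = t := by ring
    rw [e] at this
    conv_lhs => rw [← this]
    rw [RelIso.inv_apply_self]

theorem bump_conj {p ε c : ℝ} (he : 0 < ε) (hc : p + 4 * ε ≤ c) :
    bump (p + ε) ε c = bump (p - ε) ε c * bump p ε c * (bump (p - ε) ε c)⁻¹ := by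
  rw [eq_mul_inv_iff_mul_eq]
  ext t
  simp only [RelIso.mul_apply]
  rcases le_total t p with h | h
  · have h1 : bump (p - ε) ε c t ≤ p + ε := by
      have := (bump (p - ε) ε c).monotone h
      rw [bump2 (t := p) he.le (by linarith) (by linarith)] at this
      exact this
    rw [bump0 h1, bump0 h]
  · rw [bump_tail (p := p - ε) (t := t) (by linarith)]
    rcases le_total t (p + ε) with h' | h'
    · rw [bump1 (by linarith) h h', tailT_lin he.le (by linarith), bump1 (by linarith) (by linarith)
        (by linarith), bump2 he.le (by linarith) (by linarith)]
      ring
    · have h2 : p + 2 * ε ≤ tailT ε c t := by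
        have := (tailT ε c).monotone h'
        rw [tailT_lin he.le (by linarith)] at this
        linarith
      rw [bump_tail (p := p) h', bump_tail (p := p + ε) (by linarith),
        bump_tail (p := p - ε) (by linarith)]

structure VC (V : (ℝ ≃o ℝ) → ℤ → Prop) (a ε c : ℝ) : Prop where
  pos : 0 < ε
  one : V 1 0
  mul : ∀ f g x y, V f x → V g y → V (f * g) (x + y)
  inv : ∀ f x, V f x → V f⁻¹ (-x)
  bmp : ∀ i : ℕ, a + i * ε + 4 * ε ≤ c → V (bump (a + i * ε) ε c) 1

section
variable {V : (ℝ ≃o ℝ) → ℤ → Prop} {a ε c : ℝ}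

theorem VC.exists_y (v : VC V a ε c) (d : ℕ) (i : ℕ) (p : ℝ) (hp : p = a + i * ε)
    (h : p + 2 ^ d * ε + 2 * ε ≤ c) : ∃ y : ℝ ≃o ℝ, V y (2 ^ d - 1) ∧ (∀ t, t ≤ p → y t = t) ∧
      (∀ t, p ≤ t → t ≤ p + ε → y t = p + 2 ^ d * (t - p)) ∧
      (∀ t, p + ε ≤ t → y t = (tailT ε c ^ ((2 : ℤ) ^ d - 1)) t) := by
  have he := v.pos
  induction d generalizing i p with
  | zero =>
    refine ⟨1, by simpa using v.one, fun t _ => rfl, fun t _ _ => ?_, fun t _ => ?_⟩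
    · simp
    · simp
  | succ d ih =>
    have h2 : (1 : ℝ) ≤ 2 ^ d := one_le_pow₀ (by norm_num)
    have h3 : ε ≤ 2 ^ d * ε := by nlinarith
    rw [pow_succ] at h
    obtain ⟨y1, v1, a1, b1, c1⟩ := ih i p hp (by linarith)
    obtain ⟨y2, v2, a2, b2, c2⟩ := ih (i + 1) (p + ε) (by rw [hp]; push_cast; ring) (by linarith)
    have v3 := v.bmp i (by rw [← hp]; linarith)
    rw [← hp] at v3
    refine ⟨y1 * y2 * bump p ε c, ?_, fun t ht => ?_, fun t ht ht' => ?_, fun t ht => ?_⟩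
    · have := v.mul _ _ _ _ (v.mul _ _ _ _ v1 v2) v3
      convert this using 1
      ring
    · simp only [RelIso.mul_apply]
      rw [bump0 ht, a2 t (by linarith), a1 t ht]
    · simp only [RelIso.mul_apply]
      rw [bump1 (by linarith) ht ht']
      rcases le_total (2 * t - p) (p + ε) with h4 | h4
      · rw [a2 _ h4, b1 _ (by linarith) h4]; ring
      · rw [b2 _ h4 (by linarith)]
        have e1 : 0 ≤ 2 ^ d * (2 * t - p - (p + ε)) := mul_nonneg (by positivity) (by linarith)
        have e2 : 2 ^ d * (2 * t - p - (p + ε)) ≤ 2 ^ d * ε :=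
          mul_le_mul_of_nonneg_left (by linarith) (by positivity)
        rw [c1 _ (by linarith), tailT_zpow he.le _ (by linarith) (by push_cast; linarith)]
        push_cast; ring
    · simp only [RelIso.mul_apply]
      have h5 : p + 2 * ε ≤ tailT ε c t := by
        have := (tailT ε c).monotone ht
        rw [tailT_lin he.le (by linarith)] at this
        linarith
      have h6 : p + ε ≤ (tailT ε c ^ ((2 : ℤ) ^ d - 1)) (tailT ε c t) := by
        have := (tailT ε c ^ ((2 : ℤ) ^ d - 1)).monotone h5
        rw [tailT_zpow he.le _ (by linarith) (by push_cast; linarith)] at this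
        push_cast at this
        linarith
      rw [bump_tail ht, c2 _ (by linarith), c1 _ h6, ← RelIso.mul_apply, ← RelIso.mul_apply]
      congr 1
      rw [← zpow_add, ← zpow_add_one]
      congr 1; ring

theorem VC.val (v : VC V a ε c) (L i : ℕ) (p : ℝ) (hp : p = a + i * ε) (m : ℤ) (g : ℝ ≃o ℝ)
    (hb : p + (L + m) * ε + 2 * ε ≤ c) (hb' : p + L * ε + 2 * ε ≤ c) (g0 : ∀ t, t ≤ p → g t = t)
    (g1 : ∀ j : ℕ, j < L → ∃ (d : ℕ) (b : ℝ), ∀ t, p + j * ε ≤ t → t ≤ p + (j + 1) * ε →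
      g t = 2 ^ d * t + b)
    (g2 : ∀ t, p + L * ε ≤ t → g t = (tailT ε c ^ m) t) : V g m := by
  have he := v.pos
  induction L generalizing i p m g with
  | zero =>
    have h1 := g2 p (by simp)
    push_cast at hb hb'
    rw [g0 p le_rfl, tailT_zpow he.le _ (by linarith) (by linarith)] at h1
    have h2 : (m : ℝ) = 0 := by
      have : (m : ℝ) * ε = 0 := by linarith
      rcases mul_eq_zero.mp this with h | h
      · exact h
      · exact absurd h he.ne'
    have h3 : m = 0 := by exact_mod_cast h2
    subst h3
    have : g = 1 := by
      ext t
      rcases le_total t p with h | h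
      · rw [g0 t h]; rfl
      · rw [g2 t (by simpa using h)]; simp
    rw [this]; exact v.one
  | succ L ih =>
    push_cast at hb hb' g2
    have hL : 0 ≤ L * ε := by positivity
    obtain ⟨d, b, hd⟩ := g1 0 (Nat.succ_pos _)
    have hpb := hd p (by simp) (by simp; linarith)
    rw [g0 p le_rfl] at hpb
    have hd' : ∀ t, p ≤ t → t ≤ p + ε → g t = p + 2 ^ d * (t - p) := by
      intro t h1 h2
      rw [hd t (by simpa using h1) (by simpa using h2)]
      linarith
    have hend : g (p + (L + 1) * ε) = p + (L + 1 + m) * ε := by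
      rw [g2 _ le_rfl, tailT_zpow he.le _ (by linarith) (by linarith)]; ring
    have hpe : g (p + ε) = p + 2 ^ d * ε := by
      rw [hd' _ (by linarith) le_rfl]; ring
    have hmon : p + 2 ^ d * ε ≤ p + (L + 1 + m) * ε := by
      rw [← hpe, ← hend]; exact g.monotone (by linarith)
    have h2 : (1 : ℝ) ≤ 2 ^ d := one_le_pow₀ (by norm_num)
    have h3 : ε ≤ 2 ^ d * ε := by nlinarith
    obtain ⟨y, vy, y0, y1, y2⟩ := v.exists_y d i p hp (by linarith)
    have hyl : ∀ s, p + ε ≤ s → s + 2 ^ d * ε - ε ≤ c - 2 * ε → y s = s + (2 ^ d - 1) * ε := by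
      intro s h4 h5
      rw [y2 s h4, tailT_zpow he.le _ (by linarith) (by push_cast; linarith)]
      push_cast; ring
    have key : V (y⁻¹ * g) (m - (2 ^ d - 1)) := by
      refine ih (i + 1) (p + ε) (by rw [hp]; push_cast; ring) (m - (2 ^ d - 1)) (y⁻¹ * g) ?_ ?_ ?_ ?_ ?_
      · push_cast; linarith
      · linarith
      · intro t ht
        rw [RelIso.mul_apply]
        rcases le_total t p with h | h
        · rw [g0 t h]; conv_lhs => rw [← y0 t h]
          rw [RelIso.inv_apply_self]
        · rw [hd' t h ht, ← y1 t h ht, RelIso.inv_apply_self]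
      · intro j hj
        obtain ⟨d', b', h'⟩ := g1 (j + 1) (by omega)
        refine ⟨d', b' - (2 ^ d - 1) * ε, fun t ht ht' => ?_⟩
        have hj0 : 0 ≤ j * ε := by positivity
        have hgt := h' t (by push_cast; linarith) (by push_cast; linarith)
        have hlo : p + 2 ^ d * ε ≤ g t := by rw [← hpe]; exact g.monotone (by linarith)
        have hhi : g t ≤ p + (L + 1 + m) * ε := by
          rw [← hend]; apply g.monotone
          have : (j : ℝ) + 1 ≤ L := by exact_mod_cast hj
          nlinarith
        have hy := hyl (g t - (2 ^ d - 1) * ε) (by linarith) (by linarith)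
        rw [RelIso.mul_apply]
        have : g t = y (g t - (2 ^ d - 1) * ε) := by rw [hy]; ring
        rw [this, RelIso.inv_apply_self, hgt]; ring
      · intro t ht
        have h4 : p + (L + 1 + (m - (2 ^ d - 1))) * ε ≤ (tailT ε c ^ (m - (2 ^ d - 1))) t := by
          have := (tailT ε c ^ (m - (2 ^ d - 1))).monotone ht
          rw [tailT_zpow he.le _ (by linarith) (by push_cast; linarith)] at this
          push_cast at this
          linarith
        have h5 := y2 _ (show p + ε ≤ (tailT ε c ^ (m - (2 ^ d - 1))) t by linarith)
        rw [← RelIso.mul_apply (tailT ε c ^ ((2 : ℤ) ^ d - 1)), ← zpow_add, add_sub_cancel] at h5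
        rw [RelIso.mul_apply, g2 t (by linarith), ← h5, RelIso.inv_apply_self]
    have := v.mul _ _ _ _ vy key
    rw [mul_inv_cancel_left] at this
    convert this using 1
    ring

theorem VC.exists_Q (v : VC V a ε c) (K : ℕ) (L i : ℕ) (p : ℝ) (hp : p = a + i * ε)
    (hb : p + L * (2 ^ K * ε) + 2 * ε ≤ c) : ∃ Q : ℝ ≃o ℝ, V Q (L * (2 ^ K - 1)) ∧
      (∀ t, t ≤ p → Q t = t) ∧
      (∀ j : ℕ, j < L → ∀ t, p + j * ε ≤ t → t ≤ p + (j + 1) * ε →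
        Q t = p + j * (2 ^ K * ε) + 2 ^ K * (t - p - j * ε)) ∧
      (∀ t, p + L * ε ≤ t → Q t = (tailT ε c ^ ((L : ℤ) * (2 ^ K - 1))) t) := by
  have he := v.pos
  induction L generalizing i p with
  | zero =>
    refine ⟨1, by simpa using v.one, fun t _ => rfl, fun j hj => by omega, fun t _ => by simp⟩
  | succ L ih =>
    push_cast at hb
    have h2 : (1 : ℝ) ≤ 2 ^ K := one_le_pow₀ (by norm_num)
    have h3 : ε ≤ 2 ^ K * ε := by nlinarith
    have h4 : 0 ≤ L * (2 ^ K * ε) := by positivity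
    have h5 : (L : ℝ) * ε ≤ L * (2 ^ K * ε) := mul_le_mul_of_nonneg_left h3 (by positivity)
    have h6 : 0 ≤ L * ε := by positivity
    obtain ⟨Q, vQ, Q0, Q1, Q2⟩ := ih (i + 1) (p + ε) (by rw [hp]; push_cast; ring) (by linarith)
    obtain ⟨y, vy, y0, y1, y2⟩ := v.exists_y K i p hp (by linarith)
    refine ⟨y * Q, ?_, fun t ht => ?_, fun j hj t ht ht' => ?_, fun t ht => ?_⟩
    · have := v.mul _ _ _ _ vy vQ
      convert this using 1
      push_cast; ring
    · rw [RelIso.mul_apply, Q0 t (by linarith), y0 t ht]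
    · rw [RelIso.mul_apply]
      rcases j with _ | j
      · simp only [Nat.cast_zero, zero_mul, add_zero, zero_add, one_mul, sub_zero] at ht ht' ⊢
        rw [Q0 t ht', y1 t ht ht']
      · push_cast at ht ht' ⊢
        rw [Q1 j (by omega) t (by linarith) (by linarith)]
        have hj0 : 0 ≤ j * (2 ^ K * ε) := by positivity
        have hj1 : 0 ≤ 2 ^ K * (t - (p + ε) - j * ε) := mul_nonneg (by positivity) (by linarith)
        have hj2 : 2 ^ K * (t - (p + ε) - j * ε) ≤ 2 ^ K * ε :=
          mul_le_mul_of_nonneg_left (by linarith) (by positivity)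
        have hj3 : ((j : ℝ) + 1) * (2 ^ K * ε) ≤ L * (2 ^ K * ε) := by
          apply mul_le_mul_of_nonneg_right _ (by positivity)
          exact_mod_cast (by omega : j + 1 ≤ L)
        rw [y2 _ (by linarith), tailT_zpow he.le _ (by linarith) (by push_cast; linarith)]
        push_cast; ring
    · push_cast at ht
      have h7 : p + ε ≤ (tailT ε c ^ ((L : ℤ) * (2 ^ K - 1))) t := by
        have := (tailT ε c ^ ((L : ℤ) * (2 ^ K - 1))).monotone ht
        rw [tailT_zpow he.le _ (by linarith) (by push_cast; linarith)] at this
        push_cast at this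
        linarith
      rw [RelIso.mul_apply, Q2 t (by linarith), y2 _ h7, ← RelIso.mul_apply, ← zpow_add]
      congr 2
      push_cast; ring
end

theorem common_den {n : ℕ} (x : Fin n → ℝ) (hx : ∀ i, IsDyadic (x i)) :
    ∃ M0 : ℕ, ∀ M, M0 ≤ M → ∀ i, ∃ A : ℤ, x i = A / 2 ^ M := by
  choose A b h using hx
  refine ⟨∑ i, b i, fun M hM i => ⟨A i * 2 ^ (M - b i), ?_⟩⟩
  have hb : b i ≤ M := (Finset.single_le_sum (fun j _ => Nat.zero_le (b j)) (Finset.mem_univ i)).trans hM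
  rw [h i, div_eq_div_iff (by positivity) (by positivity)]
  push_cast
  rw [mul_assoc, ← pow_add, Nat.sub_add_cancel hb]

theorem cells {f : ℝ ≃o ℝ} (hf : InThompsonF f) : ∃ M0 : ℕ, ∀ M, M0 ≤ M → ∀ n : ℕ, n < 2 ^ M →
    ∃ (k : ℤ) (b : ℝ), ∀ t, (n : ℝ) / 2 ^ M ≤ t → t ≤ (n + 1) / 2 ^ M → f t = 2 ^ k * t + b := by
  obtain ⟨-, m, x, x0, x1, hmono, hdy, haff⟩ := hf
  obtain ⟨M0, hM0⟩ := common_den x hdy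
  refine ⟨M0, fun M hM n hn => ?_⟩
  choose A hA using hM0 M hM
  have hp : (0 : ℝ) < 2 ^ M := by positivity
  have hlast : A (Fin.last m) = 2 ^ M := by
    have := hA (Fin.last m)
    rw [x1, eq_div_iff hp.ne', one_mul] at this
    exact_mod_cast this.symm
  have hzero : A 0 = 0 := by
    have := hA 0
    rw [x0, eq_div_iff hp.ne', zero_mul] at this
    exact_mod_cast this.symm
  have hex : ∃ i : Fin m, A i.castSucc ≤ n ∧ (n : ℤ) < A i.succ := by
    by_contra hcon
    push Not at hcon
    have : ∀ i : Fin (m + 1), A i ≤ n := by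
      intro i
      induction i using Fin.induction with
      | zero => rw [hzero]; positivity
      | succ i ih => exact hcon i ih
    have h1 := this (Fin.last m)
    rw [hlast] at h1
    have : (n : ℤ) < 2 ^ M := by exact_mod_cast hn
    omega
  obtain ⟨i, h1, h2⟩ := hex
  obtain ⟨k, b, h⟩ := haff i
  refine ⟨k, b, fun t ht ht' => h t ⟨?_, ?_⟩⟩
  · rw [hA]
    refine le_trans ?_ ht
    apply div_le_div_of_nonneg_right _ hp.le
    exact_mod_cast h1
  · rw [hA]
    refine ht'.trans ?_
    apply div_le_div_of_nonneg_right _ hp.le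
    exact_mod_cast h2

theorem hom_trivial {H : Subgroup (ℝ ≃o ℝ)} (hH : ∀ f, f ∈ H ↔ InH f) {A : Type} [CommGroup A]
    (ψ : H →* A) (f : ℝ ≃o ℝ) (hf : f ∈ H) (hg : Ger f 0) : ψ ⟨f, hf⟩ = 1 := by
  have hfH := (hH f).1 hf
  obtain ⟨M0, hM0⟩ := cells hfH.1
  obtain ⟨ε0, he0, g0, g1⟩ := hg
  obtain ⟨M1, hM1⟩ := exists_pow_lt_of_lt_one he0 (by norm_num : (1/2 : ℝ) < 1)
  obtain ⟨M, hMa, hMb, hMc⟩ : ∃ M, M0 ≤ M ∧ M1 ≤ M ∧ 2 ≤ M :=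
    ⟨M0 + M1 + 2, by omega, by omega, by omega⟩
  set η : ℝ := (1/2) ^ M with hη
  have hη0 : 0 < η := by positivity
  have hη1 : η * 2 ^ M = 1 := by rw [hη, ← mul_pow]; norm_num
  have hηε : η ≤ ε0 := (pow_le_pow_of_le_one (by norm_num) (by norm_num) hMb).trans hM1.le
  have hη4 : η ≤ 1/4 := by
    have : η ≤ (1/2) ^ 2 := pow_le_pow_of_le_one (by norm_num) (by norm_num) hMc
    norm_num at this ⊢; exact this
  have hdiv : ∀ z : ℝ, z / 2 ^ M = z * η := by
    intro z; rw [div_eq_iff (by positivity), mul_assoc, hη1, mul_one]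
  have hcell := hM0 M hMa
  simp only [hdiv] at hcell
  choose! k b hkb using hcell
  obtain ⟨L, hL⟩ : ∃ L : ℕ, 2 ^ M = L + 2 := by
    have : 2 ^ 2 ≤ 2 ^ M := Nat.pow_le_pow_right (by norm_num) hMc
    exact ⟨2 ^ M - 2, by omega⟩
  have hLη : L * η = 1 - 2 * η := by
    have : (2 : ℝ) ^ M = L + 2 := by exact_mod_cast hL
    rw [this] at hη1; linarith
  set K : ℕ := 2 + ∑ n ∈ Finset.range (2 ^ M), (k n).natAbs with hK
  set ε : ℝ := (1/2) ^ (M + K) with hε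
  have heta : 2 ^ K * ε = η := by
    have : ∀ n : ℕ, (2 : ℝ) ^ n * (1/2) ^ (M + n) = (1/2) ^ M := by
      intro n
      rw [pow_add, mul_comm, mul_assoc, ← mul_pow]; norm_num
    exact this K
  have hε0 : 0 < ε := by positivity
  have hε4 : 4 * ε ≤ η := by
    rw [← heta]
    have : (2 : ℝ) ^ 2 ≤ 2 ^ K := pow_le_pow_right₀ (by norm_num) (by omega)
    nlinarith
  set c : ℝ := 1 - η * (1/2) with hc
  have dη : IsDyadic η := isDyadic_pow M
  have dε : IsDyadic ε := isDyadic_pow _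
  have dc : IsDyadic c := by
    have : IsDyadic (1 : ℝ) := by simpa using isDyadic_int 1
    exact this.sub (dη.mul isDyadic_half)
  have hbump : ∀ p, IsDyadic p → 0 < p → p + 4 * ε ≤ c → bump p ε c ∈ H := by
    intro p h1 h2 h3
    exact (hH _).2 (bump_inH (M + K) h1 dc h2 (by linarith) (by linarith))
  have dp : ∀ i : ℕ, IsDyadic (η + i * ε) := fun i =>
    dη.add (IsDyadic.mul (by simpa using isDyadic_int i) dε)
  have hb0 : bump η ε c ∈ H := hbump η dη hη0 (by linarith)
  let q : A := ψ ⟨_, hb0⟩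
  let V : (ℝ ≃o ℝ) → ℤ → Prop := fun f z => ∃ h : f ∈ H, ψ ⟨f, h⟩ = q ^ z
  have v : VC V η ε c := by
    refine ⟨hε0, ⟨H.one_mem, ?_⟩, ?_, ?_, ?_⟩
    · rw [zpow_zero]; exact ψ.map_one
    · rintro f g x y ⟨h1, e1⟩ ⟨h2, e2⟩
      refine ⟨H.mul_mem h1 h2, ?_⟩
      rw [zpow_add, ← e1, ← e2, ← map_mul]; rfl
    · rintro f x ⟨h1, e1⟩
      refine ⟨H.inv_mem h1, ?_⟩
      rw [zpow_neg, ← e1, ← map_inv]; rfl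
    · intro i hi
      induction i with
      | zero =>
        have e : η + ((0 : ℕ) : ℝ) * ε = η := by simp
        rw [e]
        exact ⟨hb0, (zpow_one q).symm⟩
      | succ i ih =>
        push_cast at hi ⊢
        obtain ⟨h1, e1⟩ := ih (by linarith)
        have hpi : 0 ≤ i * ε := by positivity
        have h2 : bump (η + i * ε - ε) ε c ∈ H := hbump _ ((dp i).sub dε) (by linarith) (by linarith)
        have h3 := bump_conj (p := η + i * ε) hε0 (show _ ≤ c by linarith)
        have e2 : η + (i + 1) * ε = η + i * ε + ε := by ring
        rw [e2, h3]
        refine ⟨H.mul_mem (H.mul_mem h2 h1) (H.inv_mem h2), ?_⟩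
        rw [← e1]
        have : ψ (⟨_, h2⟩ * ⟨_, h1⟩ * ⟨_, h2⟩⁻¹) = ψ ⟨_, h1⟩ := by
          rw [map_mul, map_mul, map_inv, mul_comm (ψ ⟨_, h2⟩), mul_inv_cancel_right]
        exact this
  obtain ⟨Q, vQ, Q0, Q1, Q2⟩ := v.exists_Q K L 0 η (by simp) (by rw [heta]; linarith)
  rw [heta] at Q1
  have hLe : L * ε ≤ L * η := mul_le_mul_of_nonneg_left (by linarith) (by positivity)
  have hLm : ((L : ℝ) + (((L : ℤ) * (2 ^ K - 1) : ℤ) : ℝ)) * ε = L * η := by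
    rw [← heta]; push_cast; ring
  have hQend : Q (η + L * ε) = η + L * η := by
    rw [Q2 _ le_rfl, tailT_zpow hε0.le _ (by linarith) (by linarith)]
    linarith
  have vf : V (f * Q) (L * (2 ^ K - 1)) := by
    refine v.val L 0 η (by simp) _ _ (by linarith) (by linarith) ?_ ?_ ?_
    · intro t ht
      rw [RelIso.mul_apply, Q0 t ht]
      rcases le_total 0 t with h | h
      · rw [g0 t ⟨h, ht.trans hηε⟩]; simp
      · rcases h.lt_or_eq with h | h
        · exact hfH.1.1 t (fun h' => absurd h'.1 (not_le.mpr h))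
        · rw [g0 t ⟨h.ge, ht.trans hηε⟩]; simp
    · intro j hj
      have hk : -(K : ℤ) ≤ k (j + 1) := by
        have : (k (j + 1)).natAbs ≤ ∑ n ∈ Finset.range (2 ^ M), (k n).natAbs :=
          Finset.single_le_sum (f := fun n => (k n).natAbs) (fun _ _ => Nat.zero_le _)
            (Finset.mem_range.mpr (by omega))
        omega
      obtain ⟨d, hd⟩ : ∃ d : ℕ, (d : ℤ) = k (j + 1) + K := ⟨(k (j + 1) + K).toNat, by omega⟩
      refine ⟨d, 2 ^ k (j + 1) * (η + j * η - 2 ^ K * (η + j * ε)) + b (j + 1), fun t ht ht' => ?_⟩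
      have hj1 : 0 ≤ 2 ^ K * (t - η - j * ε) := mul_nonneg (by positivity) (by linarith)
      have hj2 : 2 ^ K * (t - η - j * ε) ≤ 2 ^ K * ε :=
        mul_le_mul_of_nonneg_left (by linarith) (by positivity)
      rw [heta] at hj2
      have e : (2 : ℝ) ^ d = 2 ^ k (j + 1) * 2 ^ K := by
        rw [← zpow_natCast, ← zpow_natCast, hd, zpow_add₀ two_ne_zero]
      rw [RelIso.mul_apply, Q1 j hj t ht ht', hkb (j + 1) (by omega) _ (by push_cast; linarith)
        (by push_cast; linarith), e]
      ring
    · intro t ht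
      rw [RelIso.mul_apply, ← Q2 t ht]
      have h1 : 1 - η ≤ Q t := by
        have := Q.monotone ht
        rw [hQend] at this; linarith
      rcases le_or_gt (Q t) 1 with h | h
      · rw [g1 _ ⟨by linarith, h⟩]; simp
      · exact hfH.1.1 _ (fun h' => absurd h'.2 (not_le.mpr h))
  obtain ⟨h1, e1⟩ := vQ
  obtain ⟨h2, e2⟩ := vf
  have : ψ (⟨f, hf⟩ * ⟨Q, h1⟩) = ψ ⟨Q, h1⟩ := by rw [e1, ← e2]; rfl
  rw [map_mul] at this
  exact mul_eq_right.mp this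

open Dh

/-! ### Integrality and conclusion -/

theorem GCtx.hom_one {r : ℤ → ℤˣ} {H G : Subgroup (ℝ ≃o ℝ)} (c : GCtx r H G) {A : Type} [CommGroup A]
    (ψ : G →* A) (g : G) : ψ g = 1 := by
  have key : G ≤ ψ.ker.map G.subtype := by
    refine c.gen_all _ fun j hj ν g hν hger hg => ?_
    have hgG := c.gen_mem hj hν hg
    refine ⟨⟨g, hgG⟩, ?_, rfl⟩
    choose gn hgn hgn' using c.gen j hj
    let ψ' : H →* A := MonoidHom.mk' (fun ν => ψ ⟨gn ν.1 ν.2, hgn ν.1 ν.2⟩) (by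
      intro x y
      rw [← map_mul]
      congr 1
      apply Subtype.ext
      exact (hgn' _ (x * y).2).unique hj ((hgn' _ x.2).mul (hgn' _ y.2) ((c.hH _).1 y.2)))
    have h1 := hom_trivial c.hH ψ' ν hν hger
    have h2 : g = gn ν hν := hg.unique hj (hgn' ν hν)
    subst h2
    exact h1
  obtain ⟨g', hg', he⟩ := key g.2
  have : g' = g := Subtype.ext he
  exact this ▸ hg'

theorem GCtx.final {r : ℤ → ℤˣ} {H G : Subgroup (ℝ ≃o ℝ)} (c : GCtx r H G)
    (ω : G → G → ℤ) (hω : IsBounded2CocycleInt ω) : IsCoboundaryOfBoundedInt ω := by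
  obtain ⟨⟨C, hC⟩, hcoc⟩ := hω
  obtain ⟨φ, ⟨D, hD⟩, hφ⟩ := exists_bounded_primitive (fun g h : G => (ω g h : ℝ))
    (fun g1 g2 g3 => by have := hcoc g1 g2 g3; beta_reduce; exact_mod_cast this)
    ⟨C, fun g h => by exact_mod_cast hC g h⟩ (fun E _ π τ hq g h => c.add_all hq g h)
  let ψ : G →* Multiplicative (AddCircle (1 : ℝ)) := MonoidHom.mk'
    (fun g => Multiplicative.ofAdd ((φ g : ℝ) : AddCircle (1 : ℝ))) (by
      intro g h
      rw [← ofAdd_add, ← AddCircle.coe_add]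
      congr 1
      rw [← sub_eq_zero, ← AddCircle.coe_sub, AddCircle.coe_eq_zero_iff]
      refine ⟨-ω g h, ?_⟩
      have := hφ g h
      simp only [zsmul_eq_mul, mul_one]
      push_cast; linarith)
  have hintegral : ∀ g, ∃ n : ℤ, (n : ℝ) = φ g := by
    intro g
    have h1 : ((φ g : ℝ) : AddCircle (1 : ℝ)) = 0 := c.hom_one ψ g
    rw [AddCircle.coe_eq_zero_iff] at h1
    obtain ⟨n, hn⟩ := h1
    exact ⟨n, by simpa using hn⟩
  choose φi hφi using hintegral
  refine ⟨φi, ⟨⌈D⌉, fun g => ?_⟩, fun g h => ?_⟩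
  · have : ((|φi g| : ℤ) : ℝ) ≤ ⌈D⌉ := by
      push_cast; rw [hφi]; exact (hD g).trans (Int.le_ceil D)
    exact_mod_cast this
  · have := hφ g h
    rw [← hφi, ← hφi, ← hφi] at this
    exact_mod_cast this

/-- For a quasi-periodic labelling `ρ`, the group `G_ρ` has vanishing
second bounded cohomology with trivial integral coefficients. -/
theorem vanishing_second_bounded_cohomology_int
    (ρ : ℤ → Letter) (hρ : IsQuasiPeriodic ρ)
    (H : Subgroup (ℝ ≃o ℝ)) (hH : ∀ f : ℝ ≃o ℝ, f ∈ H ↔ InH f)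
    (ν₁ ν₂ ν₃ : ℝ ≃o ℝ) (hgen : Subgroup.closure {ν₁, ν₂, ν₃} = H)
    (ζ₁ ζ₂ ζ₃ χ₁ χ₂ χ₃ : ℝ ≃o ℝ)
    (hζ₁ : IsZeta ρ ν₁ ζ₁) (hζ₂ : IsZeta ρ ν₂ ζ₂) (hζ₃ : IsZeta ρ ν₃ ζ₃)
    (hχ₁ : IsChi ρ ν₁ χ₁) (hχ₂ : IsChi ρ ν₂ χ₂) (hχ₃ : IsChi ρ ν₃ χ₃)
    (G : Subgroup (ℝ ≃o ℝ))
    (hG : G = Subgroup.closure {ζ₁, ζ₂, ζ₃, χ₁, χ₂, χ₃})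
    (ω : ↥G → ↥G → ℤ) (hω : IsBounded2CocycleInt ω) :
    IsCoboundaryOfBoundedInt ω := by
  exact (gctx_of hρ hH hgen hζ₁ hζ₂ hζ₃ hχ₁ hχ₂ hχ₃ hG).final ω hω
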